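/- arXiv:math/0609258 — 4 statements merged into one kernel-verified Lean document; each statement's English description precedes it below -/
import Mathlib

section
/- Let λ ⊢ n and ρ ⊢ n−1 be arbitrary partitions, and for partitions θ ⊢ m and κ ⊢ m let M(κ,θ) = ⟨φ_θ, χ_{SP_κ}⟩ denote the multiplicity of the Specht module SP_κ in the representation of S_m induced from the identity representation of the Young subgroup H(θ). Then Σ_{μ ⊢ n, μ ≻ ρ} M(μ,λ) = Σ_{γ ⊢ n−1, γ ≺ λ} c(λ,γ) · M(ρ,γ). -/
open scoped Classical

noncomputable section

open MvPolynomial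

/-- `Covers λ γ` : γ ≺ λ, i.e. γ is obtained from λ by decreasing exactly one part by 1. -/
def Covers (lam gam : YoungDiagram) : Prop :=
  ∃ i, gam.rowLen i + 1 = lam.rowLen i ∧ ∀ j, j ≠ i → gam.rowLen j = lam.rowLen j

/-- `cCoeff λ γ` : for `γ ≺ λ` obtained by decreasing a part of λ equal to `l`,
this is the number of parts of λ equal to `l`. -/
noncomputable def cCoeff (lam gam : YoungDiagram) : ℕ :=
  Set.ncard {j | ∃ i, gam.rowLen i + 1 = lam.rowLen i ∧ lam.rowLen j = lam.rowLen i}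

/-- Partial sums of the row lengths of a Young diagram. -/
def rowPartialSum (lam : YoungDiagram) (i : ℕ) : ℕ :=
  ∑ j ∈ Finset.range i, lam.rowLen j

/-- The (0-indexed) row of the canonical tableau of shape `lam` containing the entry `m`
(the entries `0,…,n-1` fill the cells consecutively row by row). -/
def rowIndex (lam : YoungDiagram) (m : ℕ) : ℕ :=
  ((Finset.range (m + 1)).filter fun i => rowPartialSum lam (i + 1) ≤ m).card

/-- The Young subgroup `H(λ) ≤ S_n`: permutations preserving each row of the canonical
tableau of shape `λ`. -/
def youngH (n : ℕ) (lam : YoungDiagram) : Subgroup (Equiv.Perm (Fin n)) where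
  carrier := {g | ∀ m : Fin n, rowIndex lam (g m) = rowIndex lam m}
  one_mem' := by intro m; simp
  mul_mem' := by
    intro a b ha hb m
    have h1 := ha (b m)
    have h2 := hb m
    simpa [Equiv.Perm.mul_apply] using h1.trans h2
  inv_mem' := by
    intro a ha m
    simpa using (ha (a⁻¹ m)).symm

/-- The character of the representation induced from the trivial representation of a
subgroup `H`:  `φ(g) = (1/|H|) · #{x : x⁻¹ g x ∈ H}`. -/
noncomputable def indTrivChar {G : Type*} [Group G] (H : Subgroup G) (g : G) : ℂ :=
  (Nat.card H : ℂ)⁻¹ * (Nat.card {x : G // x⁻¹ * g * x ∈ H} : ℂ)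

/-- The inner product of class functions on a finite group:
`⟨a,b⟩ = (1/|G|) Σ_g a g * conj (b g)`. -/
noncomputable def innerChar {G : Type*} [Group G] [Fintype G] (a b : G → ℂ) : ℂ :=
  (Fintype.card G : ℂ)⁻¹ * ∑ g : G, a g * (starRingEnd ℂ) (b g)

/-- The Specht polynomial of a bijective filling `T` of the cells of `lam` by `0,…,n-1`:
the product over all pairs of cells in the same column (the first strictly above the
second) of the differences of the corresponding variables — i.e. the product of the
column Vandermonde determinants. -/
noncomputable def spechtPoly (n : ℕ) (lam : YoungDiagram) (T : lam.cells ≃ Fin n) :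
    MvPolynomial (Fin n) ℂ :=
  ∏ p ∈ Finset.univ.filter
      (fun p : lam.cells × lam.cells =>
        (p.1 : ℕ × ℕ).2 = (p.2 : ℕ × ℕ).2 ∧ (p.1 : ℕ × ℕ).1 < (p.2 : ℕ × ℕ).1),
    (X (T p.1) - X (T p.2))

/-- The Specht module: the linear span of all Specht polynomials of shape `lam`. -/
noncomputable def spechtModule (n : ℕ) (lam : YoungDiagram) :
    Submodule ℂ (MvPolynomial (Fin n) ℂ) :=
  Submodule.span ℂ (Set.range (spechtPoly n lam))

lemma rename_spechtPoly (n : ℕ) (lam : YoungDiagram) (T : lam.cells ≃ Fin n)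
    (g : Equiv.Perm (Fin n)) :
    MvPolynomial.rename g (spechtPoly n lam T) = spechtPoly n lam (T.trans g) := by
  simp only [spechtPoly, map_prod, map_sub, MvPolynomial.rename_X]
  rfl

lemma spechtModule_invariant (n : ℕ) (lam : YoungDiagram) (g : Equiv.Perm (Fin n)) :
    ∀ p ∈ spechtModule n lam,
      (MvPolynomial.rename (σ := Fin n) (R := ℂ) g).toLinearMap p ∈ spechtModule n lam := by
  intro p hp
  induction hp using Submodule.span_induction with
  | mem x hx =>
      obtain ⟨T, rfl⟩ := hx
      simp only [AlgHom.toLinearMap_apply, rename_spechtPoly]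
      exact Submodule.subset_span ⟨_, rfl⟩
  | zero => simp
  | add x y _ _ hx hy => rw [map_add]; exact add_mem hx hy
  | smul a x _ hx => rw [map_smul]; exact Submodule.smul_mem _ _ hx

/-- The character of the representation of the symmetric group on the Specht module
(permutations act on polynomials by permuting the variables). -/
noncomputable def spechtChar (n : ℕ) (lam : YoungDiagram) (g : Equiv.Perm (Fin n)) : ℂ :=
  LinearMap.trace ℂ (spechtModule n lam)
    (LinearMap.restrict (MvPolynomial.rename (σ := Fin n) (R := ℂ) g).toLinearMap
      (spechtModule_invariant n lam g))

/-- `M(κ,θ)`: the multiplicity `⟨φ_θ, χ_{SP_κ}⟩` of the Specht module `SP_κ` in the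
representation of `S_m` induced from the identity representation of `H(θ)`. -/
noncomputable def Mmult (m : ℕ) (kappa theta : YoungDiagram) : ℂ :=
  innerChar (indTrivChar (youngH m theta)) (spechtChar m kappa)

def spechtRep (n : ℕ) (lam : YoungDiagram) :
    Representation ℂ (Equiv.Perm (Fin n)) (spechtModule n lam) where
  toFun g := LinearMap.restrict (MvPolynomial.rename (σ := Fin n) (R := ℂ) g).toLinearMap
      (spechtModule_invariant n lam g)
  map_one' := by
    ext x
    simp [LinearMap.restrict_apply]
  map_mul' g h := by
    apply LinearMap.ext
    intro x
    apply Subtype.ext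
    simp [LinearMap.restrict_apply, rename_rename, Equiv.Perm.coe_mul]

lemma spechtRep_apply_coe (n : ℕ) (lam : YoungDiagram) (g : Equiv.Perm (Fin n))
    (x : spechtModule n lam) :
    ((spechtRep n lam g x : spechtModule n lam) : MvPolynomial (Fin n) ℂ) = rename g x.1 := rfl

lemma spechtChar_eq (n : ℕ) (lam : YoungDiagram) (g : Equiv.Perm (Fin n)) :
    spechtChar n lam g = (spechtRep n lam).character g := rfl

instance spechtModule_fd (n : ℕ) (lam : YoungDiagram) :
    FiniteDimensional ℂ (spechtModule n lam) := by
  unfold spechtModule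
  exact FiniteDimensional.span_of_finite ℂ (Set.finite_range _)

lemma spechtChar_congr (n : ℕ) (lam : YoungDiagram) {g h : Equiv.Perm (Fin n)}
    (hgh : g.cycleType = h.cycleType) : spechtChar n lam g = spechtChar n lam h := by
  obtain ⟨c, hc⟩ := isConj_iff.1 (Equiv.Perm.isConj_of_cycleType_eq hgh)
  rw [← hc, spechtChar_eq, spechtChar_eq, Representation.char_conj]

lemma spechtChar_inv (n : ℕ) (lam : YoungDiagram) (g : Equiv.Perm (Fin n)) :
    spechtChar n lam g⁻¹ = spechtChar n lam g :=
  spechtChar_congr n lam (Equiv.Perm.cycleType_inv g)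

lemma map_conj_spechtPoly (n : ℕ) (lam : YoungDiagram) (T : lam.cells ≃ Fin n) :
    MvPolynomial.map (starRingEnd ℂ) (spechtPoly n lam T) = spechtPoly n lam T := by
  simp [spechtPoly, map_prod]

lemma spechtChar_real (n : ℕ) (lam : YoungDiagram) (g : Equiv.Perm (Fin n)) :
    (starRingEnd ℂ) (spechtChar n lam g) = spechtChar n lam g := by
  obtain ⟨b, hb, hspan, hli⟩ := exists_linearIndependent ℂ (Set.range (spechtPoly n lam))
  have hspan' : spechtModule n lam = Submodule.span ℂ (Set.range ((↑) : b → MvPolynomial (Fin n) ℂ)) := by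
    rw [Subtype.range_coe, hspan]; rfl
  let B : Module.Basis b ℂ (spechtModule n lam) :=
    (Module.Basis.span hli).map (LinearEquiv.ofEq _ _ hspan'.symm)
  have hB : ∀ i, ((B i : spechtModule n lam) : MvPolynomial (Fin n) ℂ) = i := by
    intro i
    simp [B, Module.Basis.span_apply]
  have hbfin : Finite b := (Set.finite_range (spechtPoly n lam)).subset hb
  have : Fintype b := Fintype.ofFinite b
  have hσ : ∀ i : b, MvPolynomial.map (starRingEnd ℂ) (i : MvPolynomial (Fin n) ℂ) = i := by
    intro i
    obtain ⟨T, hT⟩ := hb i.2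
    rw [← hT, map_conj_spechtPoly]
  have hreal : ∀ i j, (starRingEnd ℂ) (B.repr (spechtRep n lam g (B i)) j)
      = B.repr (spechtRep n lam g (B i)) j := by
    intro i j
    have h1 : ∑ j, (B.repr (spechtRep n lam g (B i)) j) • (j : MvPolynomial (Fin n) ℂ)
        = rename g (i : MvPolynomial (Fin n) ℂ) := by
      have := congrArg (fun x : spechtModule n lam => (x : MvPolynomial (Fin n) ℂ))
        (B.sum_repr (spechtRep n lam g (B i)))
      simp only [Submodule.coe_sum, Submodule.coe_smul, hB, spechtRep_apply_coe] at this
      exact this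
    have h2 : ∑ j, ((starRingEnd ℂ) (B.repr (spechtRep n lam g (B i)) j)) • (j : MvPolynomial (Fin n) ℂ)
        = rename g (i : MvPolynomial (Fin n) ℂ) := by
      have := congrArg (MvPolynomial.map (starRingEnd ℂ)) h1
      rw [MvPolynomial.map_rename, hσ, map_sum] at this
      rw [← this]
      apply Finset.sum_congr rfl
      intro j _
      rw [smul_eq_C_mul, smul_eq_C_mul, map_mul, hσ, map_C]
    have h3 := h2.trans h1.symm
    rw [← sub_eq_zero, ← Finset.sum_sub_distrib] at h3
    simp only [← sub_smul] at h3
    have := Fintype.linearIndependent_iff.1 hli _ h3 j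
    exact sub_eq_zero.1 this
  rw [spechtChar_eq, Representation.character, LinearMap.trace_eq_matrix_trace ℂ B, Matrix.trace, map_sum]
  apply Finset.sum_congr rfl
  intro i _
  simp only [Matrix.diag_apply, LinearMap.toMatrix_apply]
  exact hreal i i

/-- average over the symmetric group -/
def avg (n : ℕ) (F : Equiv.Perm (Fin n) → ℂ) : ℂ :=
  (Fintype.card (Equiv.Perm (Fin n)) : ℂ)⁻¹ * ∑ g, F g

lemma avg_rep {n : ℕ} {V W : Type*} [AddCommGroup V] [Module ℂ V] [FiniteDimensional ℂ V]
    [AddCommGroup W] [Module ℂ W] [FiniteDimensional ℂ W]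
    (r : Representation ℂ (Equiv.Perm (Fin n)) V) (s : Representation ℂ (Equiv.Perm (Fin n)) W) :
    avg n (fun g => s.character g * r.character g⁻¹)
      = Module.finrank ℂ (Representation.IntertwiningMap r s) := by
  have : Invertible (Nat.card (Equiv.Perm (Fin n)) : ℂ) :=
    invertibleOfNonzero (by simp)
  rw [← Representation.card_inv_mul_sum_char_mul_char_eq_finrank, avg, Nat.card_eq_fintype_card]

lemma avg_specht (n : ℕ) (mu nu : YoungDiagram) :
    avg n (fun g => spechtChar n nu g * spechtChar n mu g)
      = Module.finrank ℂ (Representation.IntertwiningMap (spechtRep n mu) (spechtRep n nu)) := by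
  rw [← avg_rep]
  congr 1
  ext g
  rw [← spechtChar_eq, ← spechtChar_eq, spechtChar_inv]

lemma Mmult_eq_avg (n : ℕ) (ka th : YoungDiagram) :
    Mmult n ka th = avg n (fun g => indTrivChar (youngH n th) g * spechtChar n ka g) := by
  simp only [Mmult, innerChar, avg, spechtChar_real]

lemma spechtPoly_mem (n : ℕ) (lam : YoungDiagram) (T : lam.cells ≃ Fin n) :
    spechtPoly n lam T ∈ spechtModule n lam := Submodule.subset_span ⟨T, rfl⟩

lemma X_sub_X_totalDegree {n : ℕ} {i j : Fin n} (h : i ≠ j) :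
    (X i - X j : MvPolynomial (Fin n) ℂ).totalDegree = 1 := by
  have hh : (X i - X j : MvPolynomial (Fin n) ℂ).IsHomogeneous 1 :=
    (isHomogeneous_X ℂ i).sub (isHomogeneous_X ℂ j)
  exact hh.totalDegree (sub_ne_zero.2 fun e => h (X_injective e))

lemma X_sub_X_prime {n : ℕ} {i j : Fin n} (h : i ≠ j) :
    Prime (X i - X j : MvPolynomial (Fin n) ℂ) := by
  rw [← irreducible_iff_prime]
  apply irreducible_of_totalDegree_eq_one (X_sub_X_totalDegree h)
  intro x hx
  have := hx (Finsupp.single i 1)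
  rw [coeff_sub, coeff_X, coeff_X, if_pos rfl, if_neg] at this
  · rw [sub_zero] at this
    exact isUnit_of_dvd_one this
  · intro e
    exact h ((Finsupp.single_left_inj one_ne_zero).1 e).symm

lemma dvd_of_antisymm {n : ℕ} {i j : Fin n} (q : MvPolynomial (Fin n) ℂ)
    (hq : rename (Equiv.swap i j) q = -q) : (X i - X j) ∣ q := by
  let f : Fin n → Fin n := fun k => if k = j then i else k
  have h1 : rename f q = 0 := by
    have h2 : rename f (rename (Equiv.swap i j) q) = rename f q := by
      rw [rename_rename]
      congr 2
      ext k
      simp only [f, Function.comp, Equiv.swap_apply_def]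
      split_ifs <;> simp_all
    rw [hq, map_neg] at h2
    exact self_eq_neg.1 h2.symm
  rw [← Ideal.mem_span_singleton, ← Ideal.Quotient.eq_zero_iff_mem]
  set I := Ideal.span {(X i - X j : MvPolynomial (Fin n) ℂ)}
  have h3 : (Ideal.Quotient.mkₐ ℂ I).comp (rename f) = Ideal.Quotient.mkₐ ℂ I := by
    apply MvPolynomial.algHom_ext
    intro k
    simp only [AlgHom.comp_apply, rename_X, f]
    split_ifs with hk
    · subst hk
      rw [Ideal.Quotient.mkₐ_eq_mk, Ideal.Quotient.eq]
      exact Ideal.mem_span_singleton_self _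
    · rfl
  have h4 := DFunLike.congr_fun h3 q
  rw [AlgHom.comp_apply, h1, map_zero] at h4
  exact h4.symm

def colPairs (lam : YoungDiagram) : Finset (lam.cells × lam.cells) :=
  Finset.univ.filter
      (fun p : lam.cells × lam.cells =>
        (p.1 : ℕ × ℕ).2 = (p.2 : ℕ × ℕ).2 ∧ (p.1 : ℕ × ℕ).1 < (p.2 : ℕ × ℕ).1)

lemma spechtPoly_eq (n : ℕ) (lam : YoungDiagram) (T : lam.cells ≃ Fin n) :
    spechtPoly n lam T = ∏ p ∈ colPairs lam, (X (T p.1) - X (T p.2)) := rfl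

lemma colPairs_ne {lam : YoungDiagram} {p : lam.cells × lam.cells} (hp : p ∈ colPairs lam) :
    p.1 ≠ p.2 := by
  intro h
  simp [colPairs, h] at hp

lemma spechtPoly_hom (n : ℕ) (lam : YoungDiagram) (T : lam.cells ≃ Fin n) :
    (spechtPoly n lam T).IsHomogeneous (colPairs lam).card := by
  rw [spechtPoly_eq]
  have := IsHomogeneous.prod (colPairs lam) (fun p => (X (T p.1) - X (T p.2) : MvPolynomial (Fin n) ℂ))
    (fun _ => 1) (fun p _ => (isHomogeneous_X ℂ _).sub (isHomogeneous_X ℂ _))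
  simpa using this

lemma spechtPoly_ne_zero (n : ℕ) (lam : YoungDiagram) (T : lam.cells ≃ Fin n) :
    spechtPoly n lam T ≠ 0 := by
  rw [spechtPoly_eq, Finset.prod_ne_zero_iff]
  intro p hp
  exact (X_sub_X_prime (T.injective.ne (colPairs_ne hp))).ne_zero

lemma spechtModule_hom (n : ℕ) (lam : YoungDiagram) {q : MvPolynomial (Fin n) ℂ}
    (hq : q ∈ spechtModule n lam) : q.IsHomogeneous (colPairs lam).card := by
  have : spechtModule n lam ≤ homogeneousSubmodule (Fin n) ℂ (colPairs lam).card := by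
    unfold spechtModule
    rw [Submodule.span_le]
    rintro _ ⟨T, rfl⟩
    exact spechtPoly_hom n lam T
  exact this hq

lemma X_sub_X_dvd {n : ℕ} {a b c d : Fin n} (hcd : c ≠ d)
    (h : (X a - X b : MvPolynomial (Fin n) ℂ) ∣ X c - X d) : (c = a ∧ d = b) ∨ (c = b ∧ d = a) := by
  let f : Fin n → Fin n := fun k => if k = b then a else k
  have h1 := (rename (R := ℂ) f).toRingHom.map_dvd h
  have h2 : (X (f c) - X (f d) : MvPolynomial (Fin n) ℂ) = 0 := by
    have h3 : (X (f a) - X (f b) : MvPolynomial (Fin n) ℂ) ∣ X (f c) - X (f d) := by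
      simpa using h1
    have h4 : f a = f b := by simp [f]
    rw [h4, sub_self, zero_dvd_iff] at h3
    exact h3
  have h5 : f c = f d := X_injective (sub_eq_zero.1 h2)
  simp only [f] at h5
  split_ifs at h5 <;> simp_all

lemma colPairs_not_dvd {n : ℕ} {lam : YoungDiagram} (T : lam.cells ≃ Fin n)
    {p q : lam.cells × lam.cells} (hp : p ∈ colPairs lam) (hq : q ∈ colPairs lam) (hpq : p ≠ q) :
    ¬ ((X (T p.1) - X (T p.2) : MvPolynomial (Fin n) ℂ) ∣ X (T q.1) - X (T q.2)) := by
  intro h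
  rcases X_sub_X_dvd (T.injective.ne (colPairs_ne hq)) h with ⟨h1, h2⟩ | ⟨h1, h2⟩
  · exact hpq (Prod.ext (T.injective h1).symm (T.injective h2).symm)
  · have h1 := T.injective h1
    have h2 := T.injective h2
    simp only [colPairs, Finset.mem_filter, Finset.mem_univ, true_and] at hp hq
    rw [h1, h2] at hq
    omega

lemma spechtPoly_sq (n : ℕ) (lam : YoungDiagram) (T : lam.cells ≃ Fin n) :
    ∏ p ∈ Finset.univ.filter (fun p : lam.cells × lam.cells =>
        (p.1 : ℕ × ℕ).2 = (p.2 : ℕ × ℕ).2 ∧ p.1 ≠ p.2), (X (T p.1) - X (T p.2) : MvPolynomial (Fin n) ℂ)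
      = (-1) ^ (colPairs lam).card * spechtPoly n lam T ^ 2 := by
  rw [← Finset.prod_filter_mul_prod_filter_not _
    (fun p : lam.cells × lam.cells => (p.1 : ℕ × ℕ).1 < (p.2 : ℕ × ℕ).1), sq]
  have h1 : (Finset.univ.filter (fun p : lam.cells × lam.cells =>
        (p.1 : ℕ × ℕ).2 = (p.2 : ℕ × ℕ).2 ∧ p.1 ≠ p.2)).filter
        (fun p : lam.cells × lam.cells => (p.1 : ℕ × ℕ).1 < (p.2 : ℕ × ℕ).1) = colPairs lam := by
    ext p
    simp only [colPairs, Finset.mem_filter, Finset.mem_univ, true_and]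
    constructor
    · rintro ⟨⟨a, b⟩, c⟩; exact ⟨a, c⟩
    · rintro ⟨a, c⟩
      refine ⟨⟨a, fun h => ?_⟩, c⟩
      rw [h] at c
      exact lt_irrefl _ c
  have h2 : (Finset.univ.filter (fun p : lam.cells × lam.cells =>
        (p.1 : ℕ × ℕ).2 = (p.2 : ℕ × ℕ).2 ∧ p.1 ≠ p.2)).filter
        (fun p : lam.cells × lam.cells => ¬ (p.1 : ℕ × ℕ).1 < (p.2 : ℕ × ℕ).1)
        = (colPairs lam).map (Equiv.prodComm _ _).toEmbedding := by
    ext p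
    simp only [colPairs, Finset.mem_filter, Finset.mem_univ, true_and, Finset.mem_map_equiv]
    simp only [Equiv.prodComm_symm, Equiv.prodComm_apply, Prod.fst_swap, Prod.snd_swap]
    constructor
    · rintro ⟨⟨a, b⟩, c⟩
      refine ⟨a.symm, lt_of_le_of_ne (not_lt.1 c) fun h => b ?_⟩
      exact Subtype.ext (Prod.ext h.symm a)
    · rintro ⟨a, c⟩
      refine ⟨⟨a.symm, fun h => ?_⟩, not_lt.2 c.le⟩
      rw [h] at c
      exact lt_irrefl _ c
  rw [h1, h2, Finset.prod_map, ← spechtPoly_eq]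
  have h3 : ∏ p ∈ colPairs lam, (X (T ((Equiv.prodComm lam.cells lam.cells).toEmbedding p).1)
      - X (T ((Equiv.prodComm _ _).toEmbedding p).2) : MvPolynomial (Fin n) ℂ)
      = (-1) ^ (colPairs lam).card * spechtPoly n lam T := by
    rw [spechtPoly_eq, ← Finset.prod_const, ← Finset.prod_mul_distrib]
    apply Finset.prod_congr rfl
    intro p _
    simp
  rw [h3]; ring

/-- Antisymmetry of the column pairs. -/
lemma rename_swap_spechtPoly (n : ℕ) (lam : YoungDiagram) (T : lam.cells ≃ Fin n)
    {p : lam.cells × lam.cells} (hp : p ∈ colPairs lam) :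
    rename (Equiv.swap (T p.1) (T p.2)) (spechtPoly n lam T) = - spechtPoly n lam T := by
  have hcol : (p.1 : ℕ × ℕ).2 = (p.2 : ℕ × ℕ).2 := by
    simp only [colPairs, Finset.mem_filter, Finset.mem_univ, true_and] at hp
    exact hp.1
  set s := Equiv.swap p.1 p.2 with hs
  have hscol : ∀ c, (s c : ℕ × ℕ).2 = (c : ℕ × ℕ).2 := by
    intro c
    rw [hs, Equiv.swap_apply_def]
    split_ifs with h1 h2
    · rw [h1, hcol]
    · rw [h2, hcol]
    · rfl
  have hT : T.trans (Equiv.swap (T p.1) (T p.2)) = s.trans T := by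
    ext c
    simp only [Equiv.trans_apply, hs]
    rw [Equiv.swap_apply_def, Equiv.swap_apply_def]
    simp only [T.injective.eq_iff]
    split_ifs <;> rfl
  have hsq : (rename (Equiv.swap (T p.1) (T p.2)) (spechtPoly n lam T)) ^ 2
      = spechtPoly n lam T ^ 2 := by
    rw [rename_spechtPoly, hT]
    have h1 := spechtPoly_sq n lam (s.trans T)
    have h2 := spechtPoly_sq n lam T
    have h3 : ((-1) ^ (colPairs lam).card : MvPolynomial (Fin n) ℂ) ≠ 0 := by
      apply pow_ne_zero; simp
    apply mul_left_cancel₀ h3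
    rw [← h1, ← h2]
    apply Finset.prod_equiv (s.prodCongr s)
    · intro q
      simp [hscol]
    · intro q _
      rfl
  rcases sq_eq_sq_iff_eq_or_eq_neg.1 hsq with h | h
  · exfalso
    have hpr := X_sub_X_prime (T.injective.ne (colPairs_ne hp))
    rw [spechtPoly_eq, ← Finset.mul_prod_erase _ _ hp, map_mul] at h
    set R := ∏ x ∈ (colPairs lam).erase p, (X (T x.1) - X (T x.2) : MvPolynomial (Fin n) ℂ) with hR
    have h1 : rename (Equiv.swap (T p.1) (T p.2)) (X (T p.1) - X (T p.2) : MvPolynomial (Fin n) ℂ)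
        = - (X (T p.1) - X (T p.2)) := by simp
    rw [h1, neg_mul, ← mul_neg] at h
    have h2 := mul_left_cancel₀ hpr.ne_zero h
    have h3 := dvd_of_antisymm R (neg_eq_iff_eq_neg.1 h2)
    rw [hR, hpr.dvd_finsetProd_iff] at h3
    obtain ⟨q, hq, hd⟩ := h3
    exact colPairs_not_dvd T hp (Finset.mem_of_mem_erase hq) (Finset.ne_of_mem_erase hq).symm hd
  · exact h

lemma spechtPoly_dvd (n : ℕ) (lam : YoungDiagram) (T : lam.cells ≃ Fin n)
    (q : MvPolynomial (Fin n) ℂ)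
    (hq : ∀ p ∈ colPairs lam, rename (Equiv.swap (T p.1) (T p.2)) q = -q) :
    spechtPoly n lam T ∣ q := by
  rw [spechtPoly_eq]
  apply Finset.prod_dvd_of_isRelPrime
  · intro a ha b hb hab
    have h1 := X_sub_X_prime (T.injective.ne (colPairs_ne ha))
    have h2 := X_sub_X_prime (T.injective.ne (colPairs_ne hb))
    show IsRelPrime _ _
    rw [h1.irreducible.isRelPrime_iff_not_dvd]
    exact colPairs_not_dvd T ha hb hab
  · intro p hp
    exact dvd_of_antisymm q (hq p hp)

lemma card_rows_lt (mu : YoungDiagram) (k : ℕ) :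
    (mu.cells.filter fun c => c.1 < k).card = rowPartialSum mu k := by
  rw [Finset.card_eq_sum_card_fiberwise (f := Prod.fst) (t := Finset.range k), rowPartialSum]
  · apply Finset.sum_congr rfl
    intro i hi
    rw [YoungDiagram.rowLen_eq_card]
    congr 1
    ext c
    simp only [Finset.mem_filter, YoungDiagram.mem_row_iff, YoungDiagram.mem_cells]
    rw [Finset.mem_range] at hi
    constructor
    · rintro ⟨⟨a, b⟩, c⟩; exact ⟨a, c⟩
    · rintro ⟨a, b⟩; exact ⟨⟨a, b ▸ hi⟩, b⟩
  · intro c hc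
    simpa using (Finset.mem_filter.1 hc).2

lemma card_label_le (nu : YoungDiagram) (L : ℕ × ℕ → ℕ)
    (hL : ∀ c ∈ nu.cells, ∀ d ∈ nu.cells, c.2 = d.2 → L c = L d → c = d) (k : ℕ) :
    (nu.cells.filter fun c => L c < k).card ≤ (nu.cells.filter fun c => c.1 < k).card := by
  rw [Finset.card_eq_sum_card_fiberwise (f := Prod.snd) (t := nu.cells.image Prod.snd),
    Finset.card_eq_sum_card_fiberwise (f := Prod.snd) (t := nu.cells.image Prod.snd)]
  · apply Finset.sum_le_sum
    intro j _
    have h1 : ((nu.cells.filter fun c => L c < k).filter fun c => c.2 = j).card ≤ k := by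
      rw [← Finset.card_range k]
      apply Finset.card_le_card_of_injOn L
      · intro c hc
        simp only [Finset.coe_filter, Finset.mem_filter, Set.mem_ofPred_eq] at hc
        simpa using hc.1.2
      · intro c hc d hd h
        simp only [Finset.coe_filter, Finset.mem_filter, Set.mem_ofPred_eq] at hc hd
        exact hL c hc.1.1 d hd.1.1 (hc.2.trans hd.2.symm) h
    have h2 : ((nu.cells.filter fun c => L c < k).filter fun c => c.2 = j).card ≤ nu.colLen j := by
      rw [YoungDiagram.colLen_eq_card]
      apply Finset.card_le_card
      intro c hc
      simp only [Finset.mem_filter] at hc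
      rw [YoungDiagram.mem_col_iff]
      exact ⟨hc.1.1, hc.2⟩
    refine (le_min h1 h2).trans ?_
    rw [← Finset.card_range (min k _)]
    apply Finset.card_le_card_of_injOn (fun i => (i, j))
    · intro i hi
      simp only [Finset.coe_range, Set.mem_Iio, lt_min_iff] at hi
      simp [hi.1, YoungDiagram.mem_iff_lt_colLen, hi.2]
    · intro a _ b _ h
      simpa using h
  · intro c hc
    exact Finset.mem_coe.2 (Finset.mem_image_of_mem _ (Finset.mem_filter.1 hc).1)
  · intro c hc
    exact Finset.mem_coe.2 (Finset.mem_image_of_mem _ (Finset.mem_filter.1 hc).1)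

lemma dominance (n : ℕ) (mu nu : YoungDiagram) (T : mu.cells ≃ Fin n)
    (h : spechtPoly n mu T ∈ spechtModule n nu) (k : ℕ) :
    rowPartialSum mu k ≤ rowPartialSum nu k := by
  let lab : Fin n → ℕ := fun a => (T.symm a : ℕ × ℕ).1
  let x : Fin n → ℂ := fun a => (lab a : ℂ)
  have h1 : eval x (spechtPoly n mu T) ≠ 0 := by
    rw [spechtPoly_eq, map_prod, Finset.prod_ne_zero_iff]
    intro p hp
    simp only [colPairs, Finset.mem_filter, Finset.mem_univ, true_and] at hp
    simp only [map_sub, eval_X, x, lab, Equiv.symm_apply_apply]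
    rw [sub_ne_zero]
    exact_mod_cast hp.2.ne
  have h2 : ∃ T' : nu.cells ≃ Fin n, eval x (spechtPoly n nu T') ≠ 0 := by
    by_contra hcon
    push Not at hcon
    apply h1
    have : spechtModule n nu ≤ LinearMap.ker (aeval (R := ℂ) x).toLinearMap := by
      unfold spechtModule
      rw [Submodule.span_le]
      rintro _ ⟨T', rfl⟩
      simpa [aeval_eq_eval] using hcon T'
    simpa [aeval_eq_eval] using this h
  obtain ⟨T', hT'⟩ := h2
  rw [spechtPoly_eq, map_prod, Finset.prod_ne_zero_iff] at hT'
  have h3 : ∀ c d : nu.cells, (c : ℕ × ℕ).2 = (d : ℕ × ℕ).2 → (c : ℕ × ℕ).1 < (d : ℕ × ℕ).1 →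
      lab (T' c) ≠ lab (T' d) := by
    intro c d hcd hlt heq
    apply hT' (c, d) (by simp [colPairs, hcd, hlt])
    simp [x, heq]
  let L : ℕ × ℕ → ℕ := fun c => if h : c ∈ nu.cells then lab (T' ⟨c, h⟩) else 0
  have h4 := card_label_le nu L (by
    intro c hc d hd hcd heq
    simp only [L, hc, hd, dif_pos] at heq
    rcases lt_trichotomy c.1 d.1 with hlt | hlt | hlt
    · exact absurd heq (h3 ⟨c, hc⟩ ⟨d, hd⟩ hcd hlt)
    · exact Prod.ext hlt hcd
    · exact absurd heq.symm (h3 ⟨d, hd⟩ ⟨c, hc⟩ hcd.symm hlt)) k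
  rw [card_rows_lt] at h4
  refine le_trans (le_of_eq ?_) h4
  rw [← card_rows_lt]
  let e := T.trans T'.symm
  refine Finset.card_bij (fun c hc => (e ⟨c, (Finset.mem_filter.1 hc).1⟩ : ℕ × ℕ)) ?_ ?_ ?_
  · intro c hc
    have := (Finset.mem_filter.1 hc).2
    rw [Finset.mem_filter]
    refine ⟨(e _).2, ?_⟩
    simp only [L, (e _).2, dif_pos]
    simpa [lab, e] using this
  · intro c hc d hd h
    have := e.injective (Subtype.ext h)
    exact congrArg Subtype.val this
  · intro d hd
    obtain ⟨hd1, hd2⟩ := Finset.mem_filter.1 hd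
    simp only [L, hd1, dif_pos] at hd2
    refine ⟨(e.symm ⟨d, hd1⟩ : ℕ × ℕ), ?_, ?_⟩
    · rw [Finset.mem_filter]
      refine ⟨(e.symm _).2, ?_⟩
      simpa [e, lab] using hd2
    · simp

lemma ext_of_rowPartialSum {mu nu : YoungDiagram}
    (h : ∀ k, rowPartialSum mu k = rowPartialSum nu k) : mu = nu := by
  have h1 : ∀ i, mu.rowLen i = nu.rowLen i := by
    intro i
    have h1 := h i
    have h2 := h (i + 1)
    simp only [rowPartialSum, Finset.sum_range_succ] at h1 h2
    omega
  ext ⟨i, j⟩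
  rw [YoungDiagram.mem_cells, YoungDiagram.mem_cells, YoungDiagram.mem_iff_lt_rowLen,
    YoungDiagram.mem_iff_lt_rowLen, h1]

open Representation in
lemma intertwine_eq (n : ℕ) (mu nu : YoungDiagram)
    (hle : (colPairs nu).card ≤ (colPairs mu).card)
    (th : IntertwiningMap (spechtRep n mu) (spechtRep n nu)) (T : mu.cells ≃ Fin n) :
    ∃ c : ℂ, ((th ⟨_, spechtPoly_mem n mu T⟩ : spechtModule n nu) : MvPolynomial (Fin n) ℂ)
      = c • spechtPoly n mu T ∧ (c ≠ 0 → (colPairs nu).card = (colPairs mu).card) := by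
  set v : spechtModule n mu := ⟨_, spechtPoly_mem n mu T⟩ with hv
  set q : MvPolynomial (Fin n) ℂ := ((th v : spechtModule n nu) : MvPolynomial (Fin n) ℂ) with hq
  have h1 : spechtPoly n mu T ∣ q := by
    apply spechtPoly_dvd
    intro p hp
    have h2 : spechtRep n mu (Equiv.swap (T p.1) (T p.2)) v = -v := by
      apply Subtype.ext
      rw [spechtRep_apply_coe]
      exact rename_swap_spechtPoly n mu T hp
    have h3 := IntertwiningMap.isIntertwining (spechtRep n mu) (spechtRep n nu) th (Equiv.swap (T p.1) (T p.2)) v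
    rw [h2, map_neg] at h3
    have h4 := congrArg (fun y : spechtModule n nu => (y : MvPolynomial (Fin n) ℂ)) h3
    simp only [spechtRep_apply_coe] at h4
    rw [← h4]
    rfl
  by_cases hq0 : q = 0
  · exact ⟨0, by rw [hq0, zero_smul], fun h => absurd rfl h⟩
  obtain ⟨r, hr⟩ := h1
  have hr0 : r ≠ 0 := by rintro rfl; exact hq0 (by rw [hr, mul_zero])
  have h5 := totalDegree_mul_of_isDomain (spechtPoly_ne_zero n mu T) hr0
  rw [← hr, (spechtPoly_hom n mu T).totalDegree (spechtPoly_ne_zero n mu T),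
    (spechtModule_hom n nu (th v).2).totalDegree hq0] at h5
  have h6 : r.totalDegree = 0 := by omega
  rw [totalDegree_eq_zero_iff_eq_C] at h6
  refine ⟨coeff 0 r, ?_, fun _ => by omega⟩
  rw [hr, smul_eq_C_mul, mul_comm, ← h6]

open Representation in
lemma intertwine_ext (n : ℕ) (mu nu : YoungDiagram)
    (f g : IntertwiningMap (spechtRep n mu) (spechtRep n nu))
    (h : ∀ T, f ⟨_, spechtPoly_mem n mu T⟩ = g ⟨_, spechtPoly_mem n mu T⟩) : f = g := by
  apply IntertwiningMap.ext
  apply LinearMap.ext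
  rintro ⟨x, hx⟩
  induction hx using Submodule.span_induction with
  | mem x hx =>
    obtain ⟨T, rfl⟩ := hx
    exact h T
  | zero => exact (map_zero f.toLinearMap).trans (map_zero g.toLinearMap).symm
  | add x y hx hy h1 h2 =>
    have := congrArg₂ (· + ·) h1 h2
    simp only [← map_add] at this
    exact this
  | smul a x hx h1 =>
    have := congrArg (a • ·) h1
    simp only [← map_smul] at this
    exact this

lemma exists_tableau {n : ℕ} {mu : YoungDiagram} (h : mu.card = n) : Nonempty (mu.cells ≃ Fin n) := by
  apply Fintype.card_eq.1
  simp [← h, YoungDiagram.card]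

open Representation in
lemma orth_self (n : ℕ) (mu : YoungDiagram) (hmu : mu.card = n) :
    avg n (fun g => spechtChar n mu g * spechtChar n mu g) = 1 := by
  rw [avg_specht]
  obtain ⟨T0⟩ := exists_tableau hmu
  have : Module.finrank ℂ (IntertwiningMap (spechtRep n mu) (spechtRep n mu)) = 1 := by
    apply finrank_eq_one (IntertwiningMap.id (spechtRep n mu))
    · intro h
      have := congrArg (fun f : IntertwiningMap (spechtRep n mu) (spechtRep n mu) =>
        (f ⟨_, spechtPoly_mem n mu T0⟩ : MvPolynomial (Fin n) ℂ)) h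
      exact spechtPoly_ne_zero n mu T0 this
    · intro f
      obtain ⟨c, hc, -⟩ := intertwine_eq n mu mu le_rfl f T0
      refine ⟨c, intertwine_ext n mu mu _ _ fun T => ?_⟩
      let g : Equiv.Perm (Fin n) := T0.symm.trans T
      have h1 : (⟨_, spechtPoly_mem n mu T⟩ : spechtModule n mu)
          = spechtRep n mu g ⟨_, spechtPoly_mem n mu T0⟩ := by
        apply Subtype.ext
        rw [spechtRep_apply_coe, rename_spechtPoly]
        have h2 : T = T0.trans g := by
          ext c
          simp [g]
        rw [← h2]
      rw [h1, IntertwiningMap.isIntertwining, IntertwiningMap.isIntertwining]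
      congr 1
      apply Subtype.ext
      rw [hc]
      rfl
  rw [this, Nat.cast_one]

open Representation in
lemma finrank_symm (n : ℕ) (mu nu : YoungDiagram) :
    Module.finrank ℂ (IntertwiningMap (spechtRep n mu) (spechtRep n nu))
    = Module.finrank ℂ (IntertwiningMap (spechtRep n nu) (spechtRep n mu)) := by
  have h1 := avg_specht n mu nu
  have h2 := avg_specht n nu mu
  simp only [mul_comm] at h1 h2
  exact_mod_cast h1.symm.trans h2

open Representation in
lemma dom_of_finrank (n : ℕ) (mu nu : YoungDiagram)
    (hle : (colPairs nu).card ≤ (colPairs mu).card)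
    (h : Module.finrank ℂ (IntertwiningMap (spechtRep n mu) (spechtRep n nu)) ≠ 0) :
    (colPairs nu).card = (colPairs mu).card ∧ ∀ k, rowPartialSum mu k ≤ rowPartialSum nu k := by
  have h1 : ∃ f : IntertwiningMap (spechtRep n mu) (spechtRep n nu), f ≠ 0 := by
    by_contra hcon
    push Not at hcon
    have : Subsingleton (IntertwiningMap (spechtRep n mu) (spechtRep n nu)) :=
      ⟨fun a b => (hcon a).trans (hcon b).symm⟩
    exact h Module.finrank_zero_of_subsingleton
  obtain ⟨f, hf⟩ := h1
  have h2 : ∃ T, f ⟨_, spechtPoly_mem n mu T⟩ ≠ 0 := by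
    by_contra hcon
    push Not at hcon
    exact hf (intertwine_ext n mu nu _ _ fun T => hcon T)
  obtain ⟨T, hT⟩ := h2
  obtain ⟨c, hc, hc2⟩ := intertwine_eq n mu nu hle f T
  have hc0 : c ≠ 0 := by
    rintro rfl
    rw [zero_smul] at hc
    exact hT (Subtype.ext hc)
  refine ⟨hc2 hc0, dominance n mu nu T ?_⟩
  have h3 : c • spechtPoly n mu T ∈ spechtModule n nu := by
    rw [← hc]; exact Subtype.prop _
  exact (Submodule.smul_mem_iff _ hc0).1 h3

lemma orth_ne (n : ℕ) (mu nu : YoungDiagram) (hne : mu ≠ nu) :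
    avg n (fun g => spechtChar n mu g * spechtChar n nu g) = 0 := by
  rw [avg_specht]
  by_contra h
  have h : Module.finrank ℂ (Representation.IntertwiningMap (spechtRep n nu) (spechtRep n mu)) ≠ 0 := by
    exact_mod_cast h
  have h' := h
  rw [finrank_symm] at h'
  have hcard : (colPairs nu).card = (colPairs mu).card := by
    rcases le_total (colPairs nu).card (colPairs mu).card with hle | hle
    · exact (dom_of_finrank n mu nu hle h').1
    · exact (dom_of_finrank n nu mu hle h).1.symm
  apply hne
  apply ext_of_rowPartialSum
  intro k
  exact le_antisymm ((dom_of_finrank n mu nu hcard.le h').2 k) ((dom_of_finrank n nu mu hcard.ge h).2 k)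

abbrev YD (n : ℕ) := {mu : YoungDiagram // mu.card = n}

lemma fst_lt_colLen {mu : YoungDiagram} {c : ℕ × ℕ} (hc : c ∈ mu.cells) : c.1 < mu.colLen 0 := by
  rw [← YoungDiagram.mem_iff_lt_colLen]
  exact mu.up_left_mem le_rfl (Nat.zero_le _) hc

lemma rowPartialSum_of_le {mu : YoungDiagram} {k : ℕ} (hk : mu.colLen 0 ≤ k) :
    rowPartialSum mu k = mu.card := by
  rw [← card_rows_lt, YoungDiagram.card]
  congr 1
  rw [Finset.filter_eq_self]
  intro c hc
  exact (fst_lt_colLen hc).trans_le hk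

lemma rowPartialSum_le_card (mu : YoungDiagram) (k : ℕ) : rowPartialSum mu k ≤ mu.card := by
  rw [← card_rows_lt, YoungDiagram.card]
  exact Finset.card_filter_le _ _

lemma colLen_le_card (mu : YoungDiagram) (j : ℕ) : mu.colLen j ≤ mu.card := by
  rw [YoungDiagram.colLen_eq_card]
  exact Finset.card_filter_le _ _

lemma rowLen_le_card (mu : YoungDiagram) (j : ℕ) : mu.rowLen j ≤ mu.card := by
  rw [YoungDiagram.rowLen_eq_card]
  exact Finset.card_filter_le _ _

instance YD_finite (n : ℕ) : Finite (YD n) := by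
  let f : YD n → ((Finset.range n ×ˢ Finset.range n).powerset : Finset (Finset (ℕ × ℕ))) :=
    fun mu => ⟨mu.1.cells, by
      rw [Finset.mem_powerset]
      intro c hc
      have h1 := hc
      have h2 := hc
      rw [YoungDiagram.mem_cells, YoungDiagram.mem_iff_lt_colLen] at h1
      rw [YoungDiagram.mem_cells, YoungDiagram.mem_iff_lt_rowLen] at h2
      have h3 := colLen_le_card mu.1 c.2
      have h4 := rowLen_le_card mu.1 c.1
      rw [mu.2] at h3 h4
      simp only [Finset.mem_product, Finset.mem_range]
      omega⟩
  apply Finite.of_injective f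
  intro a b h
  apply Subtype.ext
  apply YoungDiagram.ext
  exact congrArg Subtype.val h

instance YD_fintype (n : ℕ) : Fintype (YD n) := Fintype.ofFinite _

lemma card_eq_sum_rowLens (mu : YoungDiagram) : mu.card = mu.rowLens.sum := by
  rw [← rowPartialSum_of_le (le_refl (mu.colLen 0)), rowPartialSum, YoungDiagram.rowLens]
  rfl

lemma card_partition_le (n : ℕ) : Fintype.card n.Partition ≤ Fintype.card (YD n) := by
  have hpos : ∀ p : n.Partition, ∀ x ∈ p.parts.sort (· ≥ ·), 0 < x := by
    intro p x hx
    exact p.parts_pos (by simpa using hx)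
  have hs : ∀ p : n.Partition, (p.parts.sort (· ≥ ·)).SortedGE := by
    intro p
    exact (Multiset.pairwise_sort p.parts (· ≥ ·)).sortedGE
  let f : n.Partition → YD n := fun p => ⟨YoungDiagram.ofRowLens (p.parts.sort (· ≥ ·)) (hs p), by
    rw [card_eq_sum_rowLens, YoungDiagram.rowLens_ofRowLens_eq_self (hpos p), ← Multiset.sum_coe,
      Multiset.sort_eq, p.parts_sum]⟩
  apply Fintype.card_le_of_injective f
  intro p q h
  have h1 : YoungDiagram.ofRowLens (p.parts.sort (· ≥ ·)) (hs p)
    = YoungDiagram.ofRowLens (q.parts.sort (· ≥ ·)) (hs q) := congrArg Subtype.val h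
  have h2 := congrArg YoungDiagram.rowLens h1
  rw [YoungDiagram.rowLens_ofRowLens_eq_self (hpos p),
    YoungDiagram.rowLens_ofRowLens_eq_self (hpos q)] at h2
  apply Nat.Partition.ext
  rw [← Multiset.sort_eq p.parts (· ≥ ·), h2, Multiset.sort_eq]

lemma card_conj_le (n : ℕ) : Nat.card (ConjClasses (Equiv.Perm (Fin n))) ≤ Fintype.card (YD n) := by
  have h1 := card_partition_le (Fintype.card (Fin n))
  have h2 : Nat.card (ConjClasses (Equiv.Perm (Fin n)))
      ≤ Nat.card (Fintype.card (Fin n)).Partition := by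
    apply Nat.card_le_card_of_injective
      (Quotient.lift (fun g : Equiv.Perm (Fin n) => g.partition)
        (fun a b h => Equiv.Perm.partition_eq_of_isConj.1 h))
    intro a b
    induction a using Quotient.inductionOn with | _ a
    induction b using Quotient.inductionOn with | _ b
    intro h
    exact Quotient.sound (Equiv.Perm.partition_eq_of_isConj.2 h)
  rw [Nat.card_eq_fintype_card (α := (Fintype.card (Fin n)).Partition)] at h2
  refine (h2.trans h1).trans (le_of_eq ?_)
  simp only [← Nat.card_eq_fintype_card]
  rw [show Nat.card (Fin n) = n by simp]

lemma avg_sum {n : ℕ} {ι : Type*} (s : Finset ι) (f : ι → Equiv.Perm (Fin n) → ℂ) :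
    avg n (fun g => ∑ i ∈ s, f i g) = ∑ i ∈ s, avg n (f i) := by
  simp only [avg]
  rw [Finset.sum_comm, Finset.mul_sum]

lemma avg_const_mul {n : ℕ} (a : ℂ) (f : Equiv.Perm (Fin n) → ℂ) :
    avg n (fun g => a * f g) = a * avg n f := by
  simp only [avg, ← Finset.mul_sum]
  ring

lemma avg_add {n : ℕ} (f h : Equiv.Perm (Fin n) → ℂ) :
    avg n (fun g => f g + h g) = avg n f + avg n h := by
  simp only [avg, Finset.sum_add_distrib]
  ring

lemma orth (n : ℕ) (mu nu : YD n) :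
    avg n (fun g => spechtChar n mu g * spechtChar n nu g) = if mu = nu then 1 else 0 := by
  split_ifs with h
  · subst h
    exact orth_self n mu mu.2
  · exact orth_ne n mu nu fun e => h (Subtype.ext e)

lemma coeff_of_comb (n : ℕ) (a : YD n → ℂ) (nu : YD n) :
    avg n (fun g => (∑ mu, a mu * spechtChar n mu g) * spechtChar n nu g) = a nu := by
  simp only [Finset.sum_mul]
  rw [avg_sum]
  simp only [mul_assoc, avg_const_mul, orth]
  simp

def IsClassFn {n : ℕ} (F : Equiv.Perm (Fin n) → ℂ) : Prop :=
  ∀ g h : Equiv.Perm (Fin n), g.cycleType = h.cycleType → F g = F h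

lemma completeness (n : ℕ) (F : Equiv.Perm (Fin n) → ℂ) (hF : IsClassFn F) (g : Equiv.Perm (Fin n)) :
    F g = ∑ mu : YD n, avg n (fun g => F g * spechtChar n mu g) * spechtChar n mu g := by
  let lift : ∀ F : Equiv.Perm (Fin n) → ℂ, IsClassFn F → ConjClasses (Equiv.Perm (Fin n)) → ℂ :=
    fun F hF => Quotient.lift F (fun a b h => hF a b (Equiv.Perm.isConj_iff_cycleType_eq.1 h))
  have hχ : ∀ mu : YD n, IsClassFn (spechtChar n mu) := fun mu g h e => spechtChar_congr n mu e
  let v : YD n → ConjClasses (Equiv.Perm (Fin n)) → ℂ := fun mu => lift (spechtChar n mu) (hχ mu)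
  have hv : ∀ mu g, v mu (ConjClasses.mk g) = spechtChar n mu g := fun mu g => rfl
  have hli : LinearIndependent ℂ v := by
    rw [Fintype.linearIndependent_iff]
    intro a ha nu
    rw [← coeff_of_comb n a nu]
    have : ∀ g, ∑ mu, a mu * spechtChar n mu g = 0 := by
      intro g
      have := congrFun ha (ConjClasses.mk g)
      simpa [hv] using this
    simp [this, avg]
  have : Fintype (ConjClasses (Equiv.Perm (Fin n))) := Fintype.ofFinite _
  have hcard : Fintype.card (YD n) = Module.finrank ℂ (ConjClasses (Equiv.Perm (Fin n)) → ℂ) := by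
    apply le_antisymm
    · exact hli.fintype_card_le_finrank
    · rw [Module.finrank_fintype_fun_eq_card, ← Nat.card_eq_fintype_card]
      exact card_conj_le n
  have hspan := hli.span_eq_top_of_card_eq_finrank' hcard
  have hmem : lift F hF ∈ Submodule.span ℂ (Set.range v) := by rw [hspan]; trivial
  obtain ⟨a, ha⟩ := (Submodule.mem_span_range_iff_exists_fun ℂ).1 hmem
  have hFa : ∀ g, F g = ∑ mu, a mu * spechtChar n mu g := by
    intro g
    have := congrFun ha (ConjClasses.mk g)
    simp only [Finset.sum_apply, Pi.smul_apply, hv, smul_eq_mul] at this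
    rw [this]
    rfl
  have h2 : ∀ nu : YD n, avg n (fun g => F g * spechtChar n nu g) = a nu := by
    intro nu
    simp only [hFa]
    exact coeff_of_comb n a nu
  simp only [h2]
  exact hFa g

def iota {m : ℕ} (j : Fin (m + 1)) : Equiv.Perm (Fin m) →* Equiv.Perm (Fin (m + 1)) :=
  Equiv.Perm.viaEmbeddingHom (Fin.succAboveEmb j)

lemma iota_succAbove {m : ℕ} (j : Fin (m + 1)) (h : Equiv.Perm (Fin m)) (x : Fin m) :
    iota j h (j.succAbove x) = j.succAbove (h x) :=
  Equiv.Perm.viaEmbedding_apply h (Fin.succAboveEmb j) x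

lemma iota_self {m : ℕ} (j : Fin (m + 1)) (h : Equiv.Perm (Fin m)) : iota j h j = j := by
  apply Equiv.Perm.viaEmbedding_apply_of_notMem h (Fin.succAboveEmb j)
  simp

lemma iota_injective {m : ℕ} (j : Fin (m + 1)) : Function.Injective (iota j) :=
  Equiv.Perm.viaEmbeddingHom_injective _

lemma iota_cycleType {m : ℕ} (j : Fin (m + 1)) (h : Equiv.Perm (Fin m)) :
    (iota j h).cycleType = h.cycleType := by
  unfold iota
  rw [Equiv.Perm.viaEmbeddingHom_apply, Equiv.Perm.viaEmbedding]
  convert @Equiv.Perm.cycleType_extendDomain _ _ _ _ _ _ (fun x => x ∈ Set.range (Fin.succAboveEmb j))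
    (fun _ => Classical.propDecidable _)
    (Equiv.ofInjective (Fin.succAboveEmb j) (Fin.succAboveEmb j).injective) h <;> rfl

lemma iota_surj {m : ℕ} (j : Fin (m + 1)) (g : Equiv.Perm (Fin (m + 1))) (hg : g j = j) :
    ∃ h, iota j h = g := by
  have h1 : ∀ x : Fin m, ∃ y, j.succAbove y = g (j.succAbove x) := by
    intro x
    apply Fin.exists_succAbove_eq
    intro h
    exact Fin.succAbove_ne j x (g.injective (h.trans hg.symm))
  choose f hf using h1
  have hinj : Function.Injective f := by
    intro a b hab
    have := hf a
    rw [hab, hf b] at this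
    exact (Fin.succAbove_right_injective (g.injective this)).symm
  refine ⟨Equiv.ofBijective f (Finite.injective_iff_bijective.1 hinj), ?_⟩
  apply Equiv.ext
  intro x
  by_cases hx : x = j
  · rw [hx, iota_self, hg]
  · obtain ⟨y, rfl⟩ := Fin.exists_succAbove_eq hx
    rw [iota_succAbove, ← hf]
    rfl

lemma sum_stab {m : ℕ} (j : Fin (m + 1)) (F : Equiv.Perm (Fin (m + 1)) → ℂ) :
    ∑ g ∈ Finset.univ.filter (fun g : Equiv.Perm (Fin (m + 1)) => g j = j), F g = ∑ h, F (iota j h) := by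
  symm
  apply Finset.sum_bij (fun h _ => iota j h)
  · intro h _
    simp [iota_self]
  · intro a _ b _ h
    exact iota_injective j h
  · intro g hg
    obtain ⟨h, hh⟩ := iota_surj j g (by simpa using hg)
    exact ⟨h, Finset.mem_univ _, hh⟩
  · intro _ _
    rfl

lemma fix_eq {n : ℕ} (g : Equiv.Perm (Fin n)) :
    (n : ℂ) - (g.cycleType.sum : ℂ) = ((Finset.univ.filter (fun i => g i = i)).card : ℂ) := by
  have h1 : Finset.univ.filter (fun i => g i = i) = (g.support)ᶜ := by
    ext i; simp
  rw [h1, Finset.card_compl, Equiv.Perm.sum_cycleType, Nat.cast_sub (Finset.card_le_univ _)]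
  simp

lemma sum_fix_mul {m : ℕ} (A : Finset (Equiv.Perm (Fin m))) (F : Equiv.Perm (Fin m) → ℂ) :
    ∑ g ∈ A, ((m : ℂ) - (g.cycleType.sum : ℂ)) * F g
      = ∑ i, ∑ g ∈ A.filter (fun g => g i = i), F g := by
  simp only [fix_eq, Finset.card_filter, Nat.cast_sum, Finset.sum_mul, Finset.sum_filter]
  rw [Finset.sum_comm]
  apply Finset.sum_congr rfl
  intro g _
  apply Finset.sum_congr rfl
  intro i _
  split_ifs <;> simp

lemma avg_fix {m : ℕ} (c : Multiset ℕ → ℂ) :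
    avg (m + 1) (fun g => (((m + 1 : ℕ) : ℂ) - (g.cycleType.sum : ℂ)) * c g.cycleType)
      = avg m (fun h => c h.cycleType) := by
  simp only [avg]
  rw [sum_fix_mul]
  simp only [sum_stab, iota_cycleType]
  rw [Finset.sum_const, Finset.card_univ, Fintype.card_fin, Fintype.card_perm, Fintype.card_perm,
    Fintype.card_fin, Fintype.card_fin, Nat.factorial_succ, nsmul_eq_mul]
  have : ((m + 1 : ℕ) : ℂ) ≠ 0 := by exact_mod_cast Nat.succ_ne_zero m
  have : ((m.factorial : ℕ) : ℂ) ≠ 0 := by exact_mod_cast Nat.factorial_ne_zero m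
  rw [Nat.cast_mul]
  field_simp

/-- character as a function of the cycle type -/
def cc (n : ℕ) (mu : YoungDiagram) : Multiset ℕ → ℂ :=
  Function.extend (fun g : Equiv.Perm (Fin n) => g.cycleType) (spechtChar n mu) 0

lemma cc_cycleType (n : ℕ) (mu : YoungDiagram) (g : Equiv.Perm (Fin n)) :
    cc n mu g.cycleType = spechtChar n mu g := by
  apply Function.FactorsThrough.extend_apply
    (f := fun g : Equiv.Perm (Fin n) => g.cycleType) (g := spechtChar n mu)
  intro a b h
  exact spechtChar_congr n mu h

def bmult (m : ℕ) (mu rho : YoungDiagram) : ℂ :=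
  avg m (fun h => cc (m + 1) mu h.cycleType * cc m rho h.cycleType)

lemma parseval (n : ℕ) (F : Equiv.Perm (Fin n) → ℂ) (hF : IsClassFn F) :
    avg n (fun g => F g * F g) = ∑ mu : YD n, (avg n (fun g => F g * spechtChar n mu g)) ^ 2 := by
  have h1 : ∀ g, F g * F g = ∑ mu : YD n, avg n (fun g => F g * spechtChar n mu g) *
      (F g * spechtChar n mu g) := by
    intro g
    conv_lhs => rhs; rw [completeness n F hF g]
    rw [Finset.mul_sum]
    apply Finset.sum_congr rfl
    intro mu _
    ring
  simp only [h1]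
  rw [avg_sum]
  simp only [avg_const_mul, sq]

lemma ind_class (m : ℕ) (rho : YoungDiagram) : IsClassFn (fun g : Equiv.Perm (Fin (m + 1)) =>
    (((m + 1 : ℕ) : ℂ) - (g.cycleType.sum : ℂ)) * cc m rho g.cycleType) := by
  intro g h e
  simp only [e]

lemma ind_coeff (m : ℕ) (rho mu : YoungDiagram) :
    avg (m + 1) (fun g => ((((m + 1 : ℕ) : ℂ) - (g.cycleType.sum : ℂ)) * cc m rho g.cycleType)
      * spechtChar (m + 1) mu g) = bmult m mu rho := by
  rw [bmult, ← avg_fix (fun s => cc (m + 1) mu s * cc m rho s)]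
  congr 1
  ext g
  rw [cc_cycleType]
  ring

lemma ind_expand (m : ℕ) (rho : YoungDiagram) (g : Equiv.Perm (Fin (m + 1))) :
    (((m + 1 : ℕ) : ℂ) - (g.cycleType.sum : ℂ)) * cc m rho g.cycleType
      = ∑ mu : YD (m + 1), bmult m mu rho * spechtChar (m + 1) mu g := by
  rw [completeness _ _ (ind_class m rho) g]
  simp only [ind_coeff]

lemma sum_b_sq (m : ℕ) (rho : YoungDiagram) (hrho : rho.card = m) :
    ∑ mu : YD (m + 1), bmult m mu rho ^ 2
      = 1 + avg m (fun h => ((m : ℂ) - (h.cycleType.sum : ℂ)) * (cc m rho h.cycleType) ^ 2) := by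
  have h1 := parseval _ _ (ind_class m rho)
  simp only [ind_coeff] at h1
  rw [← h1]
  have h2 := avg_fix (m := m) (fun s => (((m + 1 : ℕ) : ℂ) - (s.sum : ℂ)) * (cc m rho s) ^ 2)
  have h3 : ∀ g : Equiv.Perm (Fin (m + 1)),
    (((m + 1 : ℕ) : ℂ) - (g.cycleType.sum : ℂ)) * cc m rho g.cycleType *
      ((((m + 1 : ℕ) : ℂ) - (g.cycleType.sum : ℂ)) * cc m rho g.cycleType)
    = (((m + 1 : ℕ) : ℂ) - (g.cycleType.sum : ℂ)) *
      ((((m + 1 : ℕ) : ℂ) - (g.cycleType.sum : ℂ)) * (cc m rho g.cycleType) ^ 2) := by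
    intro g; ring
  simp only [h3]
  rw [h2]
  have h4 := orth_self m rho hrho
  rw [← h4, ← avg_add]
  congr 1
  ext h
  rw [← cc_cycleType]
  push_cast
  ring

lemma sum_b_sq_zero (rho : YoungDiagram) (hrho : rho.card = 0) :
    ∑ mu : YD 1, bmult 0 mu rho ^ 2 = 1 := by
  rw [sum_b_sq 0 rho hrho]
  have : ∀ h : Equiv.Perm (Fin 0), h.cycleType = 0 := by
    intro h
    rw [Subsingleton.elim h 1, Equiv.Perm.cycleType_one]
  simp [this, avg]

lemma sum_b_sq_succ (k : ℕ) (rho : YoungDiagram) (hrho : rho.card = k + 1) :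
    ∑ mu : YD (k + 2), bmult (k + 1) mu rho ^ 2 = 1 + ∑ si : YD k, bmult k rho si ^ 2 := by
  rw [sum_b_sq (k + 1) rho hrho, avg_fix (fun s => cc (k + 1) rho s ^ 2)]
  congr 1
  have h1 : IsClassFn (fun h : Equiv.Perm (Fin k) => cc (k + 1) rho h.cycleType) := by
    intro g h e
    simp only [e]
  have h2 := parseval k _ h1
  simp only [sq]
  rw [h2]
  apply Finset.sum_congr rfl
  intro si _
  simp only [bmult, cc_cycleType, sq]

lemma mem_cells_iff {mu : YoungDiagram} {c : ℕ × ℕ} : c ∈ mu.cells ↔ c.2 < mu.rowLen c.1 := by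
  rw [← YoungDiagram.mem_iff_lt_rowLen]
  exact YoungDiagram.mem_cells c

lemma yd_ext_rowLen {mu nu : YoungDiagram} (h : ∀ i, mu.rowLen i = nu.rowLen i) : mu = nu := by
  apply YoungDiagram.ext
  ext c
  rw [mem_cells_iff, mem_cells_iff, h]

lemma covers_cells_of {mu rho : YoungDiagram} {i : ℕ} (h1 : rho.rowLen i + 1 = mu.rowLen i)
    (h2 : ∀ j, j ≠ i → rho.rowLen j = mu.rowLen j) :
    mu.cells = insert (i, rho.rowLen i) rho.cells := by
  ext ⟨a, b⟩
  rw [Finset.mem_insert, mem_cells_iff, mem_cells_iff]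
  simp only [Prod.mk.injEq]
  by_cases ha : a = i
  · subst ha
    simp
    omega
  · simp [ha, h2 a ha]

lemma covers_cells {mu rho : YoungDiagram} (h : Covers mu rho) :
    ∃ c, c ∉ rho.cells ∧ mu.cells = insert c rho.cells := by
  obtain ⟨i, h1, h2⟩ := h
  exact ⟨_, by rw [mem_cells_iff]; simp, covers_cells_of h1 h2⟩

lemma covers_card {mu rho : YoungDiagram} (h : Covers mu rho) : mu.card = rho.card + 1 := by
  obtain ⟨c, hc, e⟩ := covers_cells h
  rw [YoungDiagram.card, e, Finset.card_insert_of_notMem hc]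

def extT {m : ℕ} {mu rho : YoungDiagram} (T : rho.cells ≃ Fin m) (c : mu.cells) : Fin (m + 1) :=
  if h : (c : ℕ × ℕ) ∈ rho.cells then (T ⟨c, h⟩).succ else 0

lemma extT_bij {m : ℕ} {mu rho : YoungDiagram} (T : rho.cells ≃ Fin m) (hc : Covers mu rho) :
    Function.Bijective (extT (mu := mu) T) := by
  have hr : rho.card = m := by
    have := Fintype.card_congr T
    simpa [YoungDiagram.card] using this
  rw [Fintype.bijective_iff_injective_and_card]
  constructor
  · obtain ⟨c, hc, e⟩ := covers_cells hc
    intro a b hab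
    apply Subtype.ext
    have ha := Finset.mem_insert.1 (e.subset a.2)
    have hb := Finset.mem_insert.1 (e.subset b.2)
    unfold extT at hab
    split_ifs at hab with h1 h2 h2
    · have := T.injective (Fin.succ_injective _ hab)
      exact Subtype.mk.inj this
    · exact absurd hab (Fin.succ_ne_zero _)
    · exact absurd hab.symm (Fin.succ_ne_zero _)
    · rcases ha with ha | ha
      · rcases hb with hb | hb
        · rw [ha, hb]
        · exact absurd hb h2
      · exact absurd ha h1
  · have := covers_card hc
    rw [hr] at this
    simpa [YoungDiagram.card] using this

def extTE {m : ℕ} {mu rho : YoungDiagram} (T : rho.cells ≃ Fin m) (hc : Covers mu rho) :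
    mu.cells ≃ Fin (m + 1) := Equiv.ofBijective _ (extT_bij T hc)

lemma extTE_pos {m : ℕ} {mu rho : YoungDiagram} (T : rho.cells ≃ Fin m) (hc : Covers mu rho)
    (c : mu.cells) (h : (c : ℕ × ℕ) ∈ rho.cells) : extTE T hc c = (T ⟨c, h⟩).succ := by
  simp [extTE, extT, h]

lemma extTE_neg {m : ℕ} {mu rho : YoungDiagram} (T : rho.cells ≃ Fin m) (hc : Covers mu rho)
    (c : mu.cells) (h : (c : ℕ × ℕ) ∉ rho.cells) : extTE T hc c = 0 := by
  simp [extTE, extT, h]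

lemma coeff_ext {m : ℕ} {mu rho : YoungDiagram} (T : rho.cells ≃ Fin m) (hc : Covers mu rho) :
    ∃ (k : ℕ) (ε : ℂ), ε ≠ 0 ∧
      (finSuccEquiv ℂ m (spechtPoly (m + 1) mu (extTE T hc))).coeff k = ε • spechtPoly m rho T := by
  obtain ⟨c, hcn, e⟩ := covers_cells hc
  have key : finSuccEquiv ℂ m (spechtPoly (m + 1) mu (extTE T hc)) =
      (∏ p ∈ (colPairs mu).filter (fun p => ¬ (p.2 : ℕ × ℕ) ∈ rho.cells),
        finSuccEquiv ℂ m (X (extTE T hc p.1) - X (extTE T hc p.2))) *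
      Polynomial.C (spechtPoly m rho T) := by
    rw [spechtPoly_eq, map_prod, ← Finset.prod_filter_mul_prod_filter_not _
      (fun p : mu.cells × mu.cells => ¬ (p.2 : ℕ × ℕ) ∈ rho.cells)]
    congr 1
    rw [spechtPoly_eq, map_prod]
    have hsub : ∀ x, x ∈ rho.cells → x ∈ mu.cells := fun x hx => by
      rw [e]; exact Finset.mem_insert_of_mem hx
    symm
    apply Finset.prod_bij (fun p _ => ((⟨p.1.1, hsub _ p.1.2⟩ : mu.cells), (⟨p.2.1, hsub _ p.2.2⟩ : mu.cells)))
    · intro p hp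
      simp only [colPairs, Finset.mem_filter, Finset.mem_univ, true_and, not_not] at hp ⊢
      exact ⟨hp, p.2.2⟩
    · intro p _ q _ h
      simp only [Prod.mk.injEq, Subtype.mk.injEq] at h
      exact Prod.ext (Subtype.ext h.1) (Subtype.ext h.2)
    · intro q hq
      simp only [colPairs, Finset.mem_filter, Finset.mem_univ, true_and, not_not] at hq
      have h1 : (q.1 : ℕ × ℕ) ∈ rho.cells := by
        have := rho.up_left_mem (i1 := q.1.1.1) (j1 := q.1.1.2) (i2 := q.2.1.1) (j2 := q.2.1.2) hq.1.2.le hq.1.1.le hq.2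
        exact this
      refine ⟨(⟨q.1.1, h1⟩, ⟨q.2.1, hq.2⟩), ?_, rfl⟩
      simp only [colPairs, Finset.mem_filter, Finset.mem_univ, true_and]
      exact hq.1
    · intro p hp
      rw [extTE_pos T hc _ p.1.2, extTE_pos T hc _ p.2.2]
      simp only [map_sub, finSuccEquiv_X_succ]
  set Q := (∏ p ∈ (colPairs mu).filter (fun p => ¬ (p.2 : ℕ × ℕ) ∈ rho.cells),
        finSuccEquiv ℂ m (X (extTE T hc p.1) - X (extTE T hc p.2))) with hQ
  have hlead : Q.leadingCoeff = C ((-1) ^ ((colPairs mu).filter (fun p => ¬ (p.2 : ℕ × ℕ) ∈ rho.cells)).card) := by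
    rw [hQ, Polynomial.leadingCoeff_prod, Finset.prod_congr rfl (g := fun _ => -1), Finset.prod_const]
    · simp
    · intro p hp
      simp only [Finset.mem_filter] at hp
      have h2 := Finset.mem_insert.1 (e.subset p.2.2)
      have h2 := h2.resolve_right hp.2
      have h1 := Finset.mem_insert.1 (e.subset p.1.2)
      have h1 : (p.1 : ℕ × ℕ) ∈ rho.cells := by
        refine h1.resolve_left fun h => colPairs_ne hp.1 (Subtype.ext (h.trans h2.symm))
      rw [extTE_pos T hc _ h1, extTE_neg T hc _ hp.2, map_sub, finSuccEquiv_X_succ, finSuccEquiv_X_zero]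
      rw [← neg_sub, Polynomial.leadingCoeff_neg, Polynomial.leadingCoeff_X_sub_C]
  refine ⟨Q.natDegree, (-1) ^ ((colPairs mu).filter (fun p => ¬ (p.2 : ℕ × ℕ) ∈ rho.cells)).card, by simp, ?_⟩
  rw [key, Polynomial.coeff_mul_C]
  change Q.leadingCoeff * _ = _
  rw [hlead, MvPolynomial.smul_eq_C_mul]

lemma iota_zero_succ {m : ℕ} (h : Equiv.Perm (Fin m)) (x : Fin m) : iota 0 h x.succ = (h x).succ := by
  have := iota_succAbove 0 h x
  simpa using this

lemma finSucc_iota {m : ℕ} (h : Equiv.Perm (Fin m)) (p : MvPolynomial (Fin (m + 1)) ℂ) :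
    finSuccEquiv ℂ m (rename (iota 0 h) p) = Polynomial.map (rename h).toRingHom (finSuccEquiv ℂ m p) := by
  induction p using MvPolynomial.induction_on with
  | C a => simp [finSuccEquiv_apply]
  | add p q hp hq => simp only [map_add, hp, hq, Polynomial.map_add]
  | mul_X p i hp =>
    have key : finSuccEquiv ℂ m (X (iota 0 h i)) =
        Polynomial.map (rename h).toRingHom (finSuccEquiv ℂ m (X i)) := by
      refine Fin.cases ?_ (fun k => ?_) i
      · rw [iota_self, finSuccEquiv_X_zero, Polynomial.map_X]
      · rw [iota_zero_succ, finSuccEquiv_X_succ, finSuccEquiv_X_succ, Polynomial.map_C]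
        simp
    rw [map_mul, map_mul, map_mul, rename_X, key, hp, Polynomial.map_mul]

lemma bmult_eq (m : ℕ) (mu rho : YoungDiagram) :
    bmult m mu rho = Module.finrank ℂ (Representation.IntertwiningMap
      ((spechtRep (m + 1) mu).comp (iota 0)) (spechtRep m rho)) := by
  rw [← avg_rep, bmult]
  congr 1
  ext h
  rw [cc_cycleType, ← iota_cycleType 0 h, cc_cycleType, mul_comm]
  congr 1
  rw [← spechtChar_inv, ← map_inv]
  rfl

open Representation in
lemma bmult_pos (m : ℕ) (mu rho : YoungDiagram) (hrho : rho.card = m) (hc : Covers mu rho) :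
    Module.finrank ℂ (Representation.IntertwiningMap
      ((spechtRep (m + 1) mu).comp (iota 0)) (spechtRep m rho)) ≠ 0 := by
  obtain ⟨T⟩ := exists_tableau hrho
  obtain ⟨k, ε, hε, hk⟩ := coeff_ext T hc
  obtain ⟨P, hP⟩ := (spechtModule m rho).subtype.exists_leftInverse_of_injective
    (spechtModule m rho).ker_subtype
  let f : spechtModule (m + 1) mu →ₗ[ℂ] MvPolynomial (Fin m) ℂ :=
    { toFun := fun p => (finSuccEquiv ℂ m p.1).coeff k
      map_add' := by intro p q; simp
      map_smul' := by
        intro a p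
        simp only [Submodule.coe_smul, RingHom.id_apply, map_smul]
        rw [Polynomial.coeff_smul] }
  have hf : ∀ (h : Equiv.Perm (Fin m)) p, f (spechtRep (m + 1) mu (iota 0 h) p) = rename h (f p) := by
    intro h p
    change (finSuccEquiv ℂ m (rename (iota 0 h) p.1)).coeff k = _
    rw [finSucc_iota, Polynomial.coeff_map]
    rfl
  let g : spechtModule (m + 1) mu →ₗ[ℂ] spechtModule m rho :=
    ∑ h : Equiv.Perm (Fin m), spechtRep m rho h ∘ₗ P ∘ₗ f ∘ₗ spechtRep (m + 1) mu (iota 0 h⁻¹)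
  have hg : ∀ p, g p = ∑ h : Equiv.Perm (Fin m), spechtRep m rho h (P (f (spechtRep (m + 1) mu (iota 0 h⁻¹) p))) := by
    intro p
    simp [g]
  have hgi : ∀ (x : Equiv.Perm (Fin m)) p, g (spechtRep (m + 1) mu (iota 0 x) p) = spechtRep m rho x (g p) := by
    intro x p
    rw [hg, hg, map_sum, ← Equiv.sum_comp (Equiv.mulLeft x)]
    apply Finset.sum_congr rfl
    intro h _
    have e1 : spechtRep (m + 1) mu (iota 0 (Equiv.mulLeft x h)⁻¹) (spechtRep (m + 1) mu (iota 0 x) p)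
        = spechtRep (m + 1) mu (iota 0 h⁻¹) p := by
      rw [← Module.End.mul_apply, ← map_mul, ← map_mul]
      congr 3
      rw [Equiv.coe_mulLeft]
      group
    rw [e1, Equiv.coe_mulLeft, map_mul, Module.End.mul_apply]
  let G : IntertwiningMap ((spechtRep (m + 1) mu).comp (iota 0)) (spechtRep m rho) :=
    ⟨g, fun x => LinearMap.ext fun p => hgi x p⟩
  have hG : G ≠ 0 := by
    intro h0
    have h1 : g ⟨_, spechtPoly_mem (m + 1) mu (extTE T hc)⟩ = 0 :=
      congrArg (fun F : IntertwiningMap ((spechtRep (m + 1) mu).comp (iota 0)) (spechtRep m rho) =>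
        F.toLinearMap ⟨_, spechtPoly_mem (m + 1) mu (extTE T hc)⟩) h0
    rw [hg] at h1
    have h2 : ∀ h : Equiv.Perm (Fin m), spechtRep m rho h (P (f (spechtRep (m + 1) mu (iota 0 h⁻¹)
        ⟨_, spechtPoly_mem (m + 1) mu (extTE T hc)⟩))) = ε • ⟨_, spechtPoly_mem m rho T⟩ := by
      intro h
      have e1 : f ⟨_, spechtPoly_mem (m + 1) mu (extTE T hc)⟩ =
        (spechtModule m rho).subtype (ε • ⟨_, spechtPoly_mem m rho T⟩) := hk
      rw [hf, e1]
      have e2 : rename (⇑h⁻¹) ((spechtModule m rho).subtype (ε • ⟨_, spechtPoly_mem m rho T⟩)) =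
        (spechtModule m rho).subtype (spechtRep m rho h⁻¹ (ε • ⟨_, spechtPoly_mem m rho T⟩)) := rfl
      have e3 : ∀ y, P ((spechtModule m rho).subtype y) = y := fun y => LinearMap.congr_fun hP y
      rw [e2, e3, ← Module.End.mul_apply, ← map_mul]
      simp
    rw [Finset.sum_congr rfl (fun h _ => h2 h), Finset.sum_const, ← Nat.cast_smul_eq_nsmul ℂ, smul_smul, smul_eq_zero] at h1
    rcases h1 with h1 | h1
    · rcases mul_eq_zero.1 h1 with h | h
      · simp at h
      · exact hε h
    · exact spechtPoly_ne_zero m rho T (congrArg Subtype.val h1)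
  exact (Module.finrank_pos_iff_exists_ne_zero (R := ℂ) (M := IntertwiningMap
    ((spechtRep (m + 1) mu).comp (iota 0)) (spechtRep m rho))).2 ⟨G, hG⟩ |>.ne'

lemma exists_yd (f : ℕ → ℕ) (hf : Antitone f) (N : ℕ) (hN : f N = 0) :
    ∃ mu : YoungDiagram, ∀ i, mu.rowLen i = f i := by
  have h0 : ∀ i, N ≤ i → f i = 0 := fun i hi => Nat.le_zero.1 (hN ▸ hf hi)
  let mu : YoungDiagram :=
    { cells := (Finset.range N ×ˢ Finset.range (f 0)).filter (fun c => c.2 < f c.1)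
      isLowerSet := by
        rintro ⟨a, b⟩ ⟨c, d⟩ ⟨h1, h2⟩ h
        simp only at h1 h2
        simp only [Finset.coe_filter, Finset.mem_product, Finset.mem_range, Set.mem_ofPred_eq] at h ⊢
        have := hf h1
        exact ⟨⟨by omega, by omega⟩, by omega⟩ }
  refine ⟨mu, fun i => ?_⟩
  have h : ∀ j, j < mu.rowLen i ↔ j < f i := by
    intro j
    rw [← YoungDiagram.mem_iff_lt_rowLen, ← YoungDiagram.mem_cells]
    simp only [mu, Finset.mem_filter, Finset.mem_product, Finset.mem_range]
    constructor
    · exact fun h => h.2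
    · intro h
      refine ⟨⟨?_, ?_⟩, h⟩
      · by_contra hc
        have := h0 i (by omega)
        omega
      · have := hf (Nat.zero_le i)
        omega
  have h1 := h (mu.rowLen i)
  have h2 := h (f i)
  omega

lemma rowLen_zero_of_le (mu : YoungDiagram) {i : ℕ} (hi : mu.card ≤ i) : mu.rowLen i = 0 := by
  by_contra h
  have h1 : (i, 0) ∈ mu := YoungDiagram.mem_iff_lt_rowLen.2 (Nat.pos_of_ne_zero h)
  rw [YoungDiagram.mem_iff_lt_colLen] at h1
  have := colLen_le_card mu 0
  omega

lemma exists_add (rho : YoungDiagram) (r : ℕ) (hr : r = 0 ∨ rho.rowLen r < rho.rowLen (r - 1)) :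
    ∃ mu : YoungDiagram, mu.rowLen r = rho.rowLen r + 1 ∧ ∀ j, j ≠ r → mu.rowLen j = rho.rowLen j := by
  obtain ⟨mu, hmu⟩ := exists_yd (fun i => if i = r then rho.rowLen r + 1 else rho.rowLen i) (by
    apply antitone_nat_of_succ_le
    intro n
    have h1 := rho.rowLen_anti n (n + 1) (by omega)
    by_cases hn : n + 1 = r
    · subst hn
      simp at hr ⊢
      omega
    · rw [if_neg hn]
      split_ifs with h
      · subst h; omega
      · exact h1) (rho.card + r + 1) (by
        rw [if_neg (by omega)]
        exact rowLen_zero_of_le rho (by omega))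
  refine ⟨mu, by simp [hmu], fun j hj => by simp [hmu, hj]⟩

lemma covers_inj {mu rho : YoungDiagram} {i j : ℕ} (h1 : mu.rowLen i = rho.rowLen i + 1)
    (h2 : ∀ k, k ≠ j → mu.rowLen k = rho.rowLen k) : i = j := by
  by_contra h
  have := h2 i h
  omega

lemma card_U_ge_one (m : ℕ) (rho : YoungDiagram) (hrho : rho.card = m) :
    1 ≤ (Finset.univ.filter (fun mu : YD (m + 1) => Covers mu rho)).card := by
  obtain ⟨mu, h1, h2⟩ := exists_add rho 0 (Or.inl rfl)
  have hc : Covers mu rho := ⟨0, h1.symm, fun j hj => (h2 j hj).symm⟩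
  apply Finset.card_pos.2
  exact ⟨⟨mu, by rw [covers_card hc, hrho]⟩, by simpa using hc⟩

lemma card_U_ge (k : ℕ) (rho : YoungDiagram) (hrho : rho.card = k + 1) :
    1 + (Finset.univ.filter (fun si : YD k => Covers rho si)).card
      ≤ (Finset.univ.filter (fun mu : YD (k + 2) => Covers mu rho)).card := by
  obtain ⟨mu0, h01, h02⟩ := exists_add rho 0 (Or.inl rfl)
  have hc0 : Covers mu0 rho := ⟨0, h01.symm, fun j hj => (h02 j hj).symm⟩
  have hex : ∀ si : YD k, Covers rho si → ∃ mu : YD (k + 2), ∃ i, si.1.rowLen i + 1 = rho.rowLen i ∧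
      (∀ j, j ≠ i → si.1.rowLen j = rho.rowLen j) ∧ mu.1.rowLen (i + 1) = rho.rowLen (i + 1) + 1 ∧
      ∀ j, j ≠ i + 1 → mu.1.rowLen j = rho.rowLen j := by
    rintro si ⟨i, h1, h2⟩
    obtain ⟨mu, h3, h4⟩ := exists_add rho (i + 1) (Or.inr (by
      have := si.1.rowLen_anti i (i + 1) (by omega)
      have := h2 (i + 1) (by omega)
      simp
      omega))
    have hc : Covers mu rho := ⟨i + 1, h3.symm, fun j hj => (h4 j hj).symm⟩
    exact ⟨⟨mu, by rw [covers_card hc, hrho]⟩, i, h1, h2, h3, h4⟩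
  let mu0' : YD (k + 2) := ⟨mu0, by rw [covers_card hc0, hrho]⟩
  have : Nonempty (YD (k + 2)) := ⟨mu0'⟩
  choose! F hF using hex
  have hnot : mu0' ∉ (Finset.univ.filter (fun si : YD k => Covers rho si)).image F := by
    intro h
    simp only [Finset.mem_image, Finset.mem_filter, Finset.mem_univ, true_and] at h
    obtain ⟨si, hs, e⟩ := h
    obtain ⟨i, -, -, h3, h4⟩ := hF si hs
    rw [e] at h3 h4
    have := covers_inj h3 h02
    omega
  have hinj : Set.InjOn F (Finset.univ.filter (fun si : YD k => Covers rho si)) := by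
    intro a ha b hb e
    simp only [Finset.coe_filter, Finset.mem_univ, true_and, Set.mem_ofPred_eq] at ha hb
    obtain ⟨i, h1, h2, h3, h4⟩ := hF a ha
    obtain ⟨j, g1, g2, g3, g4⟩ := hF b hb
    rw [e] at h3
    have hij : i = j := by
      have := covers_inj h3 g4
      omega
    subst hij
    apply Subtype.ext
    apply yd_ext_rowLen
    intro l
    by_cases hl : l = i
    · subst hl; omega
    · rw [h2 l hl, g2 l hl]
  rw [add_comm, ← Finset.card_image_of_injOn hinj, ← Finset.card_insert_of_notMem hnot]
  apply Finset.card_le_card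
  intro x hx
  rw [Finset.mem_insert] at hx
  simp only [Finset.mem_filter, Finset.mem_univ, true_and]
  rcases hx with rfl | hx
  · exact hc0
  · simp only [Finset.mem_image, Finset.mem_filter, Finset.mem_univ, true_and] at hx
    obtain ⟨si, hs, rfl⟩ := hx
    obtain ⟨i, -, -, h3, h4⟩ := hF si hs
    exact ⟨i + 1, h3.symm, fun j hj => (h4 j hj).symm⟩

lemma bmult_nat (m : ℕ) (mu rho : YoungDiagram) (hrho : rho.card = m) :
    ∃ N : ℕ, bmult m mu rho = N ∧ (Covers mu rho → 1 ≤ N) :=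
  ⟨_, bmult_eq m mu rho, fun hc => Nat.one_le_iff_ne_zero.2 (bmult_pos m mu rho hrho hc)⟩

lemma bmult_of_le (m : ℕ) (rho : YoungDiagram) (hrho : rho.card = m) (K : ℕ)
    (hK : ∑ mu : YD (m + 1), bmult m mu rho ^ 2 = K)
    (hle : K ≤ (Finset.univ.filter (fun mu : YD (m + 1) => Covers mu rho)).card) (mu : YD (m + 1)) :
    bmult m mu rho = if Covers mu rho then 1 else 0 := by
  choose N hN1 hN2 using fun mu : YD (m + 1) => bmult_nat m mu rho hrho
  simp only [hN1] at hK ⊢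
  have hK : ∑ mu : YD (m + 1), N mu ^ 2 = K := by exact_mod_cast hK
  rw [Finset.card_filter, ← hK] at hle
  have hge : ∀ mu ∈ (Finset.univ : Finset (YD (m + 1))), (if Covers mu rho then 1 else 0) ≤ N mu ^ 2 := by
    intro mu _
    split_ifs with h
    · exact Nat.one_le_pow _ _ (hN2 mu h)
    · exact Nat.zero_le _
  have heq := (Finset.sum_eq_sum_iff_of_le hge).1 (le_antisymm (Finset.sum_le_sum hge) hle) mu (Finset.mem_univ _)
  split_ifs at heq ⊢ with h
  · have : N mu = 1 := by nlinarith [hN2 mu h]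
    simp [this]
  · have : N mu = 0 := by simpa using heq.symm
    simp [this]

lemma branching (m : ℕ) (rho : YoungDiagram) (hrho : rho.card = m) (mu : YD (m + 1)) :
    bmult m mu rho = if Covers mu rho then 1 else 0 := by
  induction m generalizing rho with
  | zero =>
    apply bmult_of_le 0 rho hrho 1
    · rw [sum_b_sq_zero rho hrho, Nat.cast_one]
    · exact card_U_ge_one 0 rho hrho
  | succ k ih =>
    apply bmult_of_le (k + 1) rho hrho _ _ (card_U_ge k rho hrho)
    rw [sum_b_sq_succ k rho hrho]
    push_cast
    congr 1
    rw [Finset.card_filter, Nat.cast_sum]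
    apply Finset.sum_congr rfl
    intro si _
    rw [ih si.1 si.2 ⟨rho, hrho⟩]
    split_ifs <;> simp

lemma sum_covers (m : ℕ) (rho : YoungDiagram) (hrho : rho.card = m) (g : Equiv.Perm (Fin (m + 1))) :
    ∑ mu ∈ Finset.univ.filter (fun mu : YD (m + 1) => Covers mu rho), spechtChar (m + 1) mu g
      = (((m + 1 : ℕ) : ℂ) - (g.cycleType.sum : ℂ)) * cc m rho g.cycleType := by
  rw [ind_expand, Finset.sum_filter]
  apply Finset.sum_congr rfl
  intro mu _
  rw [branching m rho hrho]
  split_ifs <;> simp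

def HR {n : ℕ} (r : Fin n → ℕ) : Finset (Equiv.Perm (Fin n)) :=
  Finset.univ.filter (fun g => ∀ x, r (g x) = r x)

lemma mem_HR {n : ℕ} {r : Fin n → ℕ} {g : Equiv.Perm (Fin n)} : g ∈ HR r ↔ ∀ x, r (g x) = r x := by
  simp [HR]

def AV {n : ℕ} (r : Fin n → ℕ) (c : Multiset ℕ → ℂ) : ℂ :=
  ((HR r).card : ℂ)⁻¹ * ∑ g ∈ HR r, c g.cycleType

def ridx (n : ℕ) (lam : YoungDiagram) (x : Fin n) : ℕ := rowIndex lam x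

lemma mem_youngH {n : ℕ} {lam : YoungDiagram} {g : Equiv.Perm (Fin n)} :
    g ∈ youngH n lam ↔ g ∈ HR (ridx n lam) := by
  rw [mem_HR]; rfl

lemma avg_ind (n : ℕ) (lam : YoungDiagram) (c : Multiset ℕ → ℂ) :
    avg n (fun g => indTrivChar (youngH n lam) g * c g.cycleType) = AV (ridx n lam) c := by
  have hcard : Nat.card (youngH n lam) = (HR (ridx n lam)).card := by
    rw [← Nat.card_eq_finsetCard]
    exact Nat.card_congr (Equiv.subtypeEquivRight fun g => mem_youngH)
  have h1 : ∀ g : Equiv.Perm (Fin n), indTrivChar (youngH n lam) g * c g.cycleType =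
      ((HR (ridx n lam)).card : ℂ)⁻¹ * ∑ x : Equiv.Perm (Fin n),
        if x⁻¹ * g * x ∈ HR (ridx n lam) then c g.cycleType else 0 := by
    intro g
    rw [indTrivChar, hcard, mul_assoc]
    congr 1
    rw [← Finset.sum_filter, Finset.sum_const, nsmul_eq_mul, Nat.card_eq_fintype_card, Fintype.card_subtype]
    simp only [mem_youngH]
  have h2 : ∀ x : Equiv.Perm (Fin n), ∑ g : Equiv.Perm (Fin n),
      (if x⁻¹ * g * x ∈ HR (ridx n lam) then c g.cycleType else 0) = ∑ g ∈ HR (ridx n lam), c g.cycleType := by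
    intro x
    rw [← Equiv.sum_comp (MulAut.conj x).toEquiv]
    have : HR (ridx n lam) = Finset.univ.filter (fun g => g ∈ HR (ridx n lam)) := by simp
    rw [this, Finset.sum_filter]
    apply Finset.sum_congr rfl
    intro g _
    have e1 : (MulAut.conj x).toEquiv g = x * g * x⁻¹ := rfl
    rw [e1, Equiv.Perm.cycleType_conj]
    have e2 : x⁻¹ * (x * g * x⁻¹) * x = g := by group
    rw [e2]
    simp
  simp only [h1]
  rw [avg_const_mul, AV]
  congr 1
  rw [avg, Finset.sum_comm]
  simp only [h2]
  rw [Finset.sum_const, Finset.card_univ, nsmul_eq_mul, ← mul_assoc, inv_mul_cancel₀, one_mul]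
  simp

lemma AV_congr {n : ℕ} (r r' : Fin n → ℕ) (c : Multiset ℕ → ℂ) (s : Equiv.Perm ℕ)
    (h : ∀ i, (Finset.univ.filter (fun x => r x = i)).card = (Finset.univ.filter (fun x => r' x = s i)).card) :
    AV r c = AV r' c := by
  have h1 : ∀ i, Nonempty ({x // s (r x) = i} ≃ {x // r' x = i}) := by
    intro i
    apply Fintype.card_eq.1
    rw [Fintype.card_subtype, Fintype.card_subtype]
    have := h (s.symm i)
    rw [Equiv.apply_symm_apply] at this
    rw [← this]
    congr 1
    ext x
    simp [Equiv.eq_symm_apply]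
  have e0 := fun i => (h1 i).some
  let e : Equiv.Perm (Fin n) := Equiv.ofFiberEquiv (f := fun x => s (r x)) (g := r') e0
  have he : ∀ x, r' (e x) = s (r x) := fun x => Equiv.ofFiberEquiv_map (f := fun x => s (r x)) (g := r') e0 x
  have hi : ∀ y, e (e⁻¹ y) = y := fun y => e.apply_symm_apply y
  have key : HR r' = (HR r).map (MulAut.conj e).toEquiv.toEmbedding := by
    ext g
    rw [Finset.mem_map_equiv, mem_HR, mem_HR]
    have e1 : (MulAut.conj e).toEquiv.symm g = e⁻¹ * g * e := rfl
    rw [e1]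
    constructor
    · intro hg x
      apply s.injective
      rw [← he, ← he, Equiv.Perm.mul_apply, Equiv.Perm.mul_apply, hi, hg]
    · intro hg x
      have := congrArg s (hg (e⁻¹ x))
      rw [← he, ← he, Equiv.Perm.mul_apply, Equiv.Perm.mul_apply, hi,
        hi] at this
      exact this
  rw [AV, AV, key, Finset.card_map, Finset.sum_map]
  congr 1
  apply Finset.sum_congr rfl
  intro g _
  have e1 : (MulAut.conj e).toEquiv.toEmbedding g = e * g * e⁻¹ := rfl
  rw [e1, Equiv.Perm.cycleType_conj]

lemma HR_stab {m : ℕ} (r : Fin (m + 1) → ℕ) (j : Fin (m + 1)) :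
    (HR r).filter (fun g => g j = j) = (HR (fun x => r (j.succAbove x))).map ⟨iota j, iota_injective j⟩ := by
  ext g
  rw [Finset.mem_filter, Finset.mem_map, mem_HR]
  constructor
  · rintro ⟨hg, hj⟩
    obtain ⟨h, rfl⟩ := iota_surj j g hj
    refine ⟨h, ?_, rfl⟩
    rw [mem_HR]
    intro x
    rw [← iota_succAbove, hg]
  · rintro ⟨h, hh, rfl⟩
    rw [mem_HR] at hh
    refine ⟨?_, iota_self j h⟩
    intro x
    change r (iota j h x) = _
    by_cases hx : x = j
    · rw [hx, iota_self]
    · obtain ⟨y, rfl⟩ := Fin.exists_succAbove_eq hx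
      rw [iota_succAbove, hh]

lemma HR_card {m : ℕ} (r : Fin (m + 1) → ℕ) (j : Fin (m + 1)) :
    (HR r).card = (Finset.univ.filter (fun x => r x = r j)).card * (HR (fun x => r (j.succAbove x))).card := by
  have h1 : (HR (fun x => r (j.succAbove x))).card = ((HR r).filter (fun g => g j = j)).card := by
    rw [HR_stab, Finset.card_map]
  rw [h1, Finset.card_eq_sum_card_fiberwise (f := fun g : Equiv.Perm (Fin (m + 1)) => g j)
    (t := Finset.univ.filter (fun x => r x = r j))]
  · rw [← smul_eq_mul, ← Finset.sum_const]
    apply Finset.sum_congr rfl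
    intro y hy
    simp only [Finset.mem_filter, Finset.mem_univ, true_and] at hy
    have hsw : ∀ x, r (Equiv.swap j y x) = r x := by
      intro x
      rw [Equiv.swap_apply_def]
      split_ifs with h2 h3
      · rw [h2, hy]
      · rw [h3, hy]
      · rfl
    apply Finset.card_bij' (fun g _ => Equiv.swap j y * g) (fun g _ => Equiv.swap j y * g)
    · intro g hg
      simp only [Finset.mem_filter, mem_HR] at hg ⊢
      refine ⟨fun x => ?_, ?_⟩
      · rw [Equiv.Perm.mul_apply, hsw, hg.1]
      · rw [Equiv.Perm.mul_apply, hg.2, Equiv.swap_apply_right]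
    · intro g hg
      simp only [Finset.mem_filter, mem_HR] at hg ⊢
      refine ⟨fun x => ?_, ?_⟩
      · rw [Equiv.Perm.mul_apply, hsw, hg.1]
      · rw [Equiv.Perm.mul_apply, hg.2, Equiv.swap_apply_left]
    · intro g _
      simp [← mul_assoc]
    · intro g _
      simp [← mul_assoc]
  · intro g hg
    have := mem_HR.1 (Finset.mem_coe.1 hg) j
    simpa using this

lemma HR_pos {n : ℕ} (r : Fin n → ℕ) : (HR r).card ≠ 0 := by
  apply Finset.card_ne_zero_of_mem (a := 1)
  rw [mem_HR]
  intro x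
  rfl

lemma AV_fix {m : ℕ} (r : Fin (m + 1) → ℕ) (c : Multiset ℕ → ℂ) :
    AV r (fun s => (((m + 1 : ℕ) : ℂ) - (s.sum : ℂ)) * c s)
      = ∑ j, ((Finset.univ.filter (fun x => r x = r j)).card : ℂ)⁻¹ * AV (fun x => r (j.succAbove x)) c := by
  rw [AV, sum_fix_mul, Finset.mul_sum]
  apply Finset.sum_congr rfl
  intro j _
  rw [HR_stab, Finset.sum_map, AV, ← mul_assoc, HR_card r j, Nat.cast_mul, mul_inv]
  congr 1
  apply Finset.sum_congr rfl
  intro h _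
  change c (iota j h).cycleType = _
  rw [iota_cycleType]

lemma rowPartialSum_succ (lam : YoungDiagram) (i : ℕ) :
    rowPartialSum lam (i + 1) = rowPartialSum lam i + lam.rowLen i := Finset.sum_range_succ _ _

lemma rowPartialSum_mono (lam : YoungDiagram) : Monotone (rowPartialSum lam) := by
  apply monotone_nat_of_le_succ
  intro n
  rw [rowPartialSum_succ]
  omega

lemma rowIndex_spec (lam : YoungDiagram) (x : ℕ) (hx : x < lam.card) :
    rowPartialSum lam (rowIndex lam x) ≤ x ∧ x < rowPartialSum lam (rowIndex lam x + 1) := by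
  have hex : ∃ k, x < rowPartialSum lam (k + 1) := by
    refine ⟨lam.card, ?_⟩
    rw [rowPartialSum_of_le]
    · exact hx
    · have := colLen_le_card lam 0
      omega
  set k := Nat.find hex with hk
  have h1 : x < rowPartialSum lam (k + 1) := Nat.find_spec hex
  have h2 : ∀ i, i < k → rowPartialSum lam (i + 1) ≤ x := fun i hi => not_lt.1 (Nat.find_min hex hi)
  have h3 : rowPartialSum lam k ≤ x := by
    rcases Nat.eq_zero_or_pos k with h | h
    · rw [h]; simp [rowPartialSum]
    · have := h2 (k - 1) (by omega)
      rwa [Nat.sub_add_cancel h] at this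
  have hpos : ∀ i, i ≤ k → 1 ≤ lam.rowLen i := by
    intro i hi
    have := lam.rowLen_anti i k hi
    have := rowPartialSum_succ lam k
    omega
  have hge : ∀ i, i ≤ k → i ≤ rowPartialSum lam i := by
    intro i hi
    induction i with
    | zero => omega
    | succ i ih =>
      rw [rowPartialSum_succ]
      have := ih (by omega)
      have := hpos i (by omega)
      omega
  have hidx : rowIndex lam x = k := by
    rw [rowIndex]
    have : ((Finset.range (x + 1)).filter fun i => rowPartialSum lam (i + 1) ≤ x) = Finset.range k := by
      ext i
      simp only [Finset.mem_filter, Finset.mem_range]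
      constructor
      · rintro ⟨-, h⟩
        by_contra hc
        have := rowPartialSum_mono lam (show k + 1 ≤ i + 1 by omega)
        omega
      · intro hi
        refine ⟨?_, h2 i hi⟩
        have := hge k le_rfl
        omega
    rw [this, Finset.card_range]
  rw [hidx]
  exact ⟨h3, h1⟩

lemma rowIndex_iff (lam : YoungDiagram) (x i : ℕ) (hx : x < lam.card) :
    rowIndex lam x = i ↔ rowPartialSum lam i ≤ x ∧ x < rowPartialSum lam (i + 1) := by
  have h := rowIndex_spec lam x hx
  constructor
  · rintro rfl
    exact h
  · rintro ⟨h1, h2⟩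
    by_contra hne
    rcases Nat.lt_or_gt_of_ne hne with hlt | hlt
    · have := rowPartialSum_mono lam (show rowIndex lam x + 1 ≤ i by omega)
      omega
    · have := rowPartialSum_mono lam (show i + 1 ≤ rowIndex lam x by omega)
      omega

lemma fib_card (n : ℕ) (lam : YoungDiagram) (hlam : lam.card = n) (i : ℕ) :
    (Finset.univ.filter (fun x => ridx n lam x = i)).card = lam.rowLen i := by
  have h1 : (Finset.univ.filter (fun x => ridx n lam x = i)).map Fin.valEmbedding
      = Finset.Ico (rowPartialSum lam i) (rowPartialSum lam (i + 1)) := by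
    ext x
    simp only [Finset.mem_map, Finset.mem_Ico]
    constructor
    · rintro ⟨y, hy, rfl⟩
      exact (rowIndex_iff lam y i (by rw [hlam]; exact y.2)).1 (Finset.mem_filter.1 hy).2
    · intro h
      have h2 := rowPartialSum_le_card lam (i + 1)
      have hx : x < lam.card := by omega
      exact ⟨⟨x, hlam ▸ hx⟩, Finset.mem_filter.2 ⟨Finset.mem_univ _, (rowIndex_iff lam x i hx).2 h⟩, rfl⟩
  rw [← Finset.card_map Fin.valEmbedding, h1, Nat.card_Ico, rowPartialSum_succ]
  omega

lemma Mmult_eq_AV (n : ℕ) (ka th : YoungDiagram) : Mmult n ka th = AV (ridx n th) (cc n ka) := by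
  rw [Mmult_eq_avg, ← avg_ind]
  simp only [cc_cycleType]

def Comp (lam ga : YoungDiagram) (j : ℕ) : Prop :=
  ∃ i, ga.rowLen i + 1 = lam.rowLen i ∧ lam.rowLen j = lam.rowLen i

lemma lhs_eq (m : ℕ) (lam rho : YoungDiagram) (hlam : lam.card = m + 1) (hrho : rho.card = m) :
    ∑ mu ∈ Finset.univ.filter (fun mu : YD (m + 1) => Covers mu rho), Mmult (m + 1) mu lam =
      ∑ j, (lam.rowLen (ridx (m + 1) lam j) : ℂ)⁻¹ *
        AV (fun x => ridx (m + 1) lam (j.succAbove x)) (cc m rho) := by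
  simp only [Mmult_eq_avg]
  rw [← avg_sum]
  simp only [← Finset.mul_sum, sum_covers m rho hrho]
  rw [avg_ind (m + 1) lam (fun s => (((m + 1 : ℕ) : ℂ) - (s.sum : ℂ)) * cc m rho s), AV_fix]
  simp only [fib_card (m + 1) lam hlam]

lemma covers_unique {lam ga : YoungDiagram} (hc : Covers lam ga) {i : ℕ}
    (hi : ga.rowLen i + 1 = lam.rowLen i) : ∀ j, j ≠ i → ga.rowLen j = lam.rowLen j := by
  obtain ⟨a, h1, h2⟩ := hc
  by_cases h : i = a
  · subst h; exact h2
  · have := h2 i h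
    omega

lemma AV_comp (m : ℕ) (lam ga : YoungDiagram) (hlam : lam.card = m + 1) (hga : ga.card = m)
    (hc : Covers lam ga) (j : Fin (m + 1)) (hj : Comp lam ga (ridx (m + 1) lam j)) (c : Multiset ℕ → ℂ) :
    AV (fun x => ridx (m + 1) lam (j.succAbove x)) c = AV (ridx m ga) c := by
  obtain ⟨i, h1, h2⟩ := hj
  have h3 := covers_unique hc h1
  set a := ridx (m + 1) lam j with ha
  apply AV_congr _ _ _ (Equiv.swap a i)
  intro k
  rw [fib_card m ga hga]
  have h4 := fib_card (m + 1) lam hlam k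
  rw [Finset.card_filter, Fin.sum_univ_succAbove _ j, ← Finset.card_filter, ← ha] at h4
  rw [Equiv.swap_apply_def]
  by_cases hka : k = a
  · subst hka
    simp at h4 ⊢
    omega
  · rw [if_neg (fun e => hka e.symm)] at h4
    rw [if_neg hka]
    by_cases hki : k = i
    · subst hki
      have := h3 a (fun e => hka e.symm)
      simp
      omega
    · rw [if_neg hki, h3 k hki]
      omega

lemma exists_comp (m : ℕ) (lam : YoungDiagram) (hlam : lam.card = m + 1) (i : ℕ) (hi : 1 ≤ lam.rowLen i) :
    ∃ ga : YD m, Covers lam ga ∧ Comp lam ga i := by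
  have hex : ∃ k, lam.rowLen k < lam.rowLen i :=
    ⟨lam.card, by rw [rowLen_zero_of_le lam le_rfl]; omega⟩
  obtain ⟨k, hk, hmin⟩ : ∃ k, lam.rowLen k < lam.rowLen i ∧ ∀ l, l < k → ¬ lam.rowLen l < lam.rowLen i :=
    ⟨Nat.find hex, Nat.find_spec hex, fun l hl => Nat.find_min hex hl⟩
  have hik : i < k := by
    by_contra h
    have := lam.rowLen_anti k i (by omega)
    omega
  obtain ⟨a, rfl⟩ : ∃ a, k = a + 1 := ⟨k - 1, by omega⟩
  have h1 := hmin a (by omega)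
  have h2 := lam.rowLen_anti i a (by omega)
  obtain ⟨ga, hga⟩ := exists_yd (fun l => if l = a then lam.rowLen a - 1 else lam.rowLen l) (by
    apply antitone_nat_of_succ_le
    intro n
    have h1 := lam.rowLen_anti n (n + 1) (by omega)
    by_cases hn : n + 1 = a
    · subst hn
      simp
      omega
    · rw [if_neg hn]
      split_ifs with h
      · subst h; omega
      · exact h1) (lam.card + a + 1) (by
        rw [if_neg (by omega)]
        exact rowLen_zero_of_le lam (by omega))
  have e1 : ga.rowLen a + 1 = lam.rowLen a := by
    rw [hga, if_pos rfl]; omega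
  have hc : Covers lam ga := ⟨a, e1, fun j hj => by rw [hga, if_neg hj]⟩
  exact ⟨⟨ga, by have := covers_card hc; omega⟩, hc, a, e1, by omega⟩

lemma comp_unique {lam ga gb : YoungDiagram} (ha : Covers lam ga) (hb : Covers lam gb) {i : ℕ}
    (ca : Comp lam ga i) (cb : Comp lam gb i) : ga = gb := by
  obtain ⟨a, a1, a2⟩ := ca
  obtain ⟨b, b1, b2⟩ := cb
  have a3 := covers_unique ha a1
  have b3 := covers_unique hb b1
  have hab : a = b := by
    by_contra hne
    rcases Nat.lt_or_gt_of_ne hne with h | h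
    · have := ga.rowLen_anti a b h.le
      have := a3 b (by omega)
      omega
    · have := gb.rowLen_anti b a h.le
      have := b3 a (by omega)
      omega
  subst hab
  apply yd_ext_rowLen
  intro k
  by_cases hk : k = a
  · subst hk; omega
  · rw [a3 k hk, b3 k hk]

lemma ridx_pos (n : ℕ) (lam : YoungDiagram) (hlam : lam.card = n) (j : Fin n) :
    1 ≤ lam.rowLen (ridx n lam j) := by
  rw [← fib_card n lam hlam]
  exact Finset.card_pos.2 ⟨j, by simp⟩

lemma cCoeff_eq (m : ℕ) (lam ga : YoungDiagram) (hlam : lam.card = m) :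
    ∑ j : Fin m, (if Comp lam ga (ridx m lam j) then (lam.rowLen (ridx m lam j) : ℂ)⁻¹ else 0)
      = cCoeff lam ga := by
  have hpos : ∀ i, Comp lam ga i → 1 ≤ lam.rowLen i := by
    rintro i ⟨k, h1, h2⟩
    omega
  have hlt : ∀ i, 1 ≤ lam.rowLen i → i < m := by
    intro i hi
    by_contra h
    have := rowLen_zero_of_le lam (i := i) (by omega)
    omega
  have hset : cCoeff lam ga = ((Finset.range m).filter (Comp lam ga)).card := by
    rw [← Set.ncard_coe_finset]
    unfold cCoeff
    congr 1
    ext i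
    simp only [Finset.coe_filter, Finset.mem_range]
    constructor
    · intro h
      exact ⟨hlt i (hpos i h), h⟩
    · exact fun h => h.2
  rw [hset, ← Finset.sum_fiberwise_of_maps_to (s := Finset.univ) (t := Finset.range m) (g := ridx m lam)
    (fun j _ => Finset.mem_range.2 (hlt _ (ridx_pos m lam hlam j))), Finset.card_filter, Nat.cast_sum]
  apply Finset.sum_congr rfl
  intro i _
  rw [Finset.sum_congr rfl (g := fun _ => if Comp lam ga i then (lam.rowLen i : ℂ)⁻¹ else 0),
    Finset.sum_const, fib_card m lam hlam, nsmul_eq_mul]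
  · split_ifs with h
    · have := hpos i h
      rw [mul_inv_cancel₀, Nat.cast_one]
      exact_mod_cast (by omega : lam.rowLen i ≠ 0)
    · simp
  · intro j hj
    rw [(Finset.mem_filter.1 hj).2]

lemma main_aux (m : ℕ) (lam rho : YoungDiagram) (hlam : lam.card = m + 1) (hrho : rho.card = m) :
    ∑ mu ∈ Finset.univ.filter (fun mu : YD (m + 1) => Covers mu rho), Mmult (m + 1) mu lam =
      ∑ ga ∈ Finset.univ.filter (fun ga : YD m => Covers lam ga), (cCoeff lam ga : ℂ) * Mmult m rho ga := by
  rw [lhs_eq m lam rho hlam hrho]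
  simp only [← cCoeff_eq (m + 1) lam _ hlam, Finset.sum_mul]
  rw [Finset.sum_comm]
  apply Finset.sum_congr rfl
  intro j _
  obtain ⟨ga, hc, hcomp⟩ := exists_comp m lam hlam _ (ridx_pos (m + 1) lam hlam j)
  rw [Finset.sum_eq_single ga]
  · rw [if_pos hcomp, Mmult_eq_AV, AV_comp m lam ga hlam ga.2 hc j hcomp]
  · intro gb hb hne
    rw [if_neg, zero_mul]
    intro hcb
    exact hne (Subtype.ext (comp_unique (Finset.mem_filter.1 hb).2 hc hcb hcomp))
  · intro h
    exact absurd hc (by simpa using h)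

lemma finsum_yd (n : ℕ) (P : YoungDiagram → Prop) (f : YoungDiagram → ℂ) :
    ∑ᶠ (mu : YoungDiagram) (_ : mu.card = n ∧ P mu), f mu
      = ∑ mu ∈ Finset.univ.filter (fun mu : YD n => P mu), f mu := by
  have h : ∑ mu ∈ Finset.univ.filter (fun mu : YD n => P mu), f mu
      = ∑ mu ∈ (Finset.univ.filter (fun mu : YD n => P mu)).map (Function.Embedding.subtype _), f mu := by
    rw [Finset.sum_map]; rfl
  rw [h, ← finsum_mem_coe_finset]
  apply finsum_congr
  intro mu
  have : (mu.card = n ∧ P mu) ↔ mu ∈ (((Finset.univ.filter (fun mu : YD n => P mu)).map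
      (Function.Embedding.subtype _) : Finset YoungDiagram) : Set YoungDiagram) := by
    simp [and_comm]
  simp only [this]

/-- Recurrence for the multiplicities of Specht modules in induced representations:
`Σ_{μ ⊢ n, μ ≻ ρ} M(μ,λ) = Σ_{γ ⊢ n-1, γ ≺ λ} c(λ,γ) · M(ρ,γ)`. -/
theorem mult_recurrence (n : ℕ) (hn : 1 ≤ n) (lam rho : YoungDiagram)
    (hlam : lam.card = n) (hrho : rho.card = n - 1) :
    ∑ᶠ (mu : YoungDiagram) (_ : mu.card = n ∧ Covers mu rho), Mmult n mu lam =
      ∑ᶠ (ga : YoungDiagram) (_ : ga.card = n - 1 ∧ Covers lam ga),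
        (cCoeff lam ga : ℂ) * Mmult (n - 1) rho ga := by
  obtain ⟨m, rfl⟩ : ∃ m, n = m + 1 := ⟨n - 1, by omega⟩
  rw [Nat.add_sub_cancel] at hrho ⊢
  rw [finsum_yd (m + 1) (fun mu => Covers mu rho) (fun mu => Mmult (m + 1) mu lam),
    finsum_yd m (fun ga => Covers lam ga) (fun ga => (cCoeff lam ga : ℂ) * Mmult m rho ga)]
  exact main_aux m lam rho hlam hrho

end
end

section
/- Let λ ⊢ n and ρ ⊢ n−1 be arbitrary partitions. Then the Kostka numbers satisfy the recurrence Σ_{μ ⊢ n, μ ≻ ρ} K(μ,λ) = Σ_{γ ⊢ n−1, γ ≺ λ} c(λ,γ) · K(ρ,γ). -/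
open scoped Classical

noncomputable section

open MvPolynomial

/-- `T` has weight `lam`: the entry `i` occurs in `T` exactly `lam.rowLen i` times. -/
def HasWeight {mu : YoungDiagram} (T : SemistandardYoungTableau mu) (lam : YoungDiagram) : Prop :=
  ∀ i : ℕ, (mu.cells.filter fun c => T c.1 c.2 = i).card = lam.rowLen i

/-- The Kostka number `K(μ,λ)`: the number of semistandard Young tableaux of shape `μ`
and weight `λ`. -/
noncomputable def kostka (mu lam : YoungDiagram) : ℕ :=
  Nat.card {T : SemistandardYoungTableau mu // HasWeight T lam}

namespace KR

lemma rowLen_zero (m : YoungDiagram) {i : ℕ} (h : m.card ≤ i) : m.rowLen i = 0 := by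
  by_contra hne
  have h0 : 0 < m.rowLen i := Nat.pos_of_ne_zero hne
  have : ((Finset.range (i+1)).image (fun a => (a, 0))) ⊆ m.cells := by
    intro c hc
    simp only [Finset.mem_image, Finset.mem_range] at hc
    obtain ⟨a, ha, rfl⟩ := hc
    rw [YoungDiagram.mem_cells]
    exact m.up_left_mem (by omega : a ≤ i) le_rfl (YoungDiagram.mem_iff_lt_rowLen.2 h0)
  have h2 := Finset.card_le_card this
  rw [Finset.card_image_of_injective _ (by intro a b hab; simpa using hab)] at h2
  simp at h2
  unfold YoungDiagram.card at h
  omega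

lemma ext_row {m n : YoungDiagram} (h : ∀ i, m.rowLen i = n.rowLen i) : m = n := by
  apply YoungDiagram.ext
  ext ⟨i, j⟩
  rw [YoungDiagram.mem_cells, YoungDiagram.mem_cells, YoungDiagram.mem_iff_lt_rowLen,
    YoungDiagram.mem_iff_lt_rowLen, h]

lemma card_eq (m : YoungDiagram) {N : ℕ} (h : ∀ i, N ≤ i → m.rowLen i = 0) :
    m.card = ∑ i ∈ Finset.range N, m.rowLen i := by
  unfold YoungDiagram.card
  rw [Finset.card_eq_sum_card_fiberwise (f := Prod.fst) (t := Finset.range N)]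
  · apply Finset.sum_congr rfl
    intro i _
    rw [YoungDiagram.rowLen_eq_card]
    rfl
  · intro c hc
    obtain ⟨i, j⟩ := c
    have : (i, j) ∈ m := by simpa using hc
    rw [YoungDiagram.mem_iff_lt_rowLen] at this
    by_contra hi
    have := h i (by simpa using hi)
    omega

lemma exists_yd (f : ℕ → ℕ) (hf : ∀ i, f (i+1) ≤ f i) (N : ℕ) (hN : f N = 0) :
    ∃ g : YoungDiagram, ∀ i, g.rowLen i = f i := by
  have hf' : Antitone f := antitone_nat_of_succ_le hf
  have hlow : IsLowerSet
      (((Finset.range N ×ˢ Finset.range (f 0)).filter (fun c => c.2 < f c.1) : Finset (ℕ × ℕ)) :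
        Set (ℕ × ℕ)) := by
    rintro ⟨a, b⟩ ⟨c, d⟩ hle h
    simp only [Finset.coe_filter, Finset.mem_product, Finset.mem_range, Set.mem_ofPred_eq] at h ⊢
    obtain ⟨h1, h2⟩ : c ≤ a ∧ d ≤ b := by simpa using hle
    have := hf' h1
    omega
  refine ⟨⟨_, hlow⟩, ?_⟩
  intro i
  refine eq_of_forall_lt_iff (fun j => ?_)
  rw [← YoungDiagram.mem_iff_lt_rowLen, YoungDiagram.mem_mk]
  simp only [Finset.mem_filter, Finset.mem_product, Finset.mem_range]
  refine ⟨fun h => h.2, fun h => ⟨⟨?_, ?_⟩, h⟩⟩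
  · by_contra hc
    have := hf' (not_lt.1 hc)
    omega
  · have := hf' (Nat.zero_le i)
    omega

def ofFun (f : ℕ → ℕ) : YoungDiagram :=
  if h : ∃ g : YoungDiagram, ∀ i, g.rowLen i = f i then h.choose else ⊥

lemma rowLen_ofFun {f : ℕ → ℕ} (hf : ∀ i, f (i+1) ≤ f i) (N : ℕ) (hN : f N = 0) (i : ℕ) :
    (ofFun f).rowLen i = f i := by
  have h := exists_yd f hf N hN
  unfold ofFun
  rw [dif_pos h]
  exact h.choose_spec i

lemma ofFun_eq {f : ℕ → ℕ} {g : YoungDiagram} (h : ∀ i, g.rowLen i = f i) : ofFun f = g := by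
  have h' : ∃ g : YoungDiagram, ∀ i, g.rowLen i = f i := ⟨g, h⟩
  unfold ofFun
  rw [dif_pos h']
  apply ext_row
  intro i
  rw [h'.choose_spec i, h]

lemma finite_card_le (n : ℕ) : {m : YoungDiagram | m.card ≤ n}.Finite := by
  have hinj : Function.Injective (fun m : YoungDiagram => m.cells) := by
    intro a b h
    exact YoungDiagram.ext h
  apply Set.Finite.subset (Set.Finite.preimage hinj.injOn
    (Finset.finite_toSet (Finset.powerset (Finset.range n ×ˢ Finset.range n))))
  intro m hm
  simp only [Set.mem_preimage, Finset.mem_coe, Finset.mem_powerset]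
  rintro ⟨i, j⟩ hc
  have hc' : (i, j) ∈ m := by simpa using hc
  have h1 : m.card ≤ n := hm
  simp only [Finset.mem_product, Finset.mem_range]
  constructor
  · by_contra hi
    have := rowLen_zero m (i := i) (by omega)
    rw [YoungDiagram.mem_iff_lt_rowLen] at hc'
    omega
  · by_contra hi
    have := rowLen_zero m.transpose (i := j) (by
      have : m.transpose.card = m.card := by
        unfold YoungDiagram.card YoungDiagram.transpose
        simp
      omega)
    have h2 : (j, i) ∈ m.transpose := by simpa [YoungDiagram.mem_transpose] using hc'
    rw [YoungDiagram.mem_iff_lt_rowLen] at h2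
    omega

def YD (n : ℕ) : Finset YoungDiagram := (finite_card_le n).toFinset

lemma mem_YD {n : ℕ} {m : YoungDiagram} : m ∈ YD n ↔ m.card ≤ n := by simp [YD]

def IL (m n : ℕ → ℕ) : Prop := ∀ i, n i ≤ m i ∧ m (i+1) ≤ n i

def P (k : ℕ) (f : YoungDiagram → ℕ) (m : YoungDiagram) : ℕ :=
  ∑ n ∈ (YD m.card).filter (fun n => IL m.rowLen n.rowLen ∧ n.card + k = m.card), f n

def D (f : YoungDiagram → ℕ) (r : YoungDiagram) : ℕ :=
  ∑ m ∈ (YD (r.card+1)).filter (fun m => Covers m r), f m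

lemma row_cell_le (m n : YoungDiagram) (h : ∀ i, n.rowLen i ≤ m.rowLen i) : n ≤ m := by
  rintro ⟨i, j⟩ hc
  have hc' : (i, j) ∈ n := hc
  show (i, j) ∈ m
  rw [YoungDiagram.mem_iff_lt_rowLen] at *
  exact lt_of_lt_of_le hc' (h i)

lemma card_mono (m n : YoungDiagram) (h : ∀ i, n.rowLen i ≤ m.rowLen i) : n.card ≤ m.card :=
  Finset.card_le_card (YoungDiagram.cells_subset_iff.2 (row_cell_le m n h))

lemma covers_card {m r : YoungDiagram} (h : Covers m r) : m.card = r.card + 1 := by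
  obtain ⟨i, hi, hj⟩ := h
  have hz1 : ∀ a, m.card + r.card + i + 1 ≤ a → m.rowLen a = 0 := fun a ha => rowLen_zero m (by omega)
  have hz2 : ∀ a, m.card + r.card + i + 1 ≤ a → r.rowLen a = 0 := fun a ha => rowLen_zero r (by omega)
  have e1 := card_eq m hz1
  have e2 := card_eq r hz2
  rw [e1]
  conv_rhs => rw [e2]
  have : ∀ a, m.rowLen a = r.rowLen a + if a = i then 1 else 0 := by
    intro a
    by_cases h : a = i
    · subst h; simp [hi]
    · simp [h, hj a h]
  simp only [this, Finset.sum_add_distrib]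
  rw [Finset.sum_ite_eq']
  rw [if_pos]
  rw [Finset.mem_range]
  omega

/-! symmetry -/

def flipF (m k n : ℕ → ℕ) (i : ℕ) : ℕ :=
  max (k i) (m (i+1)) + (if i = 0 then m 0 else min (m i) (k (i-1))) - n i

lemma flipF_bd {m k n : ℕ → ℕ} (h1 : IL m n) (h2 : IL n k) (i : ℕ) :
    flipF m k n i + n i = max (k i) (m (i+1)) + (if i = 0 then m 0 else min (m i) (k (i-1))) ∧
    max (k i) (m (i+1)) ≤ flipF m k n i ∧
    flipF m k n i ≤ (if i = 0 then m 0 else min (m i) (k (i-1))) := by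
  have a := h1 i
  have b := h2 i
  unfold flipF
  rcases i with _ | i
  · simp at *; omega
  · have c := h2 i
    simp at *; omega

lemma flipF_IL {m k n : ℕ → ℕ} (h1 : IL m n) (h2 : IL n k) :
    IL m (flipF m k n) ∧ IL (flipF m k n) k := by
  constructor
  · intro i
    obtain ⟨_, b, c⟩ := flipF_bd h1 h2 i
    rcases i with _ | i
    · simp at *; omega
    · simp at *; omega
  · intro i
    obtain ⟨_, b, c⟩ := flipF_bd h1 h2 i
    obtain ⟨_, b', c'⟩ := flipF_bd h1 h2 (i+1)
    simp at *; omega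

lemma IL_anti {m n : ℕ → ℕ} (h : IL m n) : (∀ i, m (i+1) ≤ m i) ∧ (∀ i, n (i+1) ≤ n i) :=
  ⟨fun i => (h i).2.trans (h i).1, fun i => (h (i+1)).1.trans (h i).2⟩

lemma flipF_flipF {m k n : ℕ → ℕ} (h1 : IL m n) (h2 : IL n k) :
    flipF m k (flipF m k n) = n := by
  funext i
  have := (flipF_bd h1 h2 i).1
  rw [flipF]
  omega

lemma flipF_sum {m k n : ℕ → ℕ} (h1 : IL m n) (h2 : IL n k) (N : ℕ) :
    ∑ i ∈ Finset.range (N+1), flipF m k n i + ∑ i ∈ Finset.range (N+1), n i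
      + min (k N) (m (N+1)) = ∑ i ∈ Finset.range (N+1), k i + ∑ i ∈ Finset.range (N+2), m i := by
  induction N with
  | zero =>
    have := (flipF_bd h1 h2 0).1
    simp [Finset.sum_range_succ] at *
    omega
  | succ N ih =>
    have := (flipF_bd h1 h2 (N+1)).1
    rw [Finset.sum_range_succ _ (N+1), Finset.sum_range_succ _ (N+1), Finset.sum_range_succ _ (N+1),
      Finset.sum_range_succ _ (N+2)]
    rw [if_neg (by omega), Nat.add_sub_cancel] at this
    have e : N + 1 + 1 = N + 2 := rfl
    rw [e] at *
    omega

lemma flip_spec {m n k : YoungDiagram} (h1 : IL m.rowLen n.rowLen) (h2 : IL n.rowLen k.rowLen) :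
    (ofFun (flipF m.rowLen k.rowLen n.rowLen)).rowLen = flipF m.rowLen k.rowLen n.rowLen := by
  obtain ⟨a, b⟩ := flipF_IL h1 h2
  funext i
  apply rowLen_ofFun (IL_anti a).2 (m.card)
  have := (a m.card).1
  have := rowLen_zero m le_rfl
  omega

lemma flip_card {m n k : YoungDiagram} (h1 : IL m.rowLen n.rowLen) (h2 : IL n.rowLen k.rowLen) :
    (ofFun (flipF m.rowLen k.rowLen n.rowLen)).card + n.card = m.card + k.card := by
  have hs := flip_spec h1 h2
  obtain ⟨a, b⟩ := flipF_IL h1 h2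
  have hm : ∀ i, m.card ≤ i → m.rowLen i = 0 := fun i hi => rowLen_zero m hi
  have hn : ∀ i, m.card ≤ i → n.rowLen i = 0 := fun i hi => by
    have := hm i hi; have := (h1 i).1; omega
  have hk : ∀ i, m.card ≤ i → k.rowLen i = 0 := fun i hi => by
    have := hn i hi; have := (h2 i).1; omega
  have hF : ∀ i, m.card ≤ i → (ofFun (flipF m.rowLen k.rowLen n.rowLen)).rowLen i = 0 := fun i hi => by
    rw [hs]
    have := hm i hi; have := (a i).1; omega
  rw [card_eq _ (N := m.card + 1) (fun i hi => hF i (by omega)),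
    card_eq n (N := m.card + 1) (fun i hi => hn i (by omega)),
    card_eq k (N := m.card + 1) (fun i hi => hk i (by omega)), hs]
  have h3 := flipF_sum h1 h2 m.card
  have h4 := card_eq m (N := m.card + 2) (fun i hi => hm i (by omega))
  have h5 := hk m.card le_rfl
  omega

lemma P_comm (a b : ℕ) (f : YoungDiagram → ℕ) (m : YoungDiagram) :
    P a (P b f) m = P b (P a f) m := by
  unfold P
  rw [Finset.sum_sigma', Finset.sum_sigma']
  have key : ∀ a b : ℕ, ∀ x : (Σ _ : YoungDiagram, YoungDiagram),
    x ∈ ((YD m.card).filter (fun n => IL m.rowLen n.rowLen ∧ n.card + a = m.card)).sigma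
      (fun n => (YD n.card).filter (fun k => IL n.rowLen k.rowLen ∧ k.card + b = n.card)) ↔
      IL m.rowLen x.1.rowLen ∧ x.1.card + a = m.card ∧ IL x.1.rowLen x.2.rowLen ∧
        x.2.card + b = x.1.card := by
    intro a b x
    simp only [Finset.mem_sigma, Finset.mem_filter, mem_YD]
    constructor
    · tauto
    · rintro ⟨h1, h2, h3, h4⟩
      exact ⟨⟨by omega, h1, h2⟩, by omega, h3, h4⟩
  let F : (Σ _ : YoungDiagram, YoungDiagram) → (Σ _ : YoungDiagram, YoungDiagram) :=
    fun x => ⟨ofFun (flipF m.rowLen x.2.rowLen x.1.rowLen), x.2⟩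
  have maps : ∀ a b : ℕ, ∀ x : (Σ _ : YoungDiagram, YoungDiagram),
      (IL m.rowLen x.1.rowLen ∧ x.1.card + a = m.card ∧ IL x.1.rowLen x.2.rowLen ∧
        x.2.card + b = x.1.card) →
      (IL m.rowLen (F x).1.rowLen ∧ (F x).1.card + b = m.card ∧ IL (F x).1.rowLen (F x).2.rowLen ∧
        (F x).2.card + a = (F x).1.card) := by
    rintro a b ⟨n, k⟩ ⟨h1, h2, h3, h4⟩
    dsimp only at *
    have := flip_card h1 h3
    obtain ⟨c, d⟩ := flipF_IL h1 h3
    have hs := flip_spec h1 h3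
    refine ⟨?_, ?_, ?_, ?_⟩ <;> dsimp only [F]
    · rw [hs]; exact c
    · omega
    · rw [hs]; exact d
    · omega
  have inv : ∀ a b : ℕ, ∀ x : (Σ _ : YoungDiagram, YoungDiagram),
      (IL m.rowLen x.1.rowLen ∧ x.1.card + a = m.card ∧ IL x.1.rowLen x.2.rowLen ∧
        x.2.card + b = x.1.card) → F (F x) = x := by
    rintro a b ⟨n, k⟩ ⟨h1, h2, h3, h4⟩
    dsimp only at *
    dsimp only [F]
    congr 1
    rw [flip_spec h1 h3, flipF_flipF h1 h3]
    exact ofFun_eq (fun _ => rfl)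
  refine Finset.sum_bij' (fun x _ => F x) (fun x _ => F x) ?_ ?_ ?_ ?_ ?_
  · intro x hx; rw [key] at hx ⊢; exact maps _ _ x hx
  · intro x hx; rw [key] at hx ⊢; exact maps _ _ x hx
  · intro x hx; rw [key] at hx; exact inv _ _ x hx
  · intro x hx; rw [key] at hx; exact inv _ _ x hx
  · intro x hx; rfl

def up (r : ℕ → ℕ) (i : ℕ) : ℕ → ℕ := fun j => r j + if j = i then 1 else 0
def dn (r : ℕ → ℕ) (i : ℕ) : ℕ → ℕ := fun j => r j - if j = i then 1 else 0

lemma up_self (r : ℕ → ℕ) (i : ℕ) : up r i i = r i + 1 := by simp [up]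
lemma up_ne (r : ℕ → ℕ) {i j : ℕ} (h : j ≠ i) : up r i j = r j := by simp [up, h]
lemma dn_self (r : ℕ → ℕ) (i : ℕ) : dn r i i = r i - 1 := by simp [dn]
lemma dn_ne (r : ℕ → ℕ) {i j : ℕ} (h : j ≠ i) : dn r i j = r j := by simp [dn, h]

lemma up_inj (r : ℕ → ℕ) {i j : ℕ} (h : up r i = up r j) : i = j := by
  by_contra hne
  have := congrFun h i
  rw [up_self, up_ne r hne] at this
  omega

lemma dn_inj (r : ℕ → ℕ) {i j : ℕ} (hi : 0 < r i) (h : dn r i = dn r j) : i = j := by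
  by_contra hne
  have := congrFun h i
  rw [dn_self, dn_ne r hne] at this
  omega

lemma IL_up_spec {r n : YoungDiagram} {i : ℕ} (h : IL (up r.rowLen i) n.rowLen) :
    (ofFun (up r.rowLen i)).rowLen = up r.rowLen i := by
  funext j
  apply rowLen_ofFun (IL_anti h).1 (r.card + i + 1)
  rw [up_ne _ (by omega)]
  exact rowLen_zero r (by omega)

lemma IL_dn_spec {r n : YoungDiagram} {i : ℕ} (h : IL r.rowLen (dn n.rowLen i)) :
    (ofFun (dn n.rowLen i)).rowLen = dn n.rowLen i := by
  funext j
  apply rowLen_ofFun (IL_anti h).2 (n.card)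
  have := rowLen_zero n (i := n.card) le_rfl
  unfold dn
  omega

lemma covers_up {m r : YoungDiagram} {i : ℕ} (h : m.rowLen = up r.rowLen i) : Covers m r :=
  ⟨i, by rw [h, up_self], fun j hj => by rw [h, up_ne _ hj]⟩

lemma covers_dn {m r : YoungDiagram} {i : ℕ} (hi : 0 < m.rowLen i) (h : r.rowLen = dn m.rowLen i) :
    Covers m r :=
  ⟨i, by rw [h, dn_self]; omega, fun j hj => by rw [h, dn_ne _ hj]⟩

lemma covers_iff {m r : YoungDiagram} (h : Covers m r) : ∃ i, 0 < m.rowLen i ∧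
    m.rowLen = up r.rowLen i ∧ r.rowLen = dn m.rowLen i := by
  obtain ⟨i, hi, hj⟩ := h
  refine ⟨i, by omega, ?_, ?_⟩
  · funext j
    by_cases h : j = i
    · subst h; rw [up_self, hi]
    · rw [up_ne _ h, hj j h]
  · funext j
    by_cases h : j = i
    · subst h; rw [dn_self]; omega
    · rw [dn_ne _ h, hj j h]

def A (r n : YoungDiagram) : Finset ℕ :=
  (Finset.range (n.card + 2)).filter (fun i => IL (up r.rowLen i) n.rowLen)
def B (r n : YoungDiagram) : Finset ℕ :=
  (Finset.range (n.card + 1)).filter (fun i => 0 < n.rowLen i ∧ IL r.rowLen (dn n.rowLen i))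

lemma mem_A {r n : YoungDiagram} {i : ℕ} : i ∈ A r n ↔ IL (up r.rowLen i) n.rowLen := by
  simp only [A, Finset.mem_filter, Finset.mem_range, and_iff_right_iff_imp]
  intro h
  by_contra hc
  obtain ⟨j, rfl⟩ : ∃ j, i = j + 1 := ⟨i - 1, by omega⟩
  have h1 := (h j).2
  rw [up_self] at h1
  have := rowLen_zero n (i := j) (by omega)
  omega

lemma mem_B {r n : YoungDiagram} {i : ℕ} :
    i ∈ B r n ↔ 0 < n.rowLen i ∧ IL r.rowLen (dn n.rowLen i) := by
  simp only [B, Finset.mem_filter, Finset.mem_range, and_iff_right_iff_imp]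
  rintro ⟨h, -⟩
  by_contra hc
  have := rowLen_zero n (i := i) (by omega)
  omega

lemma card_X (r n : YoungDiagram) :
    ((YD (r.card+1)).filter (fun m => Covers m r ∧ IL m.rowLen n.rowLen)).card = (A r n).card := by
  symm
  refine Finset.card_bij (fun i _ => ofFun (up r.rowLen i)) ?_ ?_ ?_
  · intro i hi
    rw [mem_A] at hi
    have hs := IL_up_spec hi
    have hc := covers_up hs
    rw [Finset.mem_filter, mem_YD, covers_card hc, hs]
    exact ⟨le_rfl, hc, hi⟩
  · intro i hi j hj h
    rw [mem_A] at hi hj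
    have h2 := congrArg YoungDiagram.rowLen h
    rw [IL_up_spec hi, IL_up_spec hj] at h2
    exact up_inj _ h2
  · intro m hm
    rw [Finset.mem_filter] at hm
    obtain ⟨-, hc, hi⟩ := hm
    obtain ⟨i, -, h, -⟩ := covers_iff hc
    refine ⟨i, ?_, ofFun_eq (fun j => by rw [h])⟩
    rw [mem_A, ← h]
    exact hi

lemma card_Y (r n : YoungDiagram) :
    ((YD r.card).filter (fun m => IL r.rowLen m.rowLen ∧ Covers n m)).card = (B r n).card := by
  symm
  refine Finset.card_bij (fun i _ => ofFun (dn n.rowLen i)) ?_ ?_ ?_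
  · intro i hi
    rw [mem_B] at hi
    have hs := IL_dn_spec hi.2
    have hc := covers_dn hi.1 hs
    rw [Finset.mem_filter, mem_YD]
    refine ⟨card_mono _ _ (fun j => ?_), ?_, hc⟩
    · rw [hs]; exact (hi.2 j).1
    · rw [hs]; exact hi.2
  · intro i hi j hj h
    rw [mem_B] at hi hj
    have h2 := congrArg YoungDiagram.rowLen h
    rw [IL_dn_spec hi.2, IL_dn_spec hj.2] at h2
    exact dn_inj _ hi.1 h2
  · intro m hm
    rw [Finset.mem_filter] at hm
    obtain ⟨-, hi, hc⟩ := hm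
    obtain ⟨i, hp, -, h⟩ := covers_iff hc
    refine ⟨i, ?_, ofFun_eq (fun j => by rw [h])⟩
    rw [mem_B, ← h]
    exact ⟨hp, hi⟩

lemma card_AB (r n : YoungDiagram) :
    (A r n).card = (B r n).card + if IL r.rowLen n.rowLen then 1 else 0 := by
  have hr : ∀ i, r.rowLen (i+1) ≤ r.rowLen i := fun i => r.rowLen_anti _ _ (Nat.le_succ i)
  have hn : ∀ i, n.rowLen (i+1) ≤ n.rowLen i := fun i => n.rowLen_anti _ _ (Nat.le_succ i)
  by_cases h : IL r.rowLen n.rowLen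
  · rw [if_pos h]
    have : A r n = insert 0 ((B r n).image Nat.succ) := by
      ext i
      rw [Finset.mem_insert, Finset.mem_image, mem_A]
      constructor
      · intro hi
        rcases i with _ | i
        · left; rfl
        · right
          refine ⟨i, ?_, rfl⟩
          rw [mem_B]
          have h1 := (hi i).2
          rw [up_self] at h1
          refine ⟨by omega, fun j => ?_⟩
          have := h j
          by_cases hj : j = i
          · subst hj; rw [dn_self]; omega
          · rw [dn_ne _ hj]; exact this
      · rintro (rfl | ⟨i, hi, rfl⟩)
        · intro j
          have := h j
          rw [up_ne _ (by omega : j + 1 ≠ 0)]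
          refine ⟨?_, this.2⟩
          unfold up; omega
        · rw [mem_B] at hi
          obtain ⟨hp, hi⟩ := hi
          intro j
          have := h j
          refine ⟨by unfold up; omega, ?_⟩
          by_cases hj : j = i
          · subst hj
            have h2 := (hi j).2
            rw [dn_self] at h2
            rw [Nat.succ_eq_add_one, up_self]; omega
          · rw [up_ne _ (by omega)]; exact this.2
    rw [this, Finset.card_insert_of_notMem (by simp), Finset.card_image_of_injective _ Nat.succ_injective]
  · rw [if_neg h, add_zero]
    congr 1
    ext i
    rw [mem_A, mem_B]
    constructor
    · intro hi
      have hv : n.rowLen i = r.rowLen i + 1 := by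
        by_contra hne
        apply h
        intro j
        have h1 := hi j
        have h3 : r.rowLen (j+1) ≤ up r.rowLen i (j+1) := by unfold up; omega
        refine ⟨?_, by omega⟩
        by_cases hj : j = i
        · subst hj; rw [up_self] at h1; omega
        · rw [up_ne _ hj] at h1; omega
      refine ⟨by omega, fun j => ?_⟩
      have h1 := hi j
      have h3 : r.rowLen (j+1) ≤ up r.rowLen i (j+1) := by unfold up; omega
      by_cases hj : j = i
      · subst hj
        have := hr j
        rw [dn_self]; omega
      · rw [up_ne _ hj] at h1
        rw [dn_ne _ hj]; omega
    · rintro ⟨hp, hi⟩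
      have hv : n.rowLen i = r.rowLen i + 1 := by
        by_contra hne
        apply h
        intro j
        have h1 := hi j
        by_cases hj : j = i
        · subst hj; rw [dn_self] at h1; omega
        · rw [dn_ne _ hj] at h1; omega
      intro j
      have h1 := hi j
      have h3 : dn n.rowLen i j ≤ n.rowLen j := by unfold dn; omega
      have h4 := hn j
      constructor
      · by_cases hj : j = i
        · subst hj; rw [up_self]; omega
        · rw [up_ne _ hj]; rw [dn_ne _ hj] at h1; omega
      · by_cases hj : j + 1 = i
        · subst hj; rw [up_self]; omega
        · rw [up_ne _ hj]; omega

lemma D_P_aux (k : ℕ) (f : YoungDiagram → ℕ) (r : YoungDiagram) :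
    D (P k f) r = P k (D f) r +
      ∑ n ∈ (YD (r.card+1)).filter (fun n => IL r.rowLen n.rowLen ∧ n.card + k = r.card + 1), f n := by
  have L1 : D (P k f) r = ∑ n ∈ (YD (r.card+1)).filter (fun n => n.card + k = r.card + 1),
      ∑ m ∈ (YD (r.card+1)).filter (fun m => Covers m r ∧ IL m.rowLen n.rowLen), f n := by
    unfold D P
    apply Finset.sum_comm'
    intro m n
    simp only [Finset.mem_filter, mem_YD]
    constructor
    · rintro ⟨⟨a, b⟩, c, d, e⟩
      have := covers_card b
      exact ⟨⟨a, b, d⟩, by omega, by omega⟩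
    · rintro ⟨⟨a, b, d⟩, c, e⟩
      have := covers_card b
      exact ⟨⟨a, b⟩, by omega, d, by omega⟩
  have L2 : P k (D f) r = ∑ n ∈ (YD (r.card+1)).filter (fun n => n.card + k = r.card + 1),
      ∑ m ∈ (YD r.card).filter (fun m => IL r.rowLen m.rowLen ∧ Covers n m), f n := by
    unfold D P
    apply Finset.sum_comm'
    intro m n
    simp only [Finset.mem_filter, mem_YD]
    constructor
    · rintro ⟨⟨a, b, c⟩, d, e⟩
      have := covers_card e
      exact ⟨⟨a, b, e⟩, by omega, by omega⟩
    · rintro ⟨⟨a, b, d⟩, c, e⟩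
      have := covers_card d
      exact ⟨⟨a, b, by omega⟩, by omega, d⟩
  have L3 : ∑ n ∈ (YD (r.card+1)).filter (fun n => IL r.rowLen n.rowLen ∧ n.card + k = r.card + 1), f n
      = ∑ n ∈ (YD (r.card+1)).filter (fun n => n.card + k = r.card + 1),
        if IL r.rowLen n.rowLen then f n else 0 := by
    rw [← Finset.sum_filter, Finset.filter_filter]
    apply Finset.sum_congr _ (fun _ _ => rfl)
    ext n
    simp only [Finset.mem_filter]
    tauto
  rw [L1, L2, L3, ← Finset.sum_add_distrib]
  apply Finset.sum_congr rfl
  intro n _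
  rw [Finset.sum_const, Finset.sum_const, card_X, card_Y, card_AB]
  split_ifs <;> simp [add_mul]

lemma D_P (k : ℕ) (f : YoungDiagram → ℕ) (r : YoungDiagram) :
    D (P k f) r = P k (D f) r + if 0 < k then P (k-1) f r else 0 := by
  rw [D_P_aux]
  congr 1
  split_ifs with h
  · unfold P
    apply Finset.sum_congr _ (fun _ _ => rfl)
    ext n
    simp only [Finset.mem_filter, mem_YD]
    constructor
    · rintro ⟨a, b, c⟩
      exact ⟨by omega, b, by omega⟩
    · rintro ⟨a, b, c⟩
      exact ⟨by omega, b, by omega⟩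
  · apply Finset.sum_eq_zero
    intro n hn
    simp only [Finset.mem_filter, mem_YD] at hn
    obtain ⟨a, b, c⟩ := hn
    have := card_mono r n (fun i => (b i).1)
    omega

def G : ℕ → (ℕ → ℕ) → YoungDiagram → ℕ
  | 0, _ => fun m => if m = ⊥ then 1 else 0
  | N+1, a => P (a N) (G N a)

lemma G_congr (N : ℕ) (a b : ℕ → ℕ) (h : ∀ i < N, a i = b i) : G N a = G N b := by
  induction N with
  | zero => rfl
  | succ N ih =>
    rw [G, G, ih (fun i hi => h i (by omega)), h N (by omega)]

lemma P_sum {ι : Type} (s : Finset ι) (k : ℕ) (F : ι → YoungDiagram → ℕ) (m : YoungDiagram) :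
    P k (fun n => ∑ i ∈ s, F i n) m = ∑ i ∈ s, P k (F i) m := by
  unfold P
  exact Finset.sum_comm

lemma D_G (N : ℕ) (a : ℕ → ℕ) (r : YoungDiagram) :
    D (G N a) r = ∑ i ∈ (Finset.range N).filter (fun i => 0 < a i), G N (dn a i) r := by
  induction N generalizing r with
  | zero =>
    simp only [Finset.range_zero, Finset.filter_empty, Finset.sum_empty]
    apply Finset.sum_eq_zero
    intro m hm
    simp only [Finset.mem_filter, mem_YD] at hm
    have := covers_card hm.2
    rw [G]
    simp only [ite_eq_right_iff]
    rintro rfl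
    simp [YoungDiagram.card] at this
  | succ N ih =>
    rw [G, D_P, funext ih, P_sum, Finset.range_add_one, Finset.filter_insert]
    have e1 : ∑ i ∈ (Finset.range N).filter (fun i => 0 < a i), P (a N) (G N (dn a i)) r =
        ∑ i ∈ (Finset.range N).filter (fun i => 0 < a i), G (N+1) (dn a i) r := by
      apply Finset.sum_congr rfl
      intro i hi
      simp only [Finset.mem_filter, Finset.mem_range] at hi
      rw [G, dn_ne _ (by omega)]
    have e2 : G (N+1) (dn a N) r = P (a N - 1) (G N a) r := by
      rw [G, dn_self, G_congr N (dn a N) a (fun i hi => dn_ne _ (by omega))]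
    rw [e1]
    split_ifs with h
    · rw [Finset.sum_insert (by simp), e2, add_comm]
    · rfl

lemma G_swap (i : ℕ) (a b : ℕ → ℕ) (h1 : a i = b (i+1)) (h2 : a (i+1) = b i)
    (h : ∀ j, j ≠ i → j ≠ i + 1 → a j = b j) (N : ℕ) : G (i + 2 + N) a = G (i + 2 + N) b := by
  induction N with
  | zero =>
    funext m
    show P (a (i+1)) (P (a i) (G i a)) m = P (b (i+1)) (P (b i) (G i b)) m
    rw [P_comm, h1, h2, G_congr i a b (fun j hj => h j (by omega) (by omega))]
  | succ N ih =>
    show P (a (i+2+N)) (G (i+2+N) a) = P (b (i+2+N)) (G (i+2+N) b)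
    rw [ih, h _ (by omega) (by omega)]

lemma G_dn_eq (a : ℕ → ℕ) (N i d : ℕ) (ha : ∀ k, i ≤ k → k ≤ i + d → a k = a i) (h : i + d < N) :
    G N (dn a i) = G N (dn a (i+d)) := by
  induction d with
  | zero => rfl
  | succ d ih =>
    rw [ih (fun k h1 h2 => ha k h1 (by omega)) (by omega)]
    obtain ⟨M, rfl⟩ : ∃ M, N = i + d + 2 + M := ⟨N - (i+d+2), by omega⟩
    have e1 := ha (i+d) (by omega) (by omega)
    have e2 := ha (i+d+1) (by omega) (by omega)
    apply G_swap (i+d)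
    · rw [dn_self, ← add_assoc, dn_self, e1, e2]
    · rw [dn_ne _ (by omega), ← add_assoc, dn_ne _ (by omega), e1, e2]
    · intro j h1 h2
      rw [dn_ne _ h1, ← add_assoc, dn_ne _ h2]

def Good (N : ℕ) (a : ℕ → ℕ) (m : YoungDiagram) (T : SemistandardYoungTableau m) : Prop :=
  (∀ c ∈ m.cells, T c.1 c.2 < N) ∧ ∀ i < N, (m.cells.filter (fun c => T c.1 c.2 = i)).card = a i

def ext (N : ℕ) {m n : YoungDiagram} (h : IL m.rowLen n.rowLen) (T : SemistandardYoungTableau n)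
    (hT : ∀ c ∈ n.cells, T c.1 c.2 < N) : SemistandardYoungTableau m where
  entry i j := if (i, j) ∈ n then T i j else if (i, j) ∈ m then N else 0
  row_weak' := by
    intro i j1 j2 hj hm
    by_cases h2 : (i, j2) ∈ n
    · have h1 : (i, j1) ∈ n := n.up_left_mem le_rfl hj.le h2
      rw [if_pos h1, if_pos h2]
      exact T.row_weak hj h2
    · rw [if_neg h2, if_pos hm]
      split_ifs with h1 h3
      · exact (hT (i, j1) (by simpa using h1)).le
      · exact le_rfl
      · exact Nat.zero_le _
  col_strict' := by
    intro i1 i2 j hi hm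
    have h1 : (i1, j) ∈ n := by
      have hm' : (i1 + 1, j) ∈ m := m.up_left_mem hi le_rfl hm
      rw [YoungDiagram.mem_iff_lt_rowLen] at *
      exact lt_of_lt_of_le hm' (h i1).2
    rw [if_pos h1]
    by_cases h2 : (i2, j) ∈ n
    · rw [if_pos h2]
      exact T.col_strict hi h2
    · rw [if_neg h2, if_pos hm]
      exact hT (i1, j) (by simpa using h1)
  zeros' := by
    intro i j hm
    have h1 : (i, j) ∉ n := by
      intro h1
      apply hm
      rw [YoungDiagram.mem_iff_lt_rowLen] at *
      exact lt_of_lt_of_le h1 (h i).1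
    rw [if_neg h1, if_neg hm]

lemma ext_apply (N : ℕ) {m n : YoungDiagram} (h : IL m.rowLen n.rowLen)
    (T : SemistandardYoungTableau n) (hT : ∀ c ∈ n.cells, T c.1 c.2 < N) (i j : ℕ) :
    ext N h T hT i j = if (i, j) ∈ n then T i j else if (i, j) ∈ m then N else 0 := rfl

lemma IL_sub {m n : YoungDiagram} (h : IL m.rowLen n.rowLen) {c : ℕ × ℕ} (hc : c ∈ n) : c ∈ m := by
  obtain ⟨i, j⟩ := c
  rw [YoungDiagram.mem_iff_lt_rowLen] at *
  exact lt_of_lt_of_le hc (h i).1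

lemma ext_good (N : ℕ) (a : ℕ → ℕ) {m n : YoungDiagram} (h : IL m.rowLen n.rowLen)
    (hc : n.card + a N = m.card) (T : SemistandardYoungTableau n) (hT : Good N a n T) :
    Good (N+1) a m (ext N h T hT.1) := by
  refine ⟨?_, ?_⟩
  · rintro ⟨i, j⟩ hm
    dsimp only
    rw [ext_apply]
    split_ifs with h1 h2
    · have := hT.1 (i, j) (by simpa using h1)
      dsimp only at this
      omega
    · omega
    · omega
  · intro i hi
    by_cases hiN : i = N
    · subst hiN
      have : m.cells.filter (fun c => ext i h T hT.1 c.1 c.2 = i) = m.cells \ n.cells := by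
        ext ⟨x, y⟩
        simp only [Finset.mem_filter, Finset.mem_sdiff, YoungDiagram.mem_cells]
        rw [ext_apply]
        constructor
        · rintro ⟨h1, h2⟩
          refine ⟨h1, fun h3 => ?_⟩
          rw [if_pos h3] at h2
          have := hT.1 (x, y) (by simpa using h3)
          dsimp only at this
          omega
        · rintro ⟨h1, h2⟩
          rw [if_neg h2, if_pos h1]
          exact ⟨h1, rfl⟩
      rw [this, Finset.card_sdiff_of_subset]
      · unfold YoungDiagram.card at hc
        omega
      · intro c hc
        simp only [YoungDiagram.mem_cells] at *
        exact IL_sub h hc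
    · rw [← hT.2 i (by omega)]
      congr 1
      ext ⟨x, y⟩
      simp only [Finset.mem_filter, YoungDiagram.mem_cells]
      rw [ext_apply]
      constructor
      · rintro ⟨h1, h2⟩
        by_cases h3 : (x, y) ∈ n
        · rw [if_pos h3] at h2
          exact ⟨h3, h2⟩
        · rw [if_neg h3, if_pos h1] at h2
          omega
      · rintro ⟨h1, h2⟩
        rw [if_pos h1]
        exact ⟨IL_sub h h1, h2⟩

def sub (N : ℕ) {m : YoungDiagram} (T : SemistandardYoungTableau m) : YoungDiagram where
  cells := m.cells.filter (fun c => T c.1 c.2 < N)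
  isLowerSet := by
    rintro ⟨a, b⟩ ⟨c, d⟩ hle h
    simp only [Finset.coe_filter, Set.mem_ofPred_eq, YoungDiagram.mem_cells] at h ⊢
    obtain ⟨h1, h2⟩ : c ≤ a ∧ d ≤ b := by simpa using hle
    have h3 : (a, d) ∈ m := m.up_left_mem le_rfl h2 h.1
    have h4 := T.col_weak h1 h3
    have h5 := T.row_weak_of_le h2 h.1
    exact ⟨m.up_left_mem h1 h2 h.1, by omega⟩

lemma mem_sub {N : ℕ} {m : YoungDiagram} {T : SemistandardYoungTableau m} {i j : ℕ} :
    (i, j) ∈ sub N T ↔ (i, j) ∈ m ∧ T i j < N := by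
  have h : (i, j) ∈ sub N T ↔ (i, j) ∈ m.cells.filter (fun c => T c.1 c.2 < N) := Iff.rfl
  rw [h, Finset.mem_filter, YoungDiagram.mem_cells]

lemma sub_ext (N : ℕ) {m n : YoungDiagram} (h : IL m.rowLen n.rowLen)
    (T : SemistandardYoungTableau n) (hT : ∀ c ∈ n.cells, T c.1 c.2 < N) :
    sub N (ext N h T hT) = n := by
  apply YoungDiagram.ext
  ext ⟨i, j⟩
  rw [YoungDiagram.mem_cells, YoungDiagram.mem_cells, mem_sub, ext_apply]
  constructor
  · rintro ⟨h1, h2⟩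
    by_contra h3
    rw [if_neg h3, if_pos h1] at h2
    omega
  · intro h1
    rw [if_pos h1]
    exact ⟨IL_sub h h1, hT (i, j) (by simpa using h1)⟩

def res (N : ℕ) {m : YoungDiagram} (T : SemistandardYoungTableau m) :
    SemistandardYoungTableau (sub N T) where
  entry i j := if (i, j) ∈ sub N T then T i j else 0
  row_weak' := by
    intro i j1 j2 hj h
    rw [if_pos h, if_pos ((sub N T).up_left_mem le_rfl hj.le h)]
    exact T.row_weak hj (mem_sub.1 h).1
  col_strict' := by
    intro i1 i2 j hj h
    rw [if_pos h, if_pos ((sub N T).up_left_mem hj.le le_rfl h)]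
    exact T.col_strict hj (mem_sub.1 h).1
  zeros' := by
    intro i j h
    rw [if_neg h]

lemma res_apply (N : ℕ) {m : YoungDiagram} (T : SemistandardYoungTableau m) (i j : ℕ) :
    res N T i j = if (i, j) ∈ sub N T then T i j else 0 := rfl

lemma sub_IL (N : ℕ) {m : YoungDiagram} (T : SemistandardYoungTableau m)
    (hT : ∀ c ∈ m.cells, T c.1 c.2 < N + 1) : IL m.rowLen (sub N T).rowLen := by
  intro i
  constructor
  · refine le_of_forall_lt (fun j hj => ?_)
    rw [← YoungDiagram.mem_iff_lt_rowLen] at *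
    exact (mem_sub.1 hj).1
  · refine le_of_forall_lt (fun j hj => ?_)
    rw [← YoungDiagram.mem_iff_lt_rowLen] at *
    rw [mem_sub]
    have h1 := T.col_strict (Nat.lt_succ_self i) hj
    have h2 := hT (i+1, j) (by simpa using hj)
    dsimp only at h2
    refine ⟨m.up_left_mem (Nat.le_succ i) le_rfl hj, ?_⟩
    simp only [Nat.succ_eq_add_one] at h1
    omega

lemma sub_card (N : ℕ) (a : ℕ → ℕ) {m : YoungDiagram} (T : SemistandardYoungTableau m)
    (hT : Good (N+1) a m T) : (sub N T).card + a N = m.card := by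
  rw [← hT.2 N (by omega)]
  unfold YoungDiagram.card
  have := Finset.card_filter_add_card_filter_not (s := m.cells) (fun c => T c.1 c.2 < N)
  rw [← this]
  congr 2
  apply Finset.filter_congr
  intro c hc
  have := hT.1 c hc
  omega

lemma res_good (N : ℕ) (a : ℕ → ℕ) {m : YoungDiagram} (T : SemistandardYoungTableau m)
    (hT : Good (N+1) a m T) : Good N a (sub N T) (res N T) := by
  constructor
  · rintro ⟨i, j⟩ h
    rw [YoungDiagram.mem_cells] at h
    rw [res_apply, if_pos h]
    exact (mem_sub.1 h).2
  · intro i hi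
    rw [← hT.2 i (by omega)]
    congr 1
    ext ⟨x, y⟩
    simp only [Finset.mem_filter, YoungDiagram.mem_cells]
    rw [res_apply]
    constructor
    · rintro ⟨h1, h2⟩
      rw [if_pos h1] at h2
      exact ⟨(mem_sub.1 h1).1, h2⟩
    · rintro ⟨h1, h2⟩
      have : (x, y) ∈ sub N T := mem_sub.2 ⟨h1, by omega⟩
      rw [if_pos this]
      exact ⟨this, h2⟩

lemma ext_res (N : ℕ) (a : ℕ → ℕ) {m : YoungDiagram} (T : SemistandardYoungTableau m)
    (hT : Good (N+1) a m T) :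
    ext N (sub_IL N T hT.1) (res N T) (res_good N a T hT).1 = T := by
  apply SemistandardYoungTableau.ext
  intro i j
  rw [ext_apply, res_apply]
  split_ifs with h1 h2
  · rfl
  · have := hT.1 (i, j) (by simpa using h2)
    dsimp only at this
    rw [mem_sub] at h1
    have : ¬ T i j < N := fun h => h1 ⟨h2, h⟩
    omega
  · exact (T.zeros h2).symm

lemma ext_inj (N : ℕ) {m n : YoungDiagram} (h : IL m.rowLen n.rowLen)
    (T T' : SemistandardYoungTableau n) (hT : ∀ c ∈ n.cells, T c.1 c.2 < N)
    (hT' : ∀ c ∈ n.cells, T' c.1 c.2 < N) (he : ext N h T hT = ext N h T' hT') : T = T' := by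
  apply SemistandardYoungTableau.ext
  intro i j
  by_cases hc : (i, j) ∈ n
  · have : ext N h T hT i j = ext N h T' hT' i j := by rw [he]
    rwa [ext_apply, ext_apply, if_pos hc, if_pos hc] at this
  · rw [T.zeros hc, T'.zeros hc]

def idx (k : ℕ) (m : YoungDiagram) : Finset YoungDiagram :=
  (YD m.card).filter (fun n => IL m.rowLen n.rowLen ∧ n.card + k = m.card)

lemma mem_idx {k : ℕ} {m n : YoungDiagram} :
    n ∈ idx k m ↔ IL m.rowLen n.rowLen ∧ n.card + k = m.card := by
  rw [idx, Finset.mem_filter, mem_YD]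
  constructor
  · exact fun h => h.2
  · exact fun h => ⟨by omega, h⟩

def glue (N : ℕ) (a : ℕ → ℕ) (m : YoungDiagram) :
    (Σ n : {n // n ∈ idx (a N) m}, {T : SemistandardYoungTableau n.1 // Good N a n.1 T}) →
      {T : SemistandardYoungTableau m // Good (N+1) a m T} :=
  fun x => ⟨ext N (mem_idx.1 x.1.2).1 x.2.1 x.2.2.1,
    ext_good N a (mem_idx.1 x.1.2).1 (mem_idx.1 x.1.2).2 x.2.1 x.2.2⟩

lemma glue_bij (N : ℕ) (a : ℕ → ℕ) (m : YoungDiagram) : Function.Bijective (glue N a m) := by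
  constructor
  · rintro ⟨⟨n, hn⟩, ⟨T, hT⟩⟩ ⟨⟨n', hn'⟩, ⟨T', hT'⟩⟩ h
    have h' := congrArg Subtype.val h
    simp only [glue] at h'
    have e : n = n' := by
      rw [← sub_ext N (mem_idx.1 hn).1 T hT.1, ← sub_ext N (mem_idx.1 hn').1 T' hT'.1, h']
    subst e
    have e2 := ext_inj N _ T T' hT.1 hT'.1 h'
    subst e2
    rfl
  · rintro ⟨T, hT⟩
    refine ⟨⟨⟨sub N T, mem_idx.2 ⟨sub_IL N T hT.1, sub_card N a T hT⟩⟩,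
      ⟨res N T, res_good N a T hT⟩⟩, ?_⟩
    apply Subtype.ext
    exact ext_res N a T hT

lemma tab_card (N : ℕ) (a : ℕ → ℕ) (m : YoungDiagram) :
    Finite {T : SemistandardYoungTableau m // Good N a m T} ∧
    Nat.card {T : SemistandardYoungTableau m // Good N a m T} = G N a m := by
  induction N generalizing m with
  | zero =>
    by_cases hm : m = ⊥
    · subst hm
      have hsub : Subsingleton {T : SemistandardYoungTableau ⊥ // Good 0 a ⊥ T} := by
        constructor
        rintro ⟨T, _⟩ ⟨T', _⟩
        apply Subtype.ext
        apply SemistandardYoungTableau.ext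
        intro i j
        rw [T.zeros (YoungDiagram.notMem_bot _), T'.zeros (YoungDiagram.notMem_bot _)]
      have hne : Nonempty {T : SemistandardYoungTableau ⊥ // Good 0 a ⊥ T} :=
        ⟨⟨default, by simp [Good]⟩⟩
      refine ⟨inferInstance, ?_⟩
      have e : G 0 a ⊥ = 1 := if_pos rfl
      rw [e]
      exact Nat.card_eq_one_iff_unique.2 ⟨hsub, hne⟩
    · have hem : IsEmpty {T : SemistandardYoungTableau m // Good 0 a m T} := by
        constructor
        rintro ⟨T, hT, -⟩
        apply hm
        apply YoungDiagram.ext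
        rw [YoungDiagram.cells_bot, Finset.eq_empty_iff_forall_notMem]
        intro c hc
        exact absurd (hT c hc) (by omega)
      refine ⟨inferInstance, ?_⟩
      have e : G 0 a m = 0 := if_neg hm
      rw [e]
      exact Nat.card_of_isEmpty
  | succ N ih =>
    let e := Equiv.ofBijective _ (glue_bij N a m)
    have : ∀ n : {n // n ∈ idx (a N) m},
      Finite {T : SemistandardYoungTableau n.1 // Good N a n.1 T} := fun n => (ih n.1).1
    refine ⟨Finite.of_equiv _ e, ?_⟩
    rw [← Nat.card_congr e, Nat.card_sigma]
    simp only [(ih _).2]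
    rw [Finset.sum_coe_sort (idx (a N) m) (fun n => G N a n)]
    rfl

lemma kostka_eq (m l : YoungDiagram) (N : ℕ) (hN : ∀ i, N ≤ i → l.rowLen i = 0) :
    kostka m l = G N l.rowLen m := by
  rw [← (tab_card N l.rowLen m).2]
  unfold kostka
  apply Nat.card_congr
  apply Equiv.subtypeEquivRight
  intro T
  constructor
  · intro h
    refine ⟨fun c hc => ?_, fun i _ => h i⟩
    by_contra hlt
    have h1 := h (T c.1 c.2)
    rw [hN _ (by omega), Finset.card_eq_zero, Finset.eq_empty_iff_forall_notMem] at h1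
    exact h1 c (Finset.mem_filter.2 ⟨hc, rfl⟩)
  · rintro ⟨h1, h2⟩ i
    by_cases hi : i < N
    · exact h2 i hi
    · rw [hN i (by omega), Finset.card_eq_zero, Finset.eq_empty_iff_forall_notMem]
      intro c hc
      rw [Finset.mem_filter] at hc
      have := h1 c hc.1
      omega

lemma exists_last (l : YoungDiagram) (i : ℕ) : ∃ L, 0 < l.rowLen i →
    (i ≤ L ∧ l.rowLen L = l.rowLen i ∧ l.rowLen (L+1) < l.rowLen i) := by
  have key : ∀ j, j < l.colLen (l.rowLen i - 1) ↔ l.rowLen i - 1 < l.rowLen j := by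
    intro j
    rw [← YoungDiagram.mem_iff_lt_colLen, YoungDiagram.mem_iff_lt_rowLen]
  refine ⟨l.colLen (l.rowLen i - 1) - 1, fun hp => ?_⟩
  have h1 := (key i).2 (by omega)
  have h2 : i ≤ l.colLen (l.rowLen i - 1) - 1 := by omega
  have h3 := (key (l.colLen (l.rowLen i - 1) - 1)).1 (by omega)
  have h4 := (not_congr (key (l.colLen (l.rowLen i - 1) - 1 + 1))).1 (by omega)
  have h5 := l.rowLen_anti _ _ h2
  exact ⟨h2, by omega, by omega⟩

lemma final (lam rho : YoungDiagram) (n : ℕ) (hn : lam.card = n) :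
    ∑ i ∈ (Finset.range n).filter (fun i => 0 < lam.rowLen i), G n (dn lam.rowLen i) rho =
    ∑ ga ∈ (YD n).filter (fun ga => Covers lam ga), cCoeff lam ga * kostka rho ga := by
  choose L hL using exists_last lam
  have hz : ∀ i, n ≤ i → lam.rowLen i = 0 := fun i hi => rowLen_zero lam (by omega)
  have hspec : ∀ i, 0 < lam.rowLen i →
      (ofFun (dn lam.rowLen (L i))).rowLen = dn lam.rowLen (L i) := by
    intro i hi
    obtain ⟨h1, h2, h3⟩ := hL i hi
    funext j
    apply rowLen_ofFun _ n
    · have := hz n le_rfl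
      unfold dn; omega
    · intro j
      have := lam.rowLen_anti _ _ (Nat.le_succ j)
      by_cases hj : j = L i
      · subst hj
        rw [dn_self, dn_ne _ (by omega)]; omega
      · rw [dn_ne _ hj]
        simp only [Nat.succ_eq_add_one] at this
        unfold dn; omega
  rw [← Finset.sum_fiberwise_of_maps_to (g := fun i => ofFun (dn lam.rowLen (L i)))
    (t := (YD n).filter (fun ga => Covers lam ga))]
  · apply Finset.sum_congr rfl
    intro ga hga
    rw [Finset.mem_filter] at hga
    obtain ⟨-, hcov⟩ := hga
    obtain ⟨i0, hp, hup, hdn⟩ := covers_iff hcov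
    have hdrop : lam.rowLen (i0+1) < lam.rowLen i0 := by
      have := ga.rowLen_anti _ _ (Nat.le_succ i0)
      rw [hdn, Nat.succ_eq_add_one, dn_self, dn_ne _ (by omega)] at this
      omega
    have hfib : ∀ i, i ∈ ((Finset.range n).filter (fun i => 0 < lam.rowLen i)).filter
        (fun i => ofFun (dn lam.rowLen (L i)) = ga) ↔ lam.rowLen i = lam.rowLen i0 := by
      intro i
      simp only [Finset.mem_filter, Finset.mem_range]
      constructor
      · rintro ⟨⟨-, h1⟩, h2⟩
        have h3 := hspec i h1
        rw [h2, hdn] at h3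
        have := dn_inj _ hp h3
        rw [← (hL i h1).2.1, this]
      · intro h
        have h1 : 0 < lam.rowLen i := by omega
        refine ⟨⟨?_, h1⟩, ?_⟩
        · by_contra hc
          have := hz i (by omega)
          omega
        · obtain ⟨a, b, c⟩ := hL i h1
          have : L i = i0 := by
            rcases lt_trichotomy (L i) i0 with hlt | heq | hgt
            · have := lam.rowLen_anti (L i + 1) i0 hlt
              omega
            · exact heq
            · have := lam.rowLen_anti (i0 + 1) (L i) hgt
              omega
          rw [this]
          exact ofFun_eq (fun j => by rw [hdn])
    have hk : kostka rho ga = G n (dn lam.rowLen i0) rho := by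
      rw [kostka_eq rho ga n, hdn]
      intro i hi
      rw [hdn]
      have := hz i hi
      unfold dn; omega
    have hc : cCoeff lam ga = (((Finset.range n).filter (fun i => 0 < lam.rowLen i)).filter
        (fun i => ofFun (dn lam.rowLen (L i)) = ga)).card := by
      unfold cCoeff
      rw [← Set.ncard_coe_finset]
      congr 1
      ext j
      rw [Finset.mem_coe, hfib]
      constructor
      · rintro ⟨i, h1, h2⟩
        have : i = i0 := by
          by_contra hne
          rw [hdn, dn_ne _ hne] at h1
          omega
        rw [h2, this]
      · intro h
        refine ⟨i0, ?_, h⟩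
        rw [hdn, dn_self]; omega
    rw [hc, hk, ← smul_eq_mul, ← Finset.sum_const]
    apply Finset.sum_congr rfl
    intro i hi
    have hi' := (hfib i).1 hi
    simp only [Finset.mem_filter, Finset.mem_range] at hi
    obtain ⟨⟨-, h1⟩, h2⟩ := hi
    have h3 := hspec i h1
    rw [h2, hdn] at h3
    have h4 := dn_inj _ hp h3
    obtain ⟨a, b, c⟩ := hL i h1
    rw [← h4] at a
    obtain ⟨d, rfl⟩ := Nat.exists_eq_add_of_le a
    rw [G_dn_eq lam.rowLen n i d]
    · intro k hk1 hk2
      have := lam.rowLen_anti _ _ hk1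
      have := lam.rowLen_anti _ _ hk2
      omega
    · by_contra hcon
      have := hz (i+d) (by omega)
      omega
  · intro i hi
    simp only [Finset.mem_filter, Finset.mem_range] at hi
    have hs := hspec i hi.2
    obtain ⟨a, b, c⟩ := hL i hi.2
    have hcov : Covers lam (ofFun (dn lam.rowLen (L i))) := covers_dn (by omega) hs
    have := covers_card hcov
    simp only [Finset.mem_filter, mem_YD]
    exact ⟨by omega, hcov⟩

end KR

/-- Recurrence for the Kostka numbers:
`Σ_{μ ⊢ n, μ ≻ ρ} K(μ,λ) = Σ_{γ ⊢ n-1, γ ≺ λ} c(λ,γ) · K(ρ,γ)`. -/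
theorem kostka_recurrence (n : ℕ) (hn : 1 ≤ n) (lam rho : YoungDiagram)
    (hlam : lam.card = n) (hrho : rho.card = n - 1) :
    ∑ᶠ (mu : YoungDiagram) (_ : mu.card = n ∧ Covers mu rho), kostka mu lam =
      ∑ᶠ (ga : YoungDiagram) (_ : ga.card = n - 1 ∧ Covers lam ga),
        cCoeff lam ga * kostka rho ga := by
  have hz : ∀ i, n ≤ i → lam.rowLen i = 0 := fun i hi => KR.rowLen_zero lam (by omega)
  rw [finsum_cond_eq_sum_of_cond_iff (fun mu => kostka mu lam)
      (p := fun mu => mu.card = n ∧ Covers mu rho) (t := (KR.YD (rho.card+1)).filter (fun m => Covers m rho)),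
    finsum_cond_eq_sum_of_cond_iff (fun ga => cCoeff lam ga * kostka rho ga)
      (p := fun ga => ga.card = n - 1 ∧ Covers lam ga) (t := (KR.YD n).filter (fun ga => Covers lam ga)),
    ← KR.final lam rho n hlam, ← KR.D_G]
  · unfold KR.D
    apply Finset.sum_congr rfl
    intro m _
    exact KR.kostka_eq m lam n hz
  · intro ga _
    rw [Finset.mem_filter, KR.mem_YD]
    constructor
    · rintro ⟨h1, h2⟩
      exact ⟨by omega, h2⟩
    · rintro ⟨h1, h2⟩
      have := KR.covers_card h2
      exact ⟨by omega, h2⟩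
  · intro m _
    rw [Finset.mem_filter, KR.mem_YD]
    constructor
    · rintro ⟨h1, h2⟩
      exact ⟨by omega, h2⟩
    · rintro ⟨h1, h2⟩
      have := KR.covers_card h2
      exact ⟨by omega, h2⟩

end
end

section
/- Let λ ⊢ n and suppose that the map μ ↦ μ̄ restricts to a bijection from the set {μ ⊢ n : μ ⊵ λ} onto the set {ρ ⊢ n−1 : ρ ⊵ λ̄}. Then the homogeneous linear system has only the zero solution: every function Y assigning a complex number Y(μ) to each partition μ ⊢ n with μ ⊵ λ and satisfying, for every ρ ⊢ n−1 with ρ ⊵ λ̄, the equation Σ_{μ ⊢ n, μ ⊵ λ, μ ≻ ρ} Y(μ) = 0, is identically zero. -/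
open scoped Classical

noncomputable section

open MvPolynomial

/-- `Dominates μ λ` : μ ⊵ λ in the dominance order (partial row sums of λ are ≤ those of μ). -/
def Dominates (mu lam : YoungDiagram) : Prop :=
  ∀ k : ℕ, ∑ i ∈ Finset.range k, lam.rowLen i ≤ ∑ i ∈ Finset.range k, mu.rowLen i

/-- `IsBar θ ρ`: ρ is obtained from θ by decreasing by 1 the part `θ_i` with the least
index `i` such that `θ_i > θ_{i+1}` (removing a cell from the uppermost possible row). -/
def IsBar (th rho : YoungDiagram) : Prop :=
  ∃ i, (∀ j, j < i → th.rowLen (j + 1) = th.rowLen j) ∧ th.rowLen (i + 1) < th.rowLen i ∧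
    rho.rowLen i + 1 = th.rowLen i ∧ ∀ j, j ≠ i → rho.rowLen j = th.rowLen j

/-- The diagram `θ̄` obtained from `θ` by removing a cell from the uppermost possible row. -/
noncomputable def bar (th : YoungDiagram) : YoungDiagram :=
  if h : ∃ rho, IsBar th rho then h.choose else ⊥

theorem yd_exists (f : ℕ → ℕ) (hf : Antitone f) (N : ℕ) (hN : f N = 0) :
    ∃ yd : YoungDiagram, ∀ i, yd.rowLen i = f i := by
  have hlt : ∀ i j, j < f i → i < N := by
    intro i j h
    by_contra hc
    have := hf (not_lt.mp hc)
    omega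
  refine ⟨⟨(Finset.range N ×ˢ Finset.range (f 0)).filter (fun c => c.2 < f c.1), ?_⟩, ?_⟩
  · rintro ⟨a, b⟩ ⟨c, d⟩ ⟨h1, h2⟩ h
    simp only [Finset.coe_filter, Finset.mem_product, Finset.mem_range, Set.mem_ofPred_eq] at h ⊢
    simp only at h1 h2
    have := hf h1
    have := hf (Nat.zero_le c)
    omega
  · intro i
    refine eq_of_forall_lt_iff (fun j => ?_)
    rw [← YoungDiagram.mem_iff_lt_rowLen, ← YoungDiagram.mem_cells]
    simp only [Finset.mem_filter, Finset.mem_product, Finset.mem_range]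
    have := hf (Nat.zero_le i)
    constructor
    · exact fun h => h.2
    · intro h
      exact ⟨⟨hlt _ _ h, by omega⟩, h⟩

theorem yd_ext {a b : YoungDiagram} (h : ∀ i, a.rowLen i = b.rowLen i) : a = b := by
  ext ⟨i, j⟩
  rw [YoungDiagram.mem_cells, YoungDiagram.mem_cells, YoungDiagram.mem_iff_lt_rowLen,
    YoungDiagram.mem_iff_lt_rowLen, h]

theorem yd_zero (a : YoungDiagram) : ∃ N, ∀ i, N ≤ i → a.rowLen i = 0 := by
  refine ⟨a.colLen 0, fun i hi => ?_⟩
  by_contra hc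
  have : (i, 0) ∈ a := YoungDiagram.mem_iff_lt_rowLen.mpr (Nat.pos_of_ne_zero hc)
  have := YoungDiagram.mem_iff_lt_colLen.mp this
  omega

theorem yd_card (a : YoungDiagram) (N : ℕ) (h : ∀ i, N ≤ i → a.rowLen i = 0) :
    a.card = ∑ i ∈ Finset.range N, a.rowLen i := by
  rw [YoungDiagram.card, Finset.card_eq_sum_card_fiberwise (f := Prod.fst) (t := Finset.range N)]
  · refine Finset.sum_congr rfl (fun i _ => ?_)
    rw [YoungDiagram.rowLen_eq_card]
    rfl
  · rintro ⟨i, j⟩ hc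
    simp only [Finset.coe_range, Set.mem_Iio]
    by_contra hcon
    have h1 := h i (not_lt.mp hcon)
    have h2 : j < a.rowLen i := YoungDiagram.mem_iff_lt_rowLen.mp hc
    omega

theorem isBar_exists (a : YoungDiagram) (h : 1 ≤ a.card) : ∃ rho, IsBar a rho := by
  obtain ⟨N, hN⟩ := yd_zero a
  have hex : ∃ i, a.rowLen (i + 1) < a.rowLen i := by
    by_contra hc
    push Not at hc
    have hm : Monotone a.rowLen := monotone_nat_of_le_succ hc
    have hz : ∀ i, 0 ≤ i → a.rowLen i = 0 := by
      intro i _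
      have := hm (le_max_left i N)
      rw [hN _ (le_max_right i N)] at this
      omega
    have := yd_card a 0 hz
    simp at this
    simp [this] at h
  have hanti : Antitone a.rowLen := fun i j h => a.rowLen_anti i j h
  have hi := Nat.find_spec hex
  have hmin : ∀ j, j < Nat.find hex → a.rowLen (j + 1) = a.rowLen j := by
    intro j hj
    have h1 := Nat.find_min hex hj
    have h2 := hanti (Nat.le_succ j)
    simp only [Nat.succ_eq_add_one] at h2
    omega
  generalize Nat.find hex = i at hi hmin
  obtain ⟨r, hr⟩ := yd_exists (fun j => if j = i then a.rowLen i - 1 else a.rowLen j)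
    (by
      refine antitone_nat_of_succ_le (fun j => ?_)
      have h2 := hanti (Nat.le_succ j)
      simp only [Nat.succ_eq_add_one] at h2
      split_ifs with p q q
      · omega
      · subst p; omega
      · subst q; omega
      · exact h2) N (by
      have := hN N le_rfl
      split_ifs with p
      · subst p; omega
      · exact this)
  refine ⟨r, i, hmin, hi, ?_, ?_⟩
  · rw [hr, if_pos rfl]; omega
  · intro j hj
    rw [hr, if_neg hj]

theorem bar_isBar (a : YoungDiagram) (h : 1 ≤ a.card) : IsBar a (bar a) := by
  have hex := isBar_exists a h
  rw [bar, dif_pos hex]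
  exact hex.choose_spec

theorem isBar_unique {a r s : YoungDiagram} (h : IsBar a r) (h' : IsBar a s) : r = s := by
  obtain ⟨i, h1, h2, h3, h4⟩ := h
  obtain ⟨j, g1, g2, g3, g4⟩ := h'
  have hij : i = j := by
    rcases lt_trichotomy i j with h | h | h
    · have := g1 _ h; omega
    · exact h
    · have := h1 _ h; omega
  subst hij
  refine yd_ext (fun k => ?_)
  by_cases hk : k = i
  · subst hk; omega
  · rw [h4 k hk, g4 k hk]

theorem plus_exists (m : YoungDiagram) (r : YoungDiagram) (h : Covers m r) :
    ∃ p : YoungDiagram, p.card = m.card ∧ Dominates p m ∧ IsBar p r ∧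
      p.rowLen 0 = r.rowLen 0 + 1 := by
  obtain ⟨i, hi, hj⟩ := h
  obtain ⟨N, hN⟩ := yd_zero m
  have hanti : Antitone r.rowLen := fun i j h => r.rowLen_anti i j h
  have hrN : ∀ k, N ≤ k → r.rowLen k = 0 := by
    intro k hk
    have := hN k hk
    by_cases hki : k = i
    · subst hki; omega
    · rw [hj k hki, this]
  have hiN : i < N := by
    by_contra hc
    have := hN i (not_lt.mp hc)
    omega
  obtain ⟨p, hp⟩ := yd_exists (fun j => r.rowLen j + if j = 0 then 1 else 0)
    (by
      refine antitone_nat_of_succ_le (fun j => ?_)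
      have h2 := hanti (Nat.le_succ j)
      simp only [Nat.succ_eq_add_one] at h2
      simp
      omega) N (by simp [hrN N le_rfl]; omega)
  have hm : ∀ k, m.rowLen k = r.rowLen k + if k = i then 1 else 0 := by
    intro k
    by_cases hk : k = i
    · subst hk; simp [hi]
    · simp [hk, hj k hk]
  have hps : ∀ k, ∑ j ∈ Finset.range k, p.rowLen j =
      ∑ j ∈ Finset.range k, r.rowLen j + if 0 < k then 1 else 0 := by
    intro k
    simp only [hp, Finset.sum_add_distrib, Finset.sum_ite_eq', Finset.mem_range]
  have hms : ∀ k, ∑ j ∈ Finset.range k, m.rowLen j =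
      ∑ j ∈ Finset.range k, r.rowLen j + if i < k then 1 else 0 := by
    intro k
    simp only [hm, Finset.sum_add_distrib, Finset.sum_ite_eq', Finset.mem_range]
  refine ⟨p, ?_, ?_, ⟨0, ?_, ?_, ?_, ?_⟩, ?_⟩
  · rw [yd_card m N hN, yd_card p N, hps, hms, if_pos hiN, if_pos (by omega)]
    intro k hk
    rw [hp, hrN k hk, if_neg (by omega)]
  · intro k
    rw [hps, hms]
    split_ifs <;> omega
  · intro j hj
    omega
  · have := hanti (Nat.zero_le 1)
    simp [hp]
    omega
  · simp [hp]
  · intro j hj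
    simp [hp, hj]
  · simp [hp]

/-- If `μ ↦ μ̄` is a bijection from `{μ ⊢ n : μ ⊵ λ}` onto `{ρ ⊢ n-1 : ρ ⊵ λ̄}`, then the
homogeneous linear system `Σ_{μ ⊵ λ, μ ≻ ρ} Y(μ) = 0` (one equation for each `ρ ⊢ n-1`
with `ρ ⊵ λ̄`) has only the zero solution. -/
theorem system_only_zero_solution (n : ℕ) (hn : 1 ≤ n) (lam : YoungDiagram)
    (hlam : lam.card = n)
    (hbij : Set.BijOn bar {mu : YoungDiagram | mu.card = n ∧ Dominates mu lam}
      {rho : YoungDiagram | rho.card = n - 1 ∧ Dominates rho (bar lam)})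
    (Y : YoungDiagram → ℂ)
    (hY : ∀ rho : YoungDiagram, rho.card = n - 1 → Dominates rho (bar lam) →
      ∑ᶠ (mu : YoungDiagram) (_ : mu.card = n ∧ Dominates mu lam ∧ Covers mu rho), Y mu = 0) :
    ∀ mu : YoungDiagram, mu.card = n → Dominates mu lam → Y mu = 0 := by
  have key : ∀ a : ℕ, ∀ mu : YoungDiagram, mu.rowLen 0 = a → mu.card = n →
      Dominates mu lam → Y mu = 0 := by
    intro a
    induction a using Nat.strong_induction_on with
    | _ a ih =>
      intro mu ha hc hd
      have hbar := bar_isBar mu (by omega)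
      have hcov : Covers mu (bar mu) := by
        obtain ⟨i, _, _, h3, h4⟩ := hbar
        exact ⟨i, h3, h4⟩
      obtain ⟨p, hpc, hpd, hpb, hp0⟩ := plus_exists mu (bar mu) hcov
      have hpS : p.card = n ∧ Dominates p lam :=
        ⟨hpc.trans hc, fun k => (hd k).trans (hpd k)⟩
      have hbp : bar p = bar mu := isBar_unique (bar_isBar p (by omega)) hpb
      have hpm : p = mu := hbij.injOn hpS ⟨hc, hd⟩ hbp
      rw [hpm] at hp0 hpb
      obtain ⟨hr1, hr2⟩ := hbij.mapsTo (show mu ∈ {mu : YoungDiagram | mu.card = n ∧ Dominates mu lam} from ⟨hc, hd⟩)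
      have hs := hY (bar mu) hr1 hr2
      rw [finsum_eq_single _ mu, finsum_eq_if, if_pos ⟨hc, hd, hcov⟩] at hs
      · exact hs
      · intro nu hne
        rw [finsum_eq_if]
        split_ifs with hP
        · obtain ⟨h1, h2, j, h3, h4⟩ := hP
          by_cases hj : j = 0
          · exfalso
            apply hne
            subst hj
            obtain ⟨i, hi, hi'⟩ := hcov
            have hi0 : i = 0 := by
              by_contra hcon
              have := hi' 0 (Ne.symm hcon)
              omega
            subst hi0
            refine yd_ext (fun k => ?_)
            by_cases hk : k = 0
            · subst hk; omega
            · rw [← h4 k hk, hi' k hk]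
          · have := h4 0 (Ne.symm hj)
            exact ih (nu.rowLen 0) (by omega) nu rfl h1 h2
        · rfl
  intro mu
  exact key _ mu rfl

end
end

section
/- Let n ≥ 1 and 0 ≤ k ≤ ⌊n/2⌋. Then the space F_k of square-free k-linear forms in n variables decomposes as the internal direct sum F_k = L₀ ⊕ L₁ ⊕ … ⊕ L_k of the subspaces L_l, 0 ≤ l ≤ k; each L_l is invariant under the action of S_n permuting the variables. -/
open scoped Classical

noncomputable section

open MvPolynomial

/-- The space of square-free `k`-linear forms in `n` variables: the span of the products
of `k` distinct variables. -/
noncomputable def Fspace (n k : ℕ) : Submodule ℂ (MvPolynomial (Fin n) ℂ) :=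
  Submodule.span ℂ {p | ∃ s : Finset (Fin n), s.card = k ∧ p = ∏ i ∈ s, X i}

/-- The elementary symmetric polynomial of degree `p` in the variables indexed by `s`. -/
noncomputable def esymmOn (n : ℕ) (s : Finset (Fin n)) (p : ℕ) : MvPolynomial (Fin n) ℂ :=
  ∑ t ∈ Finset.powersetCard p s, ∏ i ∈ t, X i

/-- The generator `X_I = (x_{i₁}-x_{i₂})⋯(x_{i_{2l-1}}-x_{i_{2l}}) · σ_{k-l}({x_j : j ∉ I})`
attached to a tuple `I` of `2l` distinct indices. -/
noncomputable def XIform (n k l : ℕ) (I : Fin (2 * l) ↪ Fin n) : MvPolynomial (Fin n) ℂ :=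
  (∏ t : Fin l,
      (X (I ⟨2 * t.1, by have := t.isLt; omega⟩) - X (I ⟨2 * t.1 + 1, by have := t.isLt; omega⟩))) *
    esymmOn n (Finset.univ.filter fun j => j ∉ Set.range I) (k - l)

/-- The subspace `L_l ⊆ F_k`: the span of the forms `X_I` over all tuples `I` of `2l`
distinct indices. -/
noncomputable def Lsub (n k l : ℕ) : Submodule ℂ (MvPolynomial (Fin n) ℂ) :=
  Submodule.span ℂ (Set.range (XIform n k l))

inductive PairProd (n : ℕ) : ℕ → Finset (Fin n) → MvPolynomial (Fin n) ℂ → Prop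
  | nil : PairProd n 0 ∅ 1
  | cons (l : ℕ) (J : Finset (Fin n)) (P : MvPolynomial (Fin n) ℂ) (a b : Fin n)
      (hab : a ≠ b) (ha : a ∉ J) (hb : b ∉ J) (h : PairProd n l J P) :
      PairProd n (l + 1) (insert a (insert b J)) (P * (X a - X b))

theorem PairProd.of_emb (n l : ℕ) (I : Fin (2 * l) ↪ Fin n) :
    PairProd n l (Finset.univ.map I) (∏ t : Fin l,
      (X (I ⟨2 * t.1, by have := t.isLt; omega⟩) -
        X (I ⟨2 * t.1 + 1, by have := t.isLt; omega⟩))) := by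
  induction l with
  | zero =>
    have : (Finset.univ.map I) = ∅ := by
      ext x; simp
    rw [this]
    simpa using PairProd.nil
  | succ l ih =>
    have h2 : 2 * l ≤ 2 * (l + 1) := by omega
    have := ih ((Fin.castLEEmb h2).trans I)
    rw [Fin.prod_univ_castSucc]
    have key := PairProd.cons l _ _ (I ⟨2 * l, by omega⟩) (I ⟨2 * l + 1, by omega⟩)
      (by simp) (by
        simp only [Finset.mem_map, not_exists]
        rintro ⟨x, hx⟩
        simp [Fin.ext_iff]; omega) (by
        simp only [Finset.mem_map, not_exists]
        rintro ⟨x, hx⟩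
        simp [Fin.ext_iff]; omega) this
    have hs : Finset.univ.map I = insert (I ⟨2 * l, by omega⟩) (insert (I ⟨2 * l + 1, by omega⟩)
        (Finset.univ.map ((Fin.castLEEmb h2).trans I))) := by
      ext x
      simp only [Finset.mem_map, Finset.mem_insert, Finset.mem_univ, true_and]
      constructor
      · rintro ⟨⟨i, hi⟩, rfl⟩
        rcases lt_trichotomy i (2 * l) with h | h | h
        · right; right; exact ⟨⟨i, h⟩, rfl⟩
        · left; subst h; rfl
        · right; left; congr 2; omega
      · rintro (rfl | rfl | ⟨i, rfl⟩)
        · exact ⟨_, rfl⟩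
        · exact ⟨_, rfl⟩
        · exact ⟨_, rfl⟩
    rw [hs]
    exact key

theorem PairProd.exists_emb {n l : ℕ} {J : Finset (Fin n)} {P : MvPolynomial (Fin n) ℂ}
    (h : PairProd n l J P) : ∃ I : Fin (2 * l) ↪ Fin n, J = Finset.univ.map I ∧
      P = ∏ t : Fin l, (X (I ⟨2 * t.1, by have := t.isLt; omega⟩) -
        X (I ⟨2 * t.1 + 1, by have := t.isLt; omega⟩)) := by
  induction h with
  | nil => exact ⟨⟨fun i => absurd i.2 (by omega), fun i => absurd i.2 (by omega)⟩, by
      ext x; simp, by simp⟩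
  | cons l J P a b hab ha hb h ih =>
    obtain ⟨I, rfl, rfl⟩ := ih
    have ha' : ∀ i, I i ≠ a := by simpa using ha
    have hb' : ∀ i, I i ≠ b := by simpa using hb
    let f : Fin (2 * (l + 1)) → Fin n := fun i =>
      if h : i.1 < 2 * l then I ⟨i.1, h⟩ else if i.1 = 2 * l then a else b
    have hf : Function.Injective f := by
      rintro ⟨i, hi⟩ ⟨j, hj⟩ hij
      simp only [f] at hij
      rw [Fin.mk.injEq]
      split_ifs at hij with h1 h2 h3 h4 h5 h6 h7 h8
      all_goals first
        | omega
        | (exact absurd hij (ha' _))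
        | (exact absurd hij (hb' _))
        | (exact absurd hij.symm (ha' _))
        | (exact absurd hij.symm (hb' _))
        | (exact absurd hij hab)
        | (exact absurd hij.symm hab)
        | (simpa using hij)
    have e1 : f ⟨2 * l, by omega⟩ = a := by simp [f]
    have e2 : f ⟨2 * l + 1, by omega⟩ = b := by simp [f]
    have e3 : ∀ i (h : i < 2 * l), f ⟨i, by omega⟩ = I ⟨i, h⟩ := by
      intro i h; simp [f, h]
    refine ⟨⟨f, hf⟩, ?_, ?_⟩
    · ext x
      simp only [Finset.mem_map, Finset.mem_insert, Finset.mem_univ, true_and]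
      constructor
      · rintro (rfl | rfl | ⟨i, rfl⟩)
        · exact ⟨_, e1⟩
        · exact ⟨_, e2⟩
        · exact ⟨_, e3 _ i.2⟩
      · rintro ⟨⟨i, hi⟩, rfl⟩
        rcases lt_trichotomy i (2 * l) with h | h | h
        · right; right; exact ⟨⟨i, h⟩, (e3 i h).symm⟩
        · left; subst h; exact e1
        · right; left
          have : i = 2 * l + 1 := by omega
          subst this; exact e2
    · rw [Fin.prod_univ_castSucc]
      congr 1
      · refine Finset.prod_congr rfl fun t _ => ?_
        have := t.2
        congr 2
        · exact (e3 _ (by omega)).symm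
        · exact (e3 _ (by omega)).symm
      · congr 2
        · exact e1.symm
        · exact e2.symm

theorem XI_filter (n l : ℕ) (I : Fin (2 * l) ↪ Fin n) :
    (Finset.univ.filter fun j => j ∉ Set.range I) = (Finset.univ.map I)ᶜ := by
  ext x; simp

theorem Lsub_eq (n k l : ℕ) : Lsub n k l =
    Submodule.span ℂ {p | ∃ J P, PairProd n l J P ∧ p = P * esymmOn n Jᶜ (k - l)} := by
  unfold Lsub
  congr 1
  ext p
  constructor
  · rintro ⟨I, rfl⟩
    exact ⟨_, _, PairProd.of_emb n l I, by rw [XIform, XI_filter]⟩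
  · rintro ⟨J, P, h, rfl⟩
    obtain ⟨I, rfl, rfl⟩ := h.exists_emb
    exact ⟨I, by rw [XIform, XI_filter]⟩

theorem PairProd.card {n l : ℕ} {J : Finset (Fin n)} {P : MvPolynomial (Fin n) ℂ}
    (h : PairProd n l J P) : J.card = 2 * l := by
  induction h with
  | nil => simp
  | cons l J P a b hab ha hb h ih =>
    rw [Finset.card_insert_of_notMem (by simp [hab, ha]), Finset.card_insert_of_notMem hb, ih]
    ring

theorem PairProd.mem_F {n l : ℕ} {J : Finset (Fin n)} {P : MvPolynomial (Fin n) ℂ}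
    (h : PairProd n l J P) : ∀ u : Finset (Fin n), Disjoint u J →
      P * ∏ i ∈ u, X i ∈ Fspace n (l + u.card) := by
  induction h with
  | nil => intro u _; exact Submodule.subset_span ⟨u, by simp, by simp⟩
  | cons l J P a b hab ha hb h ih =>
    intro u hu
    simp only [Finset.disjoint_insert_right] at hu
    obtain ⟨hua, hub, hu⟩ := hu
    have h1 := ih (insert a u) (by simp [ha, hu])
    have h2 := ih (insert b u) (by simp [hb, hu])
    rw [Finset.prod_insert hua, Finset.card_insert_of_notMem hua] at h1
    rw [Finset.prod_insert hub, Finset.card_insert_of_notMem hub] at h2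
    have := Submodule.sub_mem _ h1 h2
    rw [show l + 1 + u.card = l + (u.card + 1) by ring]
    convert this using 1
    ring

theorem Lsub_le (n k l : ℕ) (hl : l ≤ k) : Lsub n k l ≤ Fspace n k := by
  rw [Lsub_eq, Submodule.span_le]
  rintro _ ⟨J, P, h, rfl⟩
  rw [esymmOn, Finset.mul_sum]
  refine Submodule.sum_mem _ fun t ht => ?_
  rw [Finset.mem_powersetCard] at ht
  have := h.mem_F t (Finset.disjoint_left.2 fun x hx => by simpa using ht.1 hx)
  rwa [ht.2, show l + (k - l) = k by omega] at this

theorem Lsub_inv (n k l : ℕ) (g : Equiv.Perm (Fin n)) (p) (hp : p ∈ Lsub n k l) :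
    MvPolynomial.rename g p ∈ Lsub n k l := by
  suffices Lsub n k l ≤ (Lsub n k l).comap (MvPolynomial.rename (R := ℂ) g).toLinearMap from
    this hp
  nth_rw 1 [Lsub]
  rw [Submodule.span_le]
  rintro _ ⟨I, rfl⟩
  refine Submodule.subset_span ⟨I.trans g.toEmbedding, ?_⟩
  simp only [XIform, XI_filter, AlgHom.toLinearMap_apply, map_mul, map_prod, map_sub, rename_X]
  congr 1
  simp only [esymmOn, map_sum, map_prod, rename_X]
  symm
  refine Finset.sum_bij (fun t _ => t.map g.toEmbedding) ?_ ?_ ?_ ?_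
  · intro t ht
    simp only [Finset.mem_powersetCard, Finset.card_map] at ht ⊢
    refine ⟨?_, ht.2⟩
    intro x hx
    simp only [Finset.mem_map] at hx
    obtain ⟨y, hy, rfl⟩ := hx
    have := ht.1 hy
    simpa using this
  · intro a _ b _ h
    exact Finset.map_injective _ h
  · intro t ht
    simp only [Finset.mem_powersetCard] at ht
    refine ⟨t.map g.symm.toEmbedding, ?_, ?_⟩
    · simp only [Finset.mem_powersetCard, Finset.card_map]
      refine ⟨?_, ht.2⟩
      intro x hx
      simp only [Finset.mem_map] at hx
      obtain ⟨y, hy, rfl⟩ := hx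
      have := ht.1 hy
      simp at this ⊢
      intro z hz
      exact this z (by rw [hz]; simp)
    · ext x; simp
  · intro t ht
    simp

def Dop (n : ℕ) : Derivation ℂ (MvPolynomial (Fin n) ℂ) (MvPolynomial (Fin n) ℂ) :=
  mkDerivation ℂ (fun _ => 1)

def Eop (n : ℕ) : Derivation ℂ (MvPolynomial (Fin n) ℂ) (MvPolynomial (Fin n) ℂ) :=
  mkDerivation ℂ (fun i => X i ^ 2)

def Uop (n : ℕ) : MvPolynomial (Fin n) ℂ →ₗ[ℂ] MvPolynomial (Fin n) ℂ :=
  LinearMap.mulLeft ℂ (∑ i, X i) - (Eop n).toLinearMap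

theorem Uop_apply (n : ℕ) (p) : Uop n p = (∑ i, X i) * p - Eop n p := rfl

theorem Dop_X (n : ℕ) (i) : Dop n (X i) = 1 := mkDerivation_X _ _ _
theorem Eop_X (n : ℕ) (i) : Eop n (X i) = X i ^ 2 := mkDerivation_X _ _ _

theorem esymmOn_zero (n : ℕ) (s) : esymmOn n s 0 = 1 := by simp [esymmOn]

theorem esymmOn_empty (n p : ℕ) : esymmOn n ∅ (p + 1) = 0 := by
  unfold esymmOn
  rw [Finset.powersetCard_eq_empty.2 (by simp), Finset.sum_empty]

theorem esymmOn_insert (n : ℕ) (s : Finset (Fin n)) (a) (ha : a ∉ s) (p : ℕ) :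
    esymmOn n (insert a s) (p + 1) = esymmOn n s (p + 1) + X a * esymmOn n s p := by
  unfold esymmOn
  rw [Finset.powersetCard_succ_insert ha, Finset.sum_union, Finset.sum_image, Finset.mul_sum]
  · congr 1
    refine Finset.sum_congr rfl fun t ht => ?_
    rw [Finset.mem_powersetCard] at ht
    rw [Finset.prod_insert (fun h => ha (ht.1 h))]
  · intro t ht u hu htu
    simp only [Finset.mem_coe, Finset.mem_powersetCard] at ht hu
    have h1 : a ∉ t := fun h => ha (ht.1 h)
    have h2 : a ∉ u := fun h => ha (hu.1 h)
    rw [← Finset.erase_insert h1, ← Finset.erase_insert h2]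
    exact congrArg (fun z => Finset.erase z a) htu
  · rw [Finset.disjoint_left]
    intro t ht ht'
    rw [Finset.mem_powersetCard] at ht
    rw [Finset.mem_image] at ht'
    obtain ⟨u, _, rfl⟩ := ht'
    exact ha (ht.1 (Finset.mem_insert_self _ _))

theorem Dop_esymm (n : ℕ) (s : Finset (Fin n)) : ∀ p,
    Dop n (esymmOn n s (p + 1)) = ((s.card : MvPolynomial (Fin n) ℂ) - p) * esymmOn n s p := by
  induction s using Finset.induction_on with
  | empty =>
    intro p
    cases p <;> simp [esymmOn_empty, esymmOn_zero]
  | insert a s ha ih =>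
    intro p
    rw [esymmOn_insert _ _ _ ha, map_add, Derivation.leibniz, ih, Dop_X,
      Finset.card_insert_of_notMem ha]
    cases p with
    | zero => simp [esymmOn_zero]
    | succ p =>
      rw [ih, esymmOn_insert _ _ _ ha]
      simp only [smul_eq_mul]
      push_cast
      ring

theorem Eop_esymm (n : ℕ) (s : Finset (Fin n)) : ∀ p,
    (∑ i ∈ s, X i) * esymmOn n s p - Eop n (esymmOn n s p) = ((p : MvPolynomial (Fin n) ℂ) + 1) * esymmOn n s (p + 1) := by
  induction s using Finset.induction_on with
  | empty =>
    intro p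
    cases p <;> simp [esymmOn_empty, esymmOn_zero]
  | insert a s ha ih =>
    intro p
    rw [Finset.sum_insert ha, esymmOn_insert _ _ _ ha]
    cases p with
    | zero =>
      have := ih 0
      simp [esymmOn_zero] at this ⊢
      rw [← this]; ring
    | succ p =>
      have h1 := ih (p + 1)
      have h0 := ih p
      rw [esymmOn_insert _ _ _ ha, map_add, Derivation.leibniz, Eop_X]
      simp only [smul_eq_mul]
      push_cast at h1 h0 ⊢
      linear_combination h1 + X a * h0

theorem PairProd.D {n l : ℕ} {J : Finset (Fin n)} {P : MvPolynomial (Fin n) ℂ}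
    (h : PairProd n l J P) : Dop n P = 0 := by
  induction h with
  | nil => simp
  | cons l J P a b hab ha hb h ih => simp [ih, Dop_X]

theorem PairProd.E {n l : ℕ} {J : Finset (Fin n)} {P : MvPolynomial (Fin n) ℂ}
    (h : PairProd n l J P) : Eop n P = (∑ i ∈ J, X i) * P := by
  induction h with
  | nil => simp
  | cons l J P a b hab ha hb h ih =>
    rw [Finset.sum_insert (by simp [hab, ha]), Finset.sum_insert hb, Derivation.leibniz, map_sub,
      Eop_X, Eop_X, ih]
    simp only [smul_eq_mul]
    ring

theorem PairProd.U_mul {n l : ℕ} {J : Finset (Fin n)} {P : MvPolynomial (Fin n) ℂ}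
    (h : PairProd n l J P) (q) : Uop n (P * q) = P * ((∑ i ∈ Jᶜ, X i) * q - Eop n q) := by
  rw [Uop_apply, Derivation.leibniz, h.E, ← Finset.sum_add_sum_compl J]
  simp only [smul_eq_mul]
  ring

theorem PairProd.U {n l : ℕ} {J : Finset (Fin n)} {P : MvPolynomial (Fin n) ℂ}
    (h : PairProd n l J P) (p : ℕ) :
    Uop n (P * esymmOn n Jᶜ p) = ((p : ℂ) + 1) • (P * esymmOn n Jᶜ (p + 1)) := by
  rw [h.U_mul, Eop_esymm, smul_eq_C_mul]
  simp only [map_add, map_natCast, map_one]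
  ring

def Vsup (n k : ℕ) : Submodule ℂ (MvPolynomial (Fin n) ℂ) :=
  ⨆ l ∈ Finset.range (k + 1), Lsub n k l

theorem Vsup_U (n k : ℕ) (p) (hp : p ∈ Vsup n k) : Uop n p ∈ Vsup n (k + 1) := by
  suffices Vsup n k ≤ (Vsup n (k + 1)).comap (Uop n) from this hp
  refine iSup₂_le fun l hl => ?_
  rw [Finset.mem_range] at hl
  have hle : Lsub n (k + 1) l ≤ Vsup n (k + 1) :=
    le_iSup₂_of_le l (by rw [Finset.mem_range]; omega) le_rfl
  rw [Lsub_eq, Submodule.span_le]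
  rintro _ ⟨J, P, h, rfl⟩
  simp only [Submodule.comap_coe, Set.mem_preimage, SetLike.mem_coe]
  rw [h.U]
  refine Submodule.smul_mem _ _ (hle ?_)
  rw [Lsub_eq]
  exact Submodule.subset_span ⟨J, P, h, by rw [show k + 1 - l = k - l + 1 by omega]⟩

theorem Eop_prod (n : ℕ) (r : Finset (Fin n)) :
    Eop n (∏ i ∈ r, X i) = (∑ i ∈ r, X i) * ∏ i ∈ r, X i := by
  induction r using Finset.induction_on with
  | empty => simp
  | insert a s ha ih =>
    rw [Finset.prod_insert ha, Finset.sum_insert ha, Derivation.leibniz, ih, Eop_X]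
    simp only [smul_eq_mul]
    ring

theorem mem_Vsup (n q : ℕ) : ∀ (l : ℕ) (J r : Finset (Fin n)) (P : MvPolynomial (Fin n) ℂ),
    PairProd n l J P → r.card = q → Disjoint r J → P * ∏ i ∈ r, X i ∈ Vsup n (l + q) := by
  induction q with
  | zero =>
    intro l J r P h hr _
    rw [Finset.card_eq_zero] at hr
    subst hr
    have hle : Lsub n (l + 0) l ≤ Vsup n (l + 0) :=
      le_iSup₂_of_le l (by rw [Finset.mem_range]; omega) le_rfl
    apply hle
    rw [Lsub_eq]
    exact Submodule.subset_span ⟨J, P, h, by simp [esymmOn_zero]⟩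
  | succ q ih =>
    intro l J r P h hr hd
    obtain ⟨a, r', ha, rfl, hr'⟩ := Finset.card_eq_succ.1 hr
    rw [Finset.disjoint_insert_left] at hd
    obtain ⟨haJ, hd⟩ := hd
    have hU := Vsup_U n (l + q) _ (ih l J r' P h hr' hd)
    rw [h.U_mul, Eop_prod, ← sub_mul] at hU
    set B : Finset (Fin n) := (insert a (r' ∪ J))ᶜ with hB
    have hsum : (∑ i ∈ Jᶜ, X i) - (∑ i ∈ r', X i)
        = (X a + ∑ b ∈ B, X b : MvPolynomial (Fin n) ℂ) := by
      have : Jᶜ = r' ∪ insert a B := by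
        ext x
        have := fun h : x ∈ r' => Finset.disjoint_left.1 hd h
        simp only [hB, Finset.mem_compl, Finset.mem_union, Finset.mem_insert]
        by_cases hx : x = a
        · subst hx; simp [haJ]
        · tauto
      rw [this, Finset.sum_union, Finset.sum_insert]
      · ring
      · simp [hB]
      · rw [Finset.disjoint_left]
        intro x hx
        simp only [hB, Finset.mem_compl, Finset.mem_union, Finset.mem_insert]
        have : x ≠ a := fun h => ha (h ▸ hx)
        tauto
    rw [hsum] at hU
    have hS : ∑ b ∈ B, P * (X a - X b) * ∏ i ∈ r', X i ∈ Vsup n (l + q + 1) := by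
      refine Submodule.sum_mem _ fun b hb => ?_
      simp only [hB, Finset.mem_compl, Finset.mem_union, Finset.mem_insert, not_or] at hb
      obtain ⟨hba, hbr, hbJ⟩ := hb
      have := ih (l + 1) _ r' _ (PairProd.cons l J P a b (Ne.symm hba) haJ hbJ h) hr'
        (by simp [Finset.disjoint_insert_right, ha, hbr, hd])
      rwa [show l + 1 + q = l + q + 1 by ring] at this
    have htot := Submodule.smul_mem _ ((B.card + 1 : ℂ)⁻¹) (Submodule.add_mem _ hS hU)
    have hne : (B.card + 1 : ℂ) ≠ 0 := Nat.cast_add_one_ne_zero _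
    rw [← add_assoc]
    convert htot using 1
    rw [eq_inv_smul_iff₀ hne, Finset.prod_insert ha, smul_eq_C_mul, ← Finset.sum_mul,
      ← Finset.mul_sum, Finset.sum_sub_distrib, Finset.sum_const, nsmul_eq_mul]
    simp only [map_add, map_natCast, map_one]
    ring

theorem eigen (n k l : ℕ) (hl : l ≤ k) : Lsub n k l ≤
    Module.End.eigenspace (Uop n ∘ₗ (Dop n).toLinearMap : Module.End ℂ (MvPolynomial (Fin n) ℂ))
      (((n : ℂ) - l - k + 1) * (k - l)) := by
  rw [Lsub_eq, Submodule.span_le]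
  rintro _ ⟨J, P, h, rfl⟩
  rw [SetLike.mem_coe, Module.End.mem_eigenspace_iff]
  change Uop n (Dop n _) = _
  rw [Derivation.leibniz, h.D]
  obtain ⟨q, rfl⟩ := Nat.exists_eq_add_of_le hl
  rw [Nat.add_sub_cancel_left]
  cases q with
  | zero => simp [esymmOn_zero]
  | succ p =>
    have hc : ((Jᶜ).card : ℂ) = n - 2 * l := by
      have := Finset.card_add_card_compl J
      rw [h.card, Fintype.card_fin] at this
      have h2 : (2 * l + (Jᶜ).card : ℂ) = n := by exact_mod_cast this
      linear_combination h2
    have e : P • ((((Jᶜ).card : MvPolynomial (Fin n) ℂ) - p) * esymmOn n Jᶜ p) +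
        esymmOn n Jᶜ (p + 1) • (0 : MvPolynomial (Fin n) ℂ) =
        (((Jᶜ).card : ℂ) - p) • (P * esymmOn n Jᶜ p) := by
      rw [smul_eq_C_mul]
      simp only [map_sub, map_natCast, smul_eq_mul]
      ring
    rw [Dop_esymm, e, map_smul, h.U, smul_smul, hc]
    congr 1
    push_cast
    ring

theorem Fspace_direct_sum (n : ℕ) (hn : 1 ≤ n) (k : ℕ) (hk : k ≤ n / 2) :
    (∀ l, l ≤ k → ∀ g : Equiv.Perm (Fin n), ∀ p ∈ Lsub n k l,
        MvPolynomial.rename g p ∈ Lsub n k l) ∧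
    (⨆ l ∈ Finset.range (k + 1), Lsub n k l) = Fspace n k ∧
    iSupIndep (fun l : Fin (k + 1) => Lsub n k (l : ℕ)) := by
  refine ⟨fun l _ g p hp => Lsub_inv n k l g p hp, le_antisymm ?_ ?_, ?_⟩
  · exact iSup₂_le fun l hl => Lsub_le n k l (by rw [Finset.mem_range] at hl; omega)
  · rw [Fspace, Submodule.span_le]
    rintro _ ⟨s, hs, rfl⟩
    have := mem_Vsup n k 0 ∅ s 1 PairProd.nil hs (by simp)
    rw [one_mul, zero_add] at this
    exact this
  · refine ((Module.End.eigenspaces_iSupIndep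
      (Uop n ∘ₗ (Dop n).toLinearMap : Module.End ℂ (MvPolynomial (Fin n) ℂ))).comp
      (f := fun l : Fin (k + 1) => ((n : ℂ) - (l : ℕ) - k + 1) * (k - (l : ℕ))) ?_).mono ?_
    · intro l m hlm
      have h1 : (((l : ℕ) : ℂ) - (m : ℕ)) * (((l : ℕ) + (m : ℕ) : ℂ) - (n + 1)) = 0 := by
        simp only at hlm
        linear_combination hlm
      rcases mul_eq_zero.1 h1 with h | h
      · rw [sub_eq_zero] at h
        exact Fin.ext (by exact_mod_cast h)
      · rw [sub_eq_zero] at h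
        have : (l : ℕ) + (m : ℕ) = n + 1 := by exact_mod_cast h
        have := l.2
        have := m.2
        omega
    · intro l
      exact eigen n k l (by have := l.2; omega)

end
end
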